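/- arXiv:2004.01484 — 2 statements merged into one kernel-verified Lean document; each statement's English description precedes it below -/
import Mathlib

section
/- (Newman 1968) Let m be a natural number, let r be a nontrivial, cyclically reduced element of the free group on Fin m that is not a proper power, and let n ≥ 2. Then the conjugacy problem for the one-relator group with torsion G = ⟨Fin m | rⁿ = 1⟩ is decidable: the predicate on pairs (l₁, l₂) of lists in List (Fin m × Bool) given by 'the images of FreeGroup.mk l₁ and FreeGroup.mk l₂ in G are conjugate, i.e. there exists g ∈ G with g · (image of l₁) · g⁻¹ = image of l₂' is a computable predicate (ComputablePred). -/
/-- A word over `A` is cyclically reduced if its first and last letters are not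
mutually inverse; an element of the free group is cyclically reduced if its
reduced word is. -/
def FreeGroup.CyclicallyReduced {A : Type*} [DecidableEq A] (w : FreeGroup A) : Prop :=
  ∀ x : A × Bool, w.toWord.head? = some x → w.toWord.getLast? ≠ some (x.1, !x.2)

set_option linter.unusedSectionVars false
set_option linter.unusedVariables false
set_option linter.unusedSimpArgs false

namespace OneRel

section Magnus
variable {α : Type} [DecidableEq α] [Encodable α]

/-- Shortlex-type key on lists. -/
def key (l : List α) : ℕ ×ₗ ℕ := toLex (l.length, Encodable.encode l)

theorem key_inj : Function.Injective (key : List α → ℕ ×ₗ ℕ) := by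
  intro a b h
  have h2 : (a.length, Encodable.encode a) = (b.length, Encodable.encode b) := toLex.injective h
  exact Encodable.encode_injective (Prod.ext_iff.1 h2).2

theorem key_lt_of_length {a b : List α} (h : a.length < b.length) : key a < key b := by
  unfold key
  exact Prod.Lex.toLex_lt_toLex.2 (Or.inl h)

def Pos (f : List α → ℤ) : Prop := ∃ l, 0 < f l ∧ ∀ l', key l' < key l → f l' = 0

theorem pos_or {f : List α → ℤ} (hf : f ≠ 0) : Pos f ∨ Pos (-f) := by
  have : ∃ l, f l ≠ 0 := by
    by_contra hc; push Not at hc; exact hf (funext hc)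
  obtain ⟨l, hl, hmin⟩ := (InvImage.wf (key : List α → ℕ ×ₗ ℕ) wellFounded_lt).has_min
    {l | f l ≠ 0} this
  have hz : ∀ l', key l' < key l → f l' = 0 := by
    intro l' h
    by_contra hc
    exact hmin l' hc h
  have hl' : f l ≠ 0 := hl
  rcases lt_or_gt_of_ne hl' with h | h
  · exact Or.inr ⟨l, by simpa using h, fun l' h' => by simp [hz l' h']⟩
  · exact Or.inl ⟨l, h, hz⟩

theorem Pos.add {f g : List α → ℤ} (hf : Pos f) (hg : Pos g) : Pos (f + g) := by
  obtain ⟨a, ha, ha'⟩ := hf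
  obtain ⟨b, hb, hb'⟩ := hg
  rcases lt_trichotomy (key a) (key b) with h | h | h
  · exact ⟨a, by simp [hb' a h, ha], fun l hl => by simp [ha' l hl, hb' l (hl.trans h)]⟩
  · have := key_inj h
    subst this
    exact ⟨a, by simp only [Pi.add_apply]; omega, fun l hl => by simp [ha' l hl, hb' l hl]⟩
  · exact ⟨b, by simp [ha' b h, hb], fun l hl => by simp [hb' l hl, ha' l (hl.trans h)]⟩

theorem not_pos_zero : ¬ Pos (0 : List α → ℤ) := by
  rintro ⟨l, h, -⟩
  simp at h

/-- a perturbation which only looks at shorter lists preserves positivity -/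
theorem Pos.perturb {f h : List α → ℤ} (hf : Pos f)
    (hh : ∀ l, (∀ l' : List α, l'.length < l.length → f l' = 0) → h l = 0) : Pos (f + h) := by
  obtain ⟨a, ha, ha'⟩ := hf
  have key0 : ∀ l, key l ≤ key a → h l = 0 := fun l hl =>
    hh l (fun l' h' => ha' l' ((key_lt_of_length h').trans_le hl))
  exact ⟨a, by simp [key0 a le_rfl, ha], fun l hl => by simp [ha' l hl, key0 l hl.le]⟩

def Xop (a : α) (f : List α → ℤ) : List α → ℤ
  | [] => 0
  | c :: l => if c = a ∧ l.head? ≠ some a then f l else 0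

def Yop (a : α) (f : List α → ℤ) : List α → ℤ :=
  fun l => Xop a (fun k => f k.reverse) l.reverse

theorem Xop_add (a : α) (f g : List α → ℤ) : Xop a (f + g) = Xop a f + Xop a g := by
  funext l; cases l <;> simp [Xop]; split_ifs <;> simp

theorem Xop_sub (a : α) (f g : List α → ℤ) : Xop a (f - g) = Xop a f - Xop a g := by
  funext l; cases l <;> simp [Xop]; split_ifs <;> simp

theorem Xop_Xop (a : α) (f : List α → ℤ) : Xop a (Xop a f) = 0 := by
  funext l
  match l with
  | [] => simp [Xop]
  | [c] => simp [Xop]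
  | c :: d :: l => simp only [Xop, List.head?_cons]; simp; intros; simp_all

theorem Yop_add (a : α) (f g : List α → ℤ) : Yop a (f + g) = Yop a f + Yop a g := by
  funext l
  exact congrFun (Xop_add a (fun k => f k.reverse) (fun k => g k.reverse)) l.reverse

theorem Yop_sub (a : α) (f g : List α → ℤ) : Yop a (f - g) = Yop a f - Yop a g := by
  funext l
  exact congrFun (Xop_sub a (fun k => f k.reverse) (fun k => g k.reverse)) l.reverse

theorem Yop_Yop (a : α) (f : List α → ℤ) : Yop a (Yop a f) = 0 := by
  funext l
  simp only [Yop, List.reverse_reverse]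
  exact congrFun (Xop_Xop a (fun k => f k.reverse)) l.reverse

theorem Xop_local (a : α) (f : List α → ℤ) (l : List α)
    (h : ∀ l' : List α, l'.length < l.length → f l' = 0) : Xop a f l = 0 := by
  cases l with
  | nil => rfl
  | cons c l => simp only [Xop]; rw [h l (by simp)]; simp

theorem Yop_local (a : α) (f : List α → ℤ) (l : List α)
    (h : ∀ l' : List α, l'.length < l.length → f l' = 0) : Yop a f l = 0 := by
  unfold Yop
  apply Xop_local
  intro l' hl
  apply h
  simpa using hl

theorem Xop_Yop_comm (a b : α) (f : List α → ℤ) : Xop a (Yop b f) = Yop b (Xop a f) := by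
  funext l
  match l with
  | [] => simp [Xop, Yop]
  | c :: l =>
    rcases List.eq_nil_or_concat' l with rfl | ⟨k, d, rfl⟩
    · simp [Xop, Yop]
    · cases k with
      | nil => simp [Xop, Yop]; grind
      | cons e k => simp [Xop, Yop]; grind

def LA (a : α) : Equiv.Perm (List α → ℤ) where
  toFun f := f + Xop a f
  invFun f := f - Xop a f
  left_inv f := by simp [Xop_add, Xop_Xop]
  right_inv f := by simp [Xop_sub, Xop_Xop]

def Lact : FreeGroup α →* Equiv.Perm (List α → ℤ) := FreeGroup.lift LA

def one : List α → ℤ := fun l => if l = [] then 1 else 0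

def val (g : FreeGroup α) : List α → ℤ := Lact g one

theorem Lact_of (a : α) (f : List α → ℤ) : Lact (FreeGroup.of a) f = f + Xop a f := by
  simp only [Lact, FreeGroup.lift_apply_of]; rfl

theorem Lact_of_inv (a : α) (f : List α → ℤ) : Lact (FreeGroup.of a)⁻¹ f = f - Xop a f := by
  simp only [Lact, map_inv, FreeGroup.lift_apply_of]; rfl

theorem Lact_mul (g h : FreeGroup α) (f : List α → ℤ) : Lact (g * h) f = Lact g (Lact h f) := by
  rw [map_mul]; rfl

theorem Lact_add (g : FreeGroup α) : ∀ f f' : List α → ℤ,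
    Lact g (f + f') = Lact g f + Lact g f' := by
  induction g using FreeGroup.induction_on with
  | C1 => intro f f'; simp
  | of a => intro f f'; rw [Lact_of, Lact_of, Lact_of, Xop_add]; abel
  | inv_of a _ => intro f f'; rw [Lact_of_inv, Lact_of_inv, Lact_of_inv, Xop_add]; abel
  | mul g h hg hh => intro f f'; rw [Lact_mul, hh, hg, Lact_mul, Lact_mul]

theorem Lact_sub (g : FreeGroup α) (f f' : List α → ℤ) :
    Lact g (f - f') = Lact g f - Lact g f' := by
  rw [eq_sub_iff_add_eq, ← Lact_add, sub_add_cancel]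

theorem Lact_pos (g : FreeGroup α) : ∀ f : List α → ℤ, Pos f → Pos (Lact g f) := by
  induction g using FreeGroup.induction_on with
  | C1 => intro f hf; simpa using hf
  | of a => intro f hf; rw [Lact_of]; exact hf.perturb (fun l hl => Xop_local a f l hl)
  | inv_of a _ =>
    intro f hf; rw [Lact_of_inv, sub_eq_add_neg]
    exact hf.perturb (fun l hl => by simp [Xop_local a f l hl])
  | mul g h hg hh => intro f hf; rw [Lact_mul]; exact hg _ (hh _ hf)

theorem Lact_Yop (g : FreeGroup α) (b : α) : ∀ f : List α → ℤ,
    Lact g (Yop b f) = Yop b (Lact g f) := by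
  induction g using FreeGroup.induction_on with
  | C1 => intro f; simp
  | of a => intro f; rw [Lact_of, Lact_of, Yop_add, Xop_Yop_comm]
  | inv_of a _ => intro f; rw [Lact_of_inv, Lact_of_inv, Yop_sub, Xop_Yop_comm]
  | mul g h hg hh => intro f; rw [Lact_mul, hh, hg, Lact_mul]

theorem Xop_one (a : α) : Xop a one = Yop a one := by
  funext l
  match l with
  | [] => simp [Xop, Yop]
  | [c] => simp [Xop, Yop, one]
  | c :: d :: l => simp [Xop, Yop, one]; cases h : l.reverse <;> simp_all [Xop]

theorem val_mul_of (g : FreeGroup α) (a : α) :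
    val (g * FreeGroup.of a) = val g + Yop a (val g) := by
  unfold val
  rw [Lact_mul, Lact_of, Xop_one, Lact_add, Lact_Yop]

theorem val_mul_of_inv (g : FreeGroup α) (a : α) :
    val (g * (FreeGroup.of a)⁻¹) = val g - Yop a (val g) := by
  unfold val
  rw [Lact_mul, Lact_of_inv, Xop_one, Lact_sub, Lact_Yop]

def lt (g h : FreeGroup α) : Prop := Pos (val h - val g)

theorem lt_mul_left (k g h : FreeGroup α) (H : lt g h) : lt (k * g) (k * h) := by
  unfold lt val at *
  rw [Lact_mul, Lact_mul, ← Lact_sub]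
  exact Lact_pos _ _ H

theorem lt_mul_right (k : FreeGroup α) : ∀ (g h : FreeGroup α) (_ : lt g h),
    lt (g * k) (h * k) := by
  induction k using FreeGroup.induction_on with
  | C1 => intro f; simp
  | of a =>
    intro g h H
    unfold lt at *
    rw [val_mul_of, val_mul_of]
    have := H.perturb (h := Yop a (val h - val g)) (fun l hl => Yop_local a _ l hl)
    rw [Yop_sub] at this
    convert this using 1; abel
  | inv_of a _ =>
    intro g h H
    unfold lt at *
    rw [val_mul_of_inv, val_mul_of_inv]
    have := H.perturb (h := - Yop a (val h - val g)) (fun l hl => by simp [Yop_local a _ l hl])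
    rw [Yop_sub] at this
    convert this using 1; abel
  | mul g h hg hh => intro a b H; rw [← mul_assoc, ← mul_assoc]; exact hh _ _ (hg _ _ H)

theorem lt_conj (k g h : FreeGroup α) (H : lt g h) : lt (k * g * k⁻¹) (k * h * k⁻¹) :=
  lt_mul_right _ _ _ (lt_mul_left _ _ _ H)

theorem lt_trans' {a b c : FreeGroup α} (h1 : lt a b) (h2 : lt b c) : lt a c := by
  unfold lt at *
  have := h1.add h2
  convert this using 1; abel

theorem lt_irrefl' (a : FreeGroup α) : ¬ lt a a := by
  unfold lt; rw [sub_self]; exact not_pos_zero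

/-- syllables of a word -/
def syl : List (α × Bool) → List α
  | [] => []
  | x :: w => if (syl w).head? = some x.1 then syl w else x.1 :: syl w

def sg (b : Bool) : ℤ := if b then 1 else -1

theorem val_cons (x : α × Bool) (w : List (α × Bool)) :
    val (FreeGroup.mk (x :: w)) = val (FreeGroup.mk w) + sg x.2 • Xop x.1 (val (FreeGroup.mk w)) := by
  obtain ⟨a, b⟩ := x
  have : FreeGroup.mk ((a, b) :: w) = FreeGroup.mk [(a, b)] * FreeGroup.mk w := by
    rw [FreeGroup.mul_mk]; rfl
  rw [this]
  unfold val
  rw [Lact_mul]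
  cases b with
  | true =>
    have : FreeGroup.mk [(a, true)] = FreeGroup.of a := rfl
    rw [this, Lact_of]; simp [sg]
  | false =>
    have : FreeGroup.mk [(a, false)] = (FreeGroup.of a)⁻¹ := by
      simp [FreeGroup.of, FreeGroup.inv_mk, FreeGroup.invRev]
    rw [this, Lact_of_inv]; simp [sg, sub_eq_add_neg]

theorem val_nil : val (FreeGroup.mk ([] : List (α × Bool))) = one := by
  have : FreeGroup.mk ([] : List (α × Bool)) = 1 := FreeGroup.one_eq_mk.symm
  rw [this]; simp [val]

theorem val_long (w : List (α × Bool)) : ∀ l : List α,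
    ((syl w).length < l.length ∨ ((syl w).length = l.length ∧ l.head? ≠ (syl w).head?)) →
      val (FreeGroup.mk w) l = 0 := by
  induction w with
  | nil =>
    intro l hl
    rw [val_nil]
    cases l with
    | nil => simp [syl] at hl
    | cons a l => simp [one]
  | cons x w ih =>
    intro l hl
    rw [val_cons]
    simp only [Pi.add_apply, Pi.smul_apply, smul_eq_mul]
    cases l with
    | nil =>
      rw [ih]
      · simp [Xop]
      · simp only [syl] at hl; split_ifs at hl <;> simp_all
    | cons c l =>
      simp only [syl] at hl
      split_ifs at hl with h
      · rw [ih (c :: l) hl, zero_add]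
        simp only [Xop]
        split_ifs with h'
        · rw [ih l, mul_zero]
          simp only [List.length_cons, List.head?_cons] at hl
          have h2 : l.head? ≠ (syl w).head? := by rw [h]; exact h'.2
          rcases hl with hl | hl
          · rcases Nat.lt_or_ge (syl w).length l.length with h3 | h3
            · exact Or.inl h3
            · exact Or.inr ⟨by omega, h2⟩
          · exfalso; apply hl.2; rw [h, h'.1]
        · simp
      · simp only [List.length_cons, List.head?_cons] at hl
        rw [ih (c :: l) (Or.inl (by simp only [List.length_cons]; omega)), zero_add]
        simp only [Xop]
        split_ifs with h'
        · rw [ih l, mul_zero]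
          rcases hl with hl | hl
          · exact Or.inl (by omega)
          · exact absurd (by rw [h'.1]) hl.2
        · simp

theorem val_syl (w : List (α × Bool)) (hw : FreeGroup.IsReduced w) : ∀ x, w.head? = some x →
    ∃ t, syl w = x.1 :: t ∧ t.head? ≠ some x.1 ∧
      0 < sg x.2 * val (FreeGroup.mk w) t * val (FreeGroup.mk w) (x.1 :: t) := by
  have hsg : ∀ b, sg b * sg b = 1 := by intro b; cases b <;> simp [sg]
  induction w with
  | nil => simp
  | cons y w ih =>
    intro x hx
    simp only [List.head?_cons, Option.some.injEq] at hx
    subst hx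
    cases w with
    | nil =>
      refine ⟨[], by simp [syl], by simp, ?_⟩
      rw [val_cons, val_nil]
      simp [one, Xop, hsg]
    | cons z w =>
      have hr : FreeGroup.IsReduced (z :: w) := by
        have := hw
        unfold FreeGroup.IsReduced at *
        exact this.tail
      have hyz : y.1 = z.1 → y.2 = z.2 := by
        have := hw
        unfold FreeGroup.IsReduced at this
        simp only [List.isChain_cons_cons] at this
        exact this.1
      obtain ⟨t, ht, ht1, ht2⟩ := ih hr z rfl
      by_cases hyz1 : z.1 = y.1
      · have hb := hyz hyz1.symm
        rw [hyz1] at ht ht1 ht2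
        rw [← hb] at ht2
        refine ⟨t, ?_, ht1, ?_⟩
        · rw [syl, ht]; simp
        · rw [val_cons]
          set f := val (FreeGroup.mk (z :: w))
          have h1 : Xop y.1 f t = 0 := by
            cases t with
            | nil => rfl
            | cons c t => simp only [Xop]; rw [if_neg]; rintro ⟨rfl, -⟩; simp at ht1
          have h2 : Xop y.1 f (y.1 :: t) = f t := by
            simp only [Xop]; rw [if_pos ⟨trivial, ht1⟩]
          simp only [Pi.add_apply, Pi.smul_apply, smul_eq_mul, h1, h2, mul_zero, add_zero]
          have : sg y.2 * f t * (f (y.1 :: t) + sg y.2 * f t) =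
            sg y.2 * f t * f (y.1 :: t) + (sg y.2 * sg y.2) * (f t * f t) := by ring
          rw [this, hsg]
          nlinarith [mul_self_nonneg (f t)]
      · refine ⟨syl (z :: w), ?_, ?_, ?_⟩
        · rw [syl, if_neg]; rw [ht]; simpa using hyz1
        · rw [ht]; simpa using hyz1
        · rw [val_cons]
          have hlong : val (FreeGroup.mk (z :: w)) (y.1 :: syl (z :: w)) = 0 :=
            val_long _ _ (Or.inl (by simp))
          set f := val (FreeGroup.mk (z :: w))
          have h1 : Xop y.1 f (syl (z :: w)) = 0 := by
            rw [ht]; simp only [Xop]; rw [if_neg]; rintro ⟨h, -⟩; exact hyz1 h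
          have h2 : Xop y.1 f (y.1 :: syl (z :: w)) = f (syl (z :: w)) := by
            simp only [Xop]; simp [ht, hyz1]
          simp only [Pi.add_apply, Pi.smul_apply, smul_eq_mul, h1, h2, mul_zero, add_zero, hlong,
            zero_add]
          have hne : f (syl (z :: w)) ≠ 0 := by
            rw [ht]; intro h; rw [h] at ht2; simp at ht2
          have : sg y.2 * f (syl (z :: w)) * (sg y.2 * f (syl (z :: w))) =
            (sg y.2 * sg y.2) * (f (syl (z :: w)) * f (syl (z :: w))) := by ring
          rw [this, hsg, one_mul]
          exact mul_self_pos.2 hne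

theorem val_inj {g h : FreeGroup α} (H : val g = val h) : g = h := by
  have h1 : val (h⁻¹ * g) = one := by
    have : val g = Lact h one := H
    unfold val at *
    rw [Lact_mul, this, ← Lact_mul]; simp
  have h2 : h⁻¹ * g = 1 := by
    by_contra hc
    have hw : (h⁻¹ * g).toWord ≠ [] := by simpa using hc
    obtain ⟨x, w', hx'⟩ := List.exists_cons_of_ne_nil hw
    have hx : (h⁻¹ * g).toWord.head? = some x := by rw [hx']; rfl
    obtain ⟨t, -, -, h3⟩ := val_syl _ FreeGroup.isReduced_toWord x hx
    rw [FreeGroup.mk_toWord, h1] at h3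
    simp [one] at h3
  rw [inv_mul_eq_one] at h2
  exact h2.symm

theorem lt_total {a b : FreeGroup α} (h : a ≠ b) : lt a b ∨ lt b a := by
  unfold lt
  have : val b - val a ≠ 0 := by
    intro h'; exact h (val_inj (sub_eq_zero.1 h')).symm
  rcases pos_or this with h1 | h1
  · exact Or.inl h1
  · right; simpa using h1

end Magnus
end OneRel

set_option linter.unusedSectionVars false
set_option linter.unusedVariables false
set_option linter.unusedSimpArgs false
namespace OneRel

section Root
variable {α : Type} [DecidableEq α]

theorem cyclic_of_comm_free (S : Type) (hc : ∀ a b : FreeGroup S, a * b = b * a) :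
    ∃ s : FreeGroup S, ∀ x, ∃ k : ℤ, x = s ^ k := by
  classical
  have hsub : ∀ a b : S, a = b := by
    intro a b
    by_contra h
    have := hc (FreeGroup.of a) (FreeGroup.of b)
    have h2 := congrArg FreeGroup.toWord this
    simp only [FreeGroup.of, FreeGroup.mul_mk, FreeGroup.toWord_mk] at h2
    simp [FreeGroup.reduce, h, Ne.symm h] at h2
  by_cases hS : Nonempty S
  · obtain ⟨a⟩ := hS
    refine ⟨FreeGroup.of a, fun x => ?_⟩
    induction x using FreeGroup.induction_on with
    | C1 => exact ⟨0, by simp⟩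
    | of b => exact ⟨1, by rw [hsub b a]; simp⟩
    | inv_of b _ => exact ⟨-1, by rw [hsub b a]; simp⟩
    | mul x y hx hy =>
      obtain ⟨k, hk⟩ := hx
      obtain ⟨l, hl⟩ := hy
      exact ⟨k + l, by rw [zpow_add, ← hk, ← hl]⟩
  · refine ⟨1, fun x => ?_⟩
    induction x using FreeGroup.induction_on with
    | C1 => exact ⟨0, by simp⟩
    | of b => exact absurd ⟨b⟩ hS
    | inv_of b _ => exact absurd ⟨b⟩ hS
    | mul x y hx hy => 
      obtain ⟨k, hk⟩ := hx
      obtain ⟨l, hl⟩ := hy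
      exact ⟨0, by simp [hk, hl]⟩

theorem root_of_comm (r Q : FreeGroup α) (hr : r ≠ 1)
    (hpow : ¬ ∃ (s : FreeGroup α) (k : ℕ), 2 ≤ k ∧ r = s ^ k) (hc : Q * r = r * Q) :
    ∃ j : ℤ, Q = r ^ j := by
  let K := Subgroup.closure ({Q, r} : Set (FreeGroup α))
  have hKc : ∀ a b : K, a * b = b * a := by
    have : IsMulCommutative K := by
      apply Subgroup.isMulCommutative_closure
      intro a ha b hb
      simp only [Set.mem_insert_iff, Set.mem_singleton_iff] at ha hb
      rcases ha with rfl | rfl <;> rcases hb with rfl | rfl <;> simp [hc]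
    intro a b
    exact mul_comm' a b
  let e := IsFreeGroup.toFreeGroup K
  obtain ⟨s, hs⟩ := cyclic_of_comm_free (IsFreeGroup.Generators K) (by
    intro a b
    have := hKc (e.symm a) (e.symm b)
    simpa using congrArg e this)
  have hs' : ∀ x ∈ K, ∃ k : ℤ, x = ((e.symm s : K) : FreeGroup α) ^ k := by
    intro x hx
    obtain ⟨k, hk⟩ := hs (e ⟨x, hx⟩)
    refine ⟨k, ?_⟩
    have h2 : (⟨x, hx⟩ : K) = (e.symm s) ^ k := by
      rw [← map_zpow, ← hk]; simp
    have := congrArg (Subtype.val) h2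
    simpa using this
  set t : FreeGroup α := ((e.symm s : K) : FreeGroup α)
  obtain ⟨j, hj⟩ := hs' Q (Subgroup.subset_closure (by simp))
  obtain ⟨k, hk⟩ := hs' r (Subgroup.subset_closure (by simp))
  have hk1 : k.natAbs = 1 := by
    by_contra hne
    have hk0 : k.natAbs ≠ 0 := by
      intro h0
      rw [Int.natAbs_eq_zero] at h0
      rw [h0] at hk; simp at hk; exact hr hk
    apply hpow
    rcases Int.natAbs_eq k with h | h
    · exact ⟨t, k.natAbs, by omega, by rw [hk, ← zpow_natCast, ← h]⟩
    · exact ⟨t⁻¹, k.natAbs, by omega, by rw [hk, inv_pow, ← zpow_natCast, ← zpow_neg, ← h]⟩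
  rcases Int.natAbs_eq k with h | h
  · rw [hk1] at h; refine ⟨j, ?_⟩; rw [hk, h, hj]; simp
  · rw [hk1] at h; refine ⟨-j, ?_⟩; rw [hk, h, hj]; simp

end Root

section Stack
variable {α : Type} [DecidableEq α]

/-- inverse letter -/
def linv (x : α × Bool) : α × Bool := (x.1, !x.2)

/-- group element of a letter -/
def lg (x : α × Bool) : FreeGroup α := FreeGroup.mk [x]

theorem lg_linv (x : α × Bool) : lg (linv x) = (lg x)⁻¹ := by
  simp [lg, linv, FreeGroup.inv_mk, FreeGroup.invRev]

theorem linv_linv (x : α × Bool) : linv (linv x) = x := by simp [linv]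

theorem mk_cons (x : α × Bool) (l : List (α × Bool)) :
    FreeGroup.mk (x :: l) = lg x * FreeGroup.mk l := by
  unfold lg; rw [FreeGroup.mul_mk]; rfl

structure Stacking {L : ℕ} (y : ZMod L → α × Bool) (κ : ZMod L → ℕ) : Prop where
  inj : Function.Injective κ
  red : ∀ i, y (i + 1) ≠ linv (y i)
  same : ∀ i j, y i = y j → κ i < κ j → κ (i + 1) < κ (j + 1)
  opp : ∀ i j, y j = linv (y i) → κ i < κ (j + 1) → κ (i + 1) < κ j
  opp' : ∀ i j, y j = linv (y i) → κ (j + 1) < κ i → κ j < κ (i + 1)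

variable {L : ℕ} (y : ZMod L → α × Bool)

/-- the word read along the cyclic word `y`, from position `s`, of length `t` -/
def Wd (s : ℕ) : ℕ → List (α × Bool)
  | 0 => []
  | t + 1 => y ((s + t : ℕ) : ZMod L) :: Wd s t

def PP : ℕ → FreeGroup α
  | 0 => 1
  | t + 1 => lg (y (t : ZMod L)) * PP t

theorem Wd_length (s t : ℕ) : (Wd y s t).length = t := by
  induction t with
  | zero => rfl
  | succ t ih => simp [Wd, ih]

theorem mk_Wd (s t : ℕ) : FreeGroup.mk (Wd y s t) * PP y s = PP y (s + t) := by
  induction t with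
  | zero => simp [Wd, ← FreeGroup.one_eq_mk]
  | succ t ih => rw [Wd, mk_cons, mul_assoc, ih]; rfl

theorem PP_add_L (t : ℕ) : PP y (t + L) = PP y t * PP y L := by
  induction t with
  | zero => simp [PP]
  | succ t ih =>
    rw [show t + 1 + L = (t + L) + 1 by ring, PP, ih, PP, mul_assoc]
    simp

theorem PP_mul_L (t k : ℕ) : PP y (t + k * L) = PP y t * PP y L ^ k := by
  induction k with
  | zero => simp
  | succ k ih =>
    rw [show t + (k + 1) * L = (t + k * L) + L by ring, PP_add_L, ih, pow_succ, mul_assoc]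

theorem Wd_reduced (hred : ∀ i, y (i + 1) ≠ linv (y i)) (s t : ℕ) :
    FreeGroup.IsReduced (Wd y s t) := by
  induction t with
  | zero => simp [Wd]
  | succ t ih =>
    cases t with
    | zero => simp [Wd]
    | succ t =>
      unfold FreeGroup.IsReduced at *
      rw [Wd, Wd, List.isChain_cons_cons]
      refine ⟨?_, ih⟩
      have h := hred ((s + t : ℕ) : ZMod L)
      have h2 : ((s + (t + 1) : ℕ) : ZMod L) = ((s + t : ℕ) : ZMod L) + 1 := by push_cast; ring
      rw [h2]
      intro h3
      by_contra h4
      apply h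
      unfold linv
      refine Prod.ext (by exact h3) ?_
      simp only
      revert h4
      cases (y (((s + t : ℕ) : ZMod L) + 1)).2 <;> cases (y ((s + t : ℕ) : ZMod L)).2 <;> simp

theorem PP_inj (hred : ∀ i, y (i + 1) ≠ linv (y i)) {s t : ℕ} (h : PP y s = PP y t) : s = t := by
  have key : ∀ t, (PP y t).toWord.length = t := by
    intro t
    have h := mk_Wd y 0 t
    simp only [PP, mul_one, zero_add] at h
    rw [← h, FreeGroup.toWord_mk, FreeGroup.isReduced_iff_reduce_eq.1 (Wd_reduced y hred 0 t),
      Wd_length]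
  rw [← key s, h, key t]

theorem exists_stacking {m : ℕ} (r : FreeGroup (Fin m)) (hr : r ≠ 1)
    (hcyc : ∀ x : Fin m × Bool, r.toWord.head? = some x → r.toWord.getLast? ≠ some (x.1, !x.2))
    (hpow : ¬ ∃ (s : FreeGroup (Fin m)) (k : ℕ), 2 ≤ k ∧ r = s ^ k) :
    ∃ (L : ℕ) (_ : NeZero L) (y : ZMod L → Fin m × Bool) (κ : ZMod L → ℕ),
      Stacking y κ ∧ PP y L = r := by
  classical
  set R := r.toWord with hR
  set L := R.length with hL
  have hL0 : L ≠ 0 := by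
    rw [hL]; intro h; apply hr; simpa [hR] using h
  have : NeZero L := ⟨hL0⟩
  let y : ZMod L → Fin m × Bool := fun i => R[L - 1 - i.val]'(by omega)
  have hy : ∀ t (ht : t < L), y (t : ZMod L) = R[L - 1 - t]'(by omega) := by
    intro t ht
    simp only [y]
    congr 2
    rw [ZMod.val_natCast, Nat.mod_eq_of_lt ht]
  have hPL : PP y L = r := by
    have : ∀ t, t ≤ L → PP y t = FreeGroup.mk (R.drop (L - t)) := by
      intro t
      induction t with
      | zero => intro _; simp [PP, hL, FreeGroup.one_eq_mk]
      | succ t ih =>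
        intro ht
        rw [PP, ih (by omega), hy t (by omega), ← mk_cons]
        congr 1
        rw [show L - t = L - (t + 1) + 1 by omega]
        rw [List.drop_eq_getElem_cons (i := L - (t + 1)) (by omega)]
        congr 2
        omega
    rw [this L le_rfl]
    simp [hR, FreeGroup.mk_toWord]
  have hred : ∀ i, y (i + 1) ≠ linv (y i) := by
    intro i
    have hi : ((i.val : ℕ) : ZMod L) = i := ZMod.natCast_zmod_val i
    have hlt := ZMod.val_lt i
    rw [← hi]
    set t := i.val
    by_cases h : t + 1 < L
    · have h2 := hy (t + 1) h
      push_cast at h2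
      rw [h2, hy t hlt]
      have hred : FreeGroup.IsReduced R := FreeGroup.isReduced_toWord
      unfold FreeGroup.IsReduced at hred
      rw [List.isChain_iff_getElem] at hred
      have h3 := hred (L - 1 - (t + 1)) (by omega)
      have h4 : L - 1 - (t + 1) + 1 = L - 1 - t := by omega
      simp only [h4] at h3
      intro h5
      rw [h5] at h3
      simp [linv] at h3
    · have ht : t + 1 = L := by omega
      have h2 : ((t : ZMod L) + 1) = ((0 : ℕ) : ZMod L) := by
        have : (((t + 1 : ℕ)) : ZMod L) = 0 := by rw [ht]; simp
        push_cast at this; simpa using this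
      rw [h2, hy 0 (by omega), hy t hlt]
      intro h3
      have h5 : L - 1 - t = 0 := by omega
      simp only [h5] at h3
      refine hcyc R[0] ?_ ?_
      · rw [List.head?_eq_getElem?]; simp
      · rw [List.getLast?_eq_getElem?, List.getElem?_eq_getElem (by omega)]
        simpa [linv] using h3
  let x : ℕ → FreeGroup (Fin m) := fun t => PP y t * r * (PP y t)⁻¹
  have hx1 : ∀ t, x (t + L) = x t := by
    intro t; simp only [x]; rw [PP_add_L, hPL]; group
  have hxs : ∀ t : ℕ, x (t + 1) = lg (y t) * x t * (lg (y t))⁻¹ := by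
    intro t; simp only [x, PP]; group
  have hxm : ∀ t, x (t % L) = x t := by
    intro t
    have : ∀ k s, x (s + L * k) = x s := by
      intro k s
      induction k with
      | zero => simp
      | succ k ih => rw [mul_add, mul_one, ← add_assoc, hx1, ih]
    conv_rhs => rw [← Nat.mod_add_div t L]
    rw [this]
  let ξ : ZMod L → FreeGroup (Fin m) := fun i => x i.val
  have hξ1 : ∀ i, ξ (i + 1) = lg (y i) * ξ i * (lg (y i))⁻¹ := by
    intro i
    simp only [ξ]
    have hi : ((i.val : ℕ) : ZMod L) = i := ZMod.natCast_zmod_val i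
    have : (i + 1).val = (i.val + 1) % L := by
      rw [← ZMod.val_natCast]; push_cast; rw [hi]
    rw [this, hxm, hxs, hi]
  have hξinj : Function.Injective ξ := by
    have aux : ∀ s t : ℕ, s < L → t < L → x s = x t → s = t := by
      intro s t hs ht h
      simp only [x] at h
      obtain ⟨j, hj⟩ := root_of_comm r ((PP y s)⁻¹ * PP y t) hr hpow (by
        have : (PP y s)⁻¹ * (PP y s * r * (PP y s)⁻¹) * PP y t =
          (PP y s)⁻¹ * (PP y t * r * (PP y t)⁻¹) * PP y t := by rw [h]
        have h2 : r * ((PP y s)⁻¹ * PP y t) = (PP y s)⁻¹ * PP y t * r := by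
          calc _ = (PP y s)⁻¹ * (PP y s * r * (PP y s)⁻¹) * PP y t := by group
            _ = _ := this
            _ = _ := by group
        exact h2.symm)
      rcases Int.natAbs_eq j with h1 | h1
      · have h2 : PP y t = PP y (s + j.natAbs * L) := by
          rw [PP_mul_L, hPL, ← zpow_natCast, ← h1, ← hj]; group
        have := PP_inj y hred h2
        have h3 : j.natAbs = 0 := by
          by_contra hc
          have := Nat.le_mul_of_pos_left L (Nat.pos_of_ne_zero hc)
          omega
        rw [h3] at this; omega
      · have h2 : PP y s = PP y (t + j.natAbs * L) := by
          have h4 : ((j.natAbs : ℕ) : ℤ) = - j := by omega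
          rw [PP_mul_L, hPL, ← zpow_natCast, h4, zpow_neg, ← hj]; group
        have := PP_inj y hred h2
        have h3 : j.natAbs = 0 := by
          by_contra hc
          have := Nat.le_mul_of_pos_left L (Nat.pos_of_ne_zero hc)
          omega
        rw [h3] at this; omega
    intro i j h
    exact ZMod.val_injective L (aux _ _ (ZMod.val_lt i) (ZMod.val_lt j) h)
  let κ : ZMod L → ℕ := fun i => (Finset.univ.filter (fun j => lt (ξ j) (ξ i))).card
  have hκ : ∀ i j, lt (ξ i) (ξ j) → κ i < κ j := by
    intro i j h
    apply Finset.card_lt_card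
    rw [Finset.ssubset_iff_of_subset]
    · exact ⟨i, by simpa using h, by simpa using lt_irrefl' _⟩
    · intro k; simp only [Finset.mem_filter, Finset.mem_univ, true_and]
      intro hk; exact lt_trans' hk h
  have hκ' : ∀ i j, κ i < κ j → lt (ξ i) (ξ j) := by
    intro i j h
    by_cases hij : i = j
    · subst hij; omega
    · rcases lt_total (fun h' => hij (hξinj h') : ξ i ≠ ξ j) with h1 | h1
      · exact h1
      · have := hκ _ _ h1; omega
  refine ⟨L, inferInstance, y, κ, ⟨?_, hred, ?_, ?_, ?_⟩, hPL⟩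
  · intro i j h
    by_contra hij
    rcases lt_total (fun h' => hij (hξinj h') : ξ i ≠ ξ j) with h1 | h1
    · have := hκ _ _ h1; omega
    · have := hκ _ _ h1; omega
  · intro i j hy h
    apply hκ
    rw [hξ1, hξ1, hy]
    exact lt_conj _ _ _ (hκ' _ _ h)
  · intro i j hy h
    apply hκ
    have h1 := hκ' _ _ h
    have h2 := lt_conj (lg (y i)) _ _ h1
    rw [← hξ1, hξ1 j, hy, lg_linv] at h2
    convert h2 using 1
    group
  · intro i j hy h
    apply hκ
    have h1 := hκ' _ _ h
    have h2 := lt_conj (lg (y i)) _ _ h1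
    rw [← hξ1, hξ1 j, hy, lg_linv] at h2
    convert h2 using 1
    group

end Stack
end OneRel

set_option linter.unusedSectionVars false
set_option linter.unusedVariables false
set_option linter.unusedSimpArgs false
namespace OneRel

section Count
variable {α : Type} [DecidableEq α] {Ω : Type} [DecidableEq Ω] [MulAction (FreeGroup α) Ω]

/-- the (geometric) edge traversed when reading letter `x` from `ν` -/
def edgeOf (x : α × Bool) (ν : Ω) : Ω × α := if x.2 then (ν, x.1) else (lg x • ν, x.1)

def esrc (e : Ω × α) : Ω := e.1
def etgt (e : Ω × α) : Ω := FreeGroup.of e.2 • e.1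

theorem lg_true (a : α) : lg (a, true) = FreeGroup.of a := rfl
theorem lg_false (a : α) : lg (a, false) = (FreeGroup.of a)⁻¹ := by
  simp [lg, FreeGroup.of, FreeGroup.inv_mk, FreeGroup.invRev]

theorem esrc_edgeOf (x : α × Bool) (ν : Ω) :
    esrc (edgeOf x ν) = if x.2 then ν else lg x • ν := by
  unfold esrc edgeOf; split_ifs <;> rfl

theorem etgt_edgeOf (x : α × Bool) (ν : Ω) :
    etgt (edgeOf x ν) = if x.2 then lg x • ν else ν := by
  obtain ⟨a, b⟩ := x
  cases b <;> simp [etgt, edgeOf, lg_true, lg_false]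

variable {L : ℕ} [NeZero L] (y : ZMod L → α × Bool) (κ : ZMod L → ℕ)

/-- next sheet -/
def tau (s : Ω × ZMod L) : Ω × ZMod L := (lg (y s.2) • s.1, s.2 + 1)

def eps (s : Ω × ZMod L) : Ω × α := edgeOf (y s.2) s.1

def ssh (s : Ω × ZMod L) : Ω × ZMod L := if (y s.2).2 then s else tau y s
def tsh (s : Ω × ZMod L) : Ω × ZMod L := if (y s.2).2 then tau y s else s

theorem ssh_fst (s : Ω × ZMod L) : (ssh y s).1 = esrc (eps y s) := by
  unfold ssh eps; rw [esrc_edgeOf]; split_ifs <;> rfl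
theorem tsh_fst (s : Ω × ZMod L) : (tsh y s).1 = etgt (eps y s) := by
  unfold tsh eps; rw [etgt_edgeOf]; split_ifs <;> rfl

theorem tau_inj : Function.Injective (tau y : Ω × ZMod L → Ω × ZMod L) := by
  rintro ⟨a, i⟩ ⟨b, j⟩ h
  simp only [tau, Prod.mk.injEq] at h
  obtain ⟨h1, h2⟩ := h
  have : i = j := by simpa using h2
  subst this
  simpa using h1

theorem tau_iter_snd (s : Ω × ZMod L) (j : ℕ) : ((tau y)^[j] s).2 = s.2 + j := by
  induction j with
  | zero => simp
  | succ j ih => rw [Function.iterate_succ_apply', tau, ih]; push_cast; ring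

/-- same edge: the letters are equal and so are the vertices, or they are opposite -/
theorem same_edge {s s' : Ω × ZMod L} (h : eps y s = eps y s') :
    (y s.2 = y s'.2 ∧ s.1 = s'.1) ∨ (y s'.2 = linv (y s.2)) := by
  unfold eps edgeOf at h
  have h1 : (y s.2).1 = (y s'.2).1 := by
    have := congrArg Prod.snd h
    split_ifs at this <;> exact this
  have h0 := congrArg Prod.fst h
  rcases hb : (y s.2).2 with _ | _ <;> rcases hb' : (y s'.2).2 with _ | _
  · left
    have h2 : y s.2 = y s'.2 := Prod.ext h1 (hb.trans hb'.symm)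
    refine ⟨h2, ?_⟩
    simp only [hb, hb'] at h0
    simpa [h2] using h0
  · right; exact Prod.ext h1.symm (by simp [linv, hb, hb'])
  · right; exact Prod.ext h1.symm (by simp [linv, hb, hb'])
  · left
    have h2 : y s.2 = y s'.2 := Prod.ext h1 (hb.trans hb'.symm)
    refine ⟨h2, ?_⟩
    simpa only [hb, hb', if_true] using h0

variable {y κ}

theorem lam_inj (hS : Stacking y κ) {s s' : Ω × ZMod L} (h : eps y s = eps y s')
    (hl : κ (ssh y s).2 = κ (ssh y s').2) : s = s' := by
  have hl := hS.inj hl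
  rcases same_edge y h with ⟨h1, h2⟩ | h1
  · refine Prod.ext h2 ?_
    unfold ssh at hl
    rw [← h1] at hl
    split_ifs at hl
    · exact hl
    · simpa [tau] using hl
  · exfalso
    have hb : (y s'.2).2 = !(y s.2).2 := by rw [h1]; rfl
    unfold ssh at hl
    rcases hb1 : (y s.2).2 with _ | _
    · simp [hb, hb1, tau] at hl
      have := hS.red s.2
      rw [hl] at this; exact this h1
    · simp [hb, hb1, tau] at hl
      have := hS.red s'.2
      rw [← hl, h1, linv_linv] at this; exact this rfl

theorem lam_mu (hS : Stacking y κ) {s s' : Ω × ZMod L} (h : eps y s = eps y s')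
    (hl : κ (ssh y s).2 < κ (ssh y s').2) : κ (tsh y s).2 < κ (tsh y s').2 := by
  rcases same_edge y h with ⟨h1, h2⟩ | h1
  · unfold ssh at hl; unfold tsh
    rw [← h1] at hl ⊢
    rcases hb1 : (y s.2).2 with _ | _
    · simp [hb1, tau] at hl ⊢
      by_contra hc
      rcases Nat.lt_or_eq_of_le (not_lt.1 hc) with h3 | h3
      · have := hS.same _ _ h1.symm h3; omega
      · rw [hS.inj h3] at hl; omega
    · simp [hb1, tau] at hl ⊢
      exact hS.same _ _ h1 hl
  · have hb : (y s'.2).2 = !(y s.2).2 := by rw [h1]; rfl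
    unfold ssh at hl; unfold tsh
    rcases hb1 : (y s.2).2 with _ | _
    · simp [hb, hb1, tau] at hl ⊢
      have h1' : y s.2 = linv (y s'.2) := by rw [h1, linv_linv]
      exact hS.opp' _ _ h1' hl
    · simp [hb, hb1, tau] at hl ⊢
      exact hS.opp _ _ h1 hl

theorem lam_mu_le (hS : Stacking y κ) {s s' : Ω × ZMod L} (h : eps y s = eps y s')
    (hl : κ (tsh y s).2 ≤ κ (tsh y s').2) : κ (ssh y s).2 ≤ κ (ssh y s').2 := by
  by_contra hc
  have := lam_mu hS h.symm (not_le.1 hc)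
  omega

theorem counting (hS : Stacking y κ) (i0 : ZMod L) (hi0 : ∀ i, κ i0 ≤ κ i)
    (Sg : Finset (Ω × ZMod L)) (hSg : ∀ s ∈ Sg, tau y s ∈ Sg) :
    (Sg.filter (fun s => s.2 = i0)).card + (Sg.image Prod.fst).card ≤
      (Sg.image (eps y)).card +
      (Sg.filter (fun s => s.2 = i0 ∧ ∀ s' ∈ Sg, eps y s' = eps y s → s' = s)).card := by
  classical
  set T := Sg.filter (fun s => ∀ s' ∈ Sg, eps y s' = eps y s → κ (ssh y s').2 ≤ κ (ssh y s).2)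
    with hT
  set TV := Sg.filter (fun s => ∀ s' ∈ Sg, s'.1 = s.1 → κ s'.2 ≤ κ s.2) with hTV
  set N0 := Sg.filter (fun s => s.2 = i0) with hN0
  set lost := Sg.filter (fun s => s.2 = i0 ∧ ∀ s' ∈ Sg, eps y s' = eps y s → s' = s) with hlost
  have mS : ∀ s ∈ Sg, ssh y s ∈ Sg := by
    intro s hs; unfold ssh; split_ifs; exacts [hs, hSg s hs]
  have mT : ∀ s ∈ Sg, tsh y s ∈ Sg := by
    intro s hs; unfold tsh; split_ifs; exacts [hSg s hs, hs]
  have k1 : ∀ s ∈ Sg, ssh y s ∈ TV → s ∈ T := by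
    intro s hs h
    rw [hTV, Finset.mem_filter] at h
    rw [hT, Finset.mem_filter]
    refine ⟨hs, fun s' hs' he => h.2 _ (mS s' hs') ?_⟩
    rw [ssh_fst, ssh_fst, he]
  have k2 : ∀ s ∈ Sg, tsh y s ∈ TV → s ∈ T := by
    intro s hs h
    rw [hTV, Finset.mem_filter] at h
    rw [hT, Finset.mem_filter]
    refine ⟨hs, fun s' hs' he => lam_mu_le hS he (h.2 _ (mT s' hs') ?_)⟩
    rw [tsh_fst, tsh_fst, he]
  have k3 : TV ⊆ T := by
    intro s h
    have hs := (Finset.mem_filter.1 h).1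
    rcases hb1 : (y s.2).2 with _ | _
    · exact k2 s hs (by simpa [tsh, hb1] using h)
    · exact k1 s hs (by simpa [ssh, hb1] using h)
  have k4 : ∀ s ∈ Sg, tau y s ∈ TV → s ∈ T := by
    intro s hs h
    rcases hb1 : (y s.2).2 with _ | _
    · exact k1 s hs (by simpa [ssh, hb1] using h)
    · exact k2 s hs (by simpa [tsh, hb1] using h)
  have k5 : T.card ≤ (Sg.image (eps y)).card := by
    apply Finset.card_le_card_of_injOn (eps y)
    · intro s hs
      exact Finset.mem_image_of_mem _ (Finset.mem_filter.1 hs).1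
    · intro s hs s' hs' he
      have h1 := Finset.mem_filter.1 hs
      have h2 := Finset.mem_filter.1 hs'
      exact lam_inj hS he (le_antisymm (h2.2 _ h1.1 he) (h1.2 _ h2.1 he.symm))
  have k6 : (Sg.image Prod.fst).card ≤ TV.card := by
    refine (Finset.card_le_card (t := TV.image Prod.fst) ?_).trans Finset.card_image_le
    intro v hv
    obtain ⟨s0, hs0, rfl⟩ := Finset.mem_image.1 hv
    obtain ⟨s, hs, hmax⟩ := Finset.exists_max_image (Sg.filter (fun s => s.1 = s0.1))
      (fun s => κ s.2) ⟨s0, by simp [hs0]⟩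
    rw [Finset.mem_filter] at hs
    refine Finset.mem_image.2 ⟨s, ?_, hs.2⟩
    rw [hTV, Finset.mem_filter]
    refine ⟨hs.1, fun s' hs' he => hmax s' ?_⟩
    rw [Finset.mem_filter]; exact ⟨hs', he.trans hs.2⟩
  have k7 : N0.filter (fun s => s ∈ T) ⊆ lost := by
    intro s hs
    rw [Finset.mem_filter, hN0, Finset.mem_filter, hT, Finset.mem_filter] at hs
    obtain ⟨⟨hs, hi⟩, -, hmax⟩ := hs
    rw [hlost, Finset.mem_filter]
    refine ⟨hs, hi, fun s' hs' he => ?_⟩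
    apply lam_inj hS he
    apply le_antisymm (hmax s' hs' he)
    rcases hb1 : (y s.2).2 with _ | _
    · apply lam_mu_le hS he.symm
      have : tsh y s = s := by simp [tsh, hb1]
      rw [this, hi]; exact hi0 _
    · have : ssh y s = s := by simp [ssh, hb1]
      rw [this, hi]; exact hi0 _
  obtain ⟨imax, himax⟩ := Finite.exists_max κ
  have mI : ∀ s ∈ Sg, ∀ j, (tau y)^[j] s ∈ Sg := by
    intro s hs j
    induction j with
    | zero => exact hs
    | succ j ih => rw [Function.iterate_succ_apply']; exact hSg _ ih
  have ex : ∀ s ∈ Sg, ∃ j < L, (tau y)^[j] s ∈ T := by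
    intro s hs
    refine ⟨(imax - s.2).val, ZMod.val_lt _, k3 ?_⟩
    rw [hTV, Finset.mem_filter]
    refine ⟨mI _ hs _, fun s' _ _ => ?_⟩
    rw [tau_iter_snd, ZMod.natCast_zmod_val]
    simpa using himax s'.2
  have ex' : ∀ s, ∃ j, s ∈ N0.filter (fun s => s ∉ T) →
      j < L ∧ (tau y)^[j] s ∈ T \ TV := by
    intro s
    by_cases hs : s ∈ N0.filter (fun s => s ∉ T)
    swap
    · exact ⟨0, fun h => absurd h hs⟩
    rw [Finset.mem_filter, hN0, Finset.mem_filter] at hs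
    obtain ⟨⟨hs, hi⟩, hnT⟩ := hs
    have hex := ex s hs
    refine ⟨Nat.find hex, fun _ => ⟨(Nat.find_spec hex).1, ?_⟩⟩
    rw [Finset.mem_sdiff]
    refine ⟨(Nat.find_spec hex).2, ?_⟩
    intro htv
    rcases hj : Nat.find hex with _ | j
    · have := (Nat.find_spec hex).2
      rw [hj] at this; exact hnT this
    · rw [hj, Function.iterate_succ_apply'] at htv
      have h1 := k4 _ (mI s hs j) htv
      have h2 := Nat.find_min hex (m := j) (by omega)
      exact h2 ⟨by have := (Nat.find_spec hex).1; omega, h1⟩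
  choose J hJ using ex'
  have k8 : (N0.filter (fun s => s ∉ T)).card ≤ (T \ TV).card := by
    apply Finset.card_le_card_of_injOn (fun s => (tau y)^[J s] s)
    · intro s hs; exact (hJ s hs).2
    · intro s hs s' hs' he
      simp only at he
      have h1 := (hJ s hs).1
      have h2 := (hJ s' hs').1
      have h3 := congrArg Prod.snd he
      rw [tau_iter_snd, tau_iter_snd] at h3
      have e1 : s.2 = i0 := (Finset.mem_filter.1 (Finset.mem_filter.1 hs).1).2
      have e2 : s'.2 = i0 := (Finset.mem_filter.1 (Finset.mem_filter.1 hs').1).2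
      rw [e1, e2] at h3
      have h4 : ((J s : ℕ) : ZMod L) = (J s' : ℕ) := by simpa using h3
      have h5 : J s = J s' := by
        have := congrArg ZMod.val h4
        rwa [ZMod.val_natCast, ZMod.val_natCast, Nat.mod_eq_of_lt h1, Nat.mod_eq_of_lt h2] at this
      rw [h5] at he
      exact (tau_inj y).iterate _ he
  have k9 := Finset.card_filter_add_card_filter_not (s := N0) (fun s => s ∈ T)
  have k10 := Finset.card_sdiff_add_card_eq_card k3
  have k11 := Finset.card_le_card k7
  omega

end Count
end OneRel

set_option linter.unusedSectionVars false
set_option linter.unusedVariables false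
set_option linter.unusedSimpArgs false
namespace OneRel

section Chains
variable {α : Type} [DecidableEq α] {Ω : Type} [DecidableEq Ω] [MulAction (FreeGroup α) Ω]
variable (K : Type) [Field K]

/-- boundary map -/
noncomputable def bd : ((Ω × α) →₀ K) →ₗ[K] (Ω →₀ K) :=
  Finsupp.linearCombination K
    (fun e : Ω × α => Finsupp.single (etgt e) (1 : K) - Finsupp.single (esrc e) 1)

theorem bd_single (e : Ω × α) (a : K) :
    bd K (Finsupp.single e a) = a • (Finsupp.single (etgt e) (1 : K) - Finsupp.single (esrc e) 1) := by
  simp [bd, Finsupp.linearCombination_single]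

theorem finrank_supp {X : Type} (E : Finset X) :
    Module.finrank K (Finsupp.supported K K (E : Set X)) = E.card := by
  rw [LinearEquiv.finrank_eq (Finsupp.supportedEquivFinsupp (M := K) (R := K) (E : Set X))]
  simp

instance finite_supp {X : Type} (E : Finset X) :
    FiniteDimensional K (Finsupp.supported K K (E : Set X)) :=
  Module.Finite.equiv (Finsupp.supportedEquivFinsupp (M := K) (R := K) (E : Set X)).symm

theorem rank_lemma (E : Finset (Ω × α)) (Vs : Finset Ω) (hV : Vs.Nonempty)
    (hend : ∀ e ∈ E, esrc e ∈ Vs ∧ etgt e ∈ Vs) (G : Finset ((Ω × α) →₀ K))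
    (hG : ∀ c ∈ Finsupp.supported K K (E : Set (Ω × α)), bd K c = 0 →
      c ∈ Submodule.span K (G : Set ((Ω × α) →₀ K))) :
    E.card + 1 ≤ Vs.card + G.card := by
  set W := Finsupp.supported K K (E : Set (Ω × α)) with hW
  set f := (bd K : ((Ω × α) →₀ K) →ₗ[K] (Ω →₀ K)).domRestrict W with hf
  have h1 := LinearMap.finrank_range_add_finrank_ker (K := K) (V := W) (V₂ := Ω →₀ K) f
  rw [finrank_supp] at h1
  have h2 : Module.finrank K (LinearMap.ker f) ≤ G.card := by
    refine le_trans ?_ (finrank_span_finset_le_card (R := K) (M := (Ω × α) →₀ K) G)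
    let g : LinearMap.ker f →ₗ[K] Submodule.span K (G : Set ((Ω × α) →₀ K)) :=
      LinearMap.codRestrict _ (W.subtype ∘ₗ (LinearMap.ker f).subtype) (by
        intro c
        exact hG _ c.1.2 c.2)
    apply LinearMap.finrank_le_finrank_of_injective (f := g)
    intro a b hab
    have := congrArg Subtype.val hab
    exact Subtype.ext (Subtype.ext this)
  have h3 : Module.finrank K (LinearMap.range f) < Vs.card := by
    rw [← finrank_supp K Vs]
    apply Submodule.finrank_lt_finrank_of_lt
    obtain ⟨v, hv⟩ := hV
    let aug : (Ω →₀ K) →ₗ[K] K := Finsupp.linearCombination K (fun _ => (1 : K))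
    have ha : ∀ c : (Ω × α) →₀ K, aug (bd K c) = 0 := by
      intro c
      have : aug ∘ₗ (bd K : ((Ω × α) →₀ K) →ₗ[K] (Ω →₀ K)) = 0 := by
        ext e
        simp [bd_single, aug]
      exact LinearMap.congr_fun this c
    rw [SetLike.lt_iff_le_and_exists]
    refine ⟨?_, Finsupp.single v 1, ?_, ?_⟩
    · rintro _ ⟨c, rfl⟩
      rw [hf, LinearMap.domRestrict_apply]
      obtain ⟨c, hc⟩ := c
      simp only
      rw [hW, Finsupp.supported_eq_span_single] at hc
      refine Submodule.span_induction (p := fun c _ => bd K c ∈ Finsupp.supported K K (Vs : Set Ω))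
        ?_ ?_ ?_ ?_ hc
      · rintro _ ⟨e, he, rfl⟩
        rw [bd_single, one_smul]
        exact Submodule.sub_mem _ (Finsupp.single_mem_supported K _ (hend e he).2)
          (Finsupp.single_mem_supported K _ (hend e he).1)
      · simp
      · intro a b _ _ ha hb; rw [map_add]; exact Submodule.add_mem _ ha hb
      · intro a b _ hb; rw [map_smul]; exact Submodule.smul_mem _ _ hb
    · exact Finsupp.single_mem_supported K _ hv
    · rintro ⟨c, hc⟩
      have := ha c
      rw [hf, LinearMap.domRestrict_apply] at hc
      rw [hc] at this
      simp [aug] at this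
  omega

/-! paths and chains. Words are read from right to left. -/

/-- edges visited by the path `l` starting at `ν` -/
def pe : List (α × Bool) → Ω → Finset (Ω × α)
  | [], _ => ∅
  | x :: l, ν => insert (edgeOf x (FreeGroup.mk l • ν)) (pe l ν)

def sgn (b : Bool) : K := if b then 1 else -1

/-- chain of a path -/
noncomputable def ch : List (α × Bool) → Ω → ((Ω × α) →₀ K)
  | [], _ => 0
  | x :: l, ν => ch l ν + Finsupp.single (edgeOf x (FreeGroup.mk l • ν)) (sgn K x.2)

theorem pe_append (l l' : List (α × Bool)) (ν : Ω) :
    pe (l ++ l') ν = pe l (FreeGroup.mk l' • ν) ∪ pe l' ν := by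
  induction l with
  | nil => simp [pe]
  | cons x l ih =>
    simp only [List.cons_append, pe, ih, Finset.insert_union]
    rw [← FreeGroup.mul_mk, mul_smul]

theorem ch_append (l l' : List (α × Bool)) (ν : Ω) :
    ch K (l ++ l') ν = ch K l (FreeGroup.mk l' • ν) + ch K l' ν := by
  induction l with
  | nil => simp [ch]
  | cons x l ih =>
    simp only [List.cons_append, ch, ih]
    rw [← FreeGroup.mul_mk, mul_smul]; abel

theorem edgeOf_linv (x : α × Bool) (ν : Ω) : edgeOf (linv x) (lg x • ν) = edgeOf x ν := by
  obtain ⟨a, b⟩ := x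
  cases b <;> simp [edgeOf, linv, lg_true, lg_false]

theorem ch_step {l l' : List (α × Bool)} (h : FreeGroup.Red.Step l l') (ν : Ω) :
    ch K l ν = ch K l' ν := by
  obtain ⟨⟩ := h
  rename_i L1 L2 a b
  rw [ch_append, ch_append]
  have h1 : FreeGroup.mk ((a, b) :: (a, !b) :: L2) = FreeGroup.mk L2 := by
    exact Quot.sound FreeGroup.Red.Step.cons_not
  rw [h1]
  congr 1
  have h2 : FreeGroup.mk ((a, !b) :: L2) • ν = lg (a, !b) • FreeGroup.mk L2 • ν := by
    rw [mk_cons, mul_smul]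
  simp only [ch, h2]
  have h3 := edgeOf_linv (a, !b) (FreeGroup.mk L2 • ν)
  simp only [linv, Bool.not_not] at h3
  rw [h3, add_assoc, ← Finsupp.single_add]
  have : sgn K (!b) + sgn K b = 0 := by cases b <;> simp [sgn]
  rw [this]; simp

noncomputable def chF (g : FreeGroup α) (ν : Ω) : ((Ω × α) →₀ K) := ch K g.toWord ν

theorem ch_eq (l : List (α × Bool)) (ν : Ω) : ch K l ν = chF K (FreeGroup.mk l) ν := by
  unfold chF
  rw [FreeGroup.toWord_mk]
  have h : FreeGroup.Red l (FreeGroup.reduce l) := FreeGroup.reduce.red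
  generalize FreeGroup.reduce l = l' at h
  induction h with
  | refl => rfl
  | tail _ h ih => rw [ih, ch_step K h]

theorem chF_mul (g h : FreeGroup α) (ν : Ω) : chF K (g * h) ν = chF K g (h • ν) + chF K h ν := by
  conv_lhs => rw [← FreeGroup.mk_toWord (x := g), ← FreeGroup.mk_toWord (x := h), FreeGroup.mul_mk,
    ← ch_eq, ch_append, FreeGroup.mk_toWord]
  rfl

theorem chF_one (ν : Ω) : chF K (1 : FreeGroup α) ν = 0 := by
  simp [chF, ch]

theorem chF_inv (g : FreeGroup α) (ν : Ω) : chF K g⁻¹ ν = - chF K g (g⁻¹ • ν) := by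
  have := chF_mul K g g⁻¹ ν
  rw [mul_inv_cancel, chF_one] at this
  exact (neg_eq_of_add_eq_zero_right this.symm).symm

theorem bd_ch (l : List (α × Bool)) (ν : Ω) :
    bd K (ch K l ν) = Finsupp.single (FreeGroup.mk l • ν) 1 - Finsupp.single ν 1 := by
  induction l with
  | nil => simp [ch, ← FreeGroup.one_eq_mk]
  | cons x l ih =>
    rw [ch, map_add, ih, bd_single, etgt_edgeOf, esrc_edgeOf, mk_cons, mul_smul]
    obtain ⟨a, b⟩ := x
    cases b <;> simp [sgn]

theorem bd_chF (g : FreeGroup α) (ν : Ω) :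
    bd K (chF K g ν) = Finsupp.single (g • ν) 1 - Finsupp.single ν 1 := by
  unfold chF; rw [bd_ch, FreeGroup.mk_toWord]

theorem ch_supp (l : List (α × Bool)) (ν : Ω) :
    ch K l ν ∈ Finsupp.supported K K (pe l ν : Set (Ω × α)) := by
  induction l with
  | nil => simp [ch]
  | cons x l ih =>
    rw [ch, pe]
    refine Submodule.add_mem _ ?_ ?_
    · exact Finsupp.supported_mono (by simp) ih
    · exact Finsupp.single_mem_supported K _ (by simp)

theorem ch_apply_notMem (l : List (α × Bool)) (ν : Ω) (e : Ω × α) (he : e ∉ pe l ν) :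
    ch K l ν e = 0 := by
  have := ch_supp K l ν
  rw [Finsupp.mem_supported] at this
  by_contra h
  exact he (this (Finsupp.mem_support_iff.2 h))

end Chains
end OneRel

set_option linter.unusedSectionVars false
set_option linter.unusedVariables false
set_option linter.unusedSimpArgs false
namespace OneRel

section Forest
variable {α : Type} [DecidableEq α] {Ω : Type} [DecidableEq Ω] [MulAction (FreeGroup α) Ω]
variable (K : Type) [Field K]

theorem edgeOf_eq {x x' : α × Bool} {ν ν' : Ω} (h : edgeOf x ν = edgeOf x' ν') :
    (x' = x ∧ ν' = ν) ∨ (x' = linv x ∧ ν' = lg x • ν) := by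
  obtain ⟨a, b⟩ := x
  obtain ⟨a', b'⟩ := x'
  unfold edgeOf at h
  have h1 : a = a' := by
    have := congrArg Prod.snd h
    split_ifs at this <;> exact this
  subst h1
  have h0 := congrArg Prod.fst h
  cases b <;> cases b' <;> simp [linv] at h0 ⊢
  · exact h0.symm
  · exact h0.symm
  · rw [h0, lg_true, lg_false]; simp
  · exact h0.symm

theorem mem_pe {l : List (α × Bool)} {ν : Ω} {e : Ω × α} (h : e ∈ pe l ν) :
    ∃ m x m', l = m ++ x :: m' ∧ edgeOf x (FreeGroup.mk m' • ν) = e := by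
  induction l with
  | nil => simp [pe] at h
  | cons x l ih =>
    rw [pe, Finset.mem_insert] at h
    rcases h with h | h
    · exact ⟨[], x, l, rfl, h.symm⟩
    · obtain ⟨m, x', m', rfl, h2⟩ := ih h
      exact ⟨x :: m, x', m', rfl, h2⟩

theorem pe_card (l : List (α × Bool)) (ν : Ω) : (pe l ν).card ≤ l.length := by
  induction l with
  | nil => simp [pe]
  | cons x l ih =>
    rw [pe]
    exact (Finset.card_insert_le _ _).trans (by simp; exact ih)

theorem pe_step {l l' : List (α × Bool)} (h : FreeGroup.Red.Step l l') (ν : Ω) :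
    pe l' ν ⊆ pe l ν := by
  obtain ⟨⟩ := h
  rename_i L1 L2 a b
  rw [pe_append, pe_append]
  have h1 : FreeGroup.mk ((a, b) :: (a, !b) :: L2) = FreeGroup.mk L2 :=
    Quot.sound FreeGroup.Red.Step.cons_not
  rw [h1]
  apply Finset.union_subset_union_right
  rw [pe, pe]
  exact (Finset.subset_insert _ _).trans (Finset.subset_insert _ _)

theorem pe_reduce (l : List (α × Bool)) (ν : Ω) : pe (FreeGroup.reduce l) ν ⊆ pe l ν := by
  have h : FreeGroup.Red l (FreeGroup.reduce l) := FreeGroup.reduce.red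
  generalize FreeGroup.reduce l = l' at h
  induction h with
  | refl => exact Finset.Subset.refl _
  | tail _ h ih => exact (pe_step h ν).trans ih

theorem sgn_ne (b : Bool) : sgn K b ≠ 0 := by cases b <;> simp [sgn]

theorem forest_reduced (E : Finset (Ω × α))
    (hE : ∀ c ∈ Finsupp.supported K K (E : Set (Ω × α)), bd K c = 0 → c = 0) :
    ∀ (N : ℕ) (l : List (α × Bool)) (ν : Ω), l.length ≤ N → FreeGroup.IsReduced l →
      pe l ν ⊆ E → FreeGroup.mk l • ν = ν → l = [] := by
  intro N
  induction N with
  | zero => intro l ν h _ _ _; simpa using h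
  | succ N ih =>
    intro l ν hlen hred hpe hcl
    rcases l with _ | ⟨x, l'⟩
    · rfl
    exfalso
    have h0 : ch K (x :: l') ν = 0 := by
      apply hE
      · exact Finsupp.supported_mono (by exact_mod_cast hpe) (ch_supp K _ ν)
      · rw [bd_ch, hcl, sub_self]
    have hmem : edgeOf x (FreeGroup.mk l' • ν) ∈ pe l' ν := by
      by_contra hn
      have h1 := ch_apply_notMem K l' ν _ hn
      have h2 := DFunLike.congr_fun h0 (edgeOf x (FreeGroup.mk l' • ν))
      rw [ch, Finsupp.add_apply, h1] at h2
      simp at h2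
      exact sgn_ne K _ h2
    obtain ⟨m, x', m', hl, he⟩ := mem_pe hmem
    have hpel : pe l' ν ⊆ E := (Finset.subset_insert _ _).trans hpe
    have hredl : FreeGroup.IsReduced l' := List.IsChain.tail hred
    rcases edgeOf_eq he with ⟨h1, h2⟩ | ⟨h1, h2⟩
    · have := ih (m ++ [x']) (FreeGroup.mk m' • ν) ?_ ?_ ?_ ?_
      · simp at this
      · rw [hl] at hlen; simp at hlen ⊢; omega
      · exact List.IsChain.left_of_append (l₂ := m') (by
          rw [hl] at hredl; unfold FreeGroup.IsReduced at hredl; simpa using hredl)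
      · refine Finset.Subset.trans ?_ hpel
        rw [hl, show m ++ x' :: m' = (m ++ [x']) ++ m' by simp, pe_append (m ++ [x'])]
        exact Finset.subset_union_left
      · rw [← mul_smul, FreeGroup.mul_mk, ← h2, hl]; simp
    · have h3 : FreeGroup.mk (x' :: m') • ν = FreeGroup.mk l' • ν := by
        rw [mk_cons, mul_smul, h2]
      have := ih m (FreeGroup.mk (x' :: m') • ν) ?_ ?_ ?_ ?_
      · subst this
        simp at hl
        rw [hl] at hred
        unfold FreeGroup.IsReduced at hred
        rw [List.isChain_cons_cons] at hred
        have h5 := hred.1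
        rw [h1] at h5
        simp [linv] at h5
      · rw [hl] at hlen; simp at hlen; omega
      · exact List.IsChain.left_of_append (l₂ := x' :: m') (by rw [hl] at hredl; exact hredl)
      · refine Finset.Subset.trans ?_ hpel
        rw [hl, pe_append]
        exact Finset.subset_union_left
      · rw [← mul_smul, FreeGroup.mul_mk, h3, ← hl]

theorem forest_closed (E : Finset (Ω × α))
    (hE : ∀ c ∈ Finsupp.supported K K (E : Set (Ω × α)), bd K c = 0 → c = 0)
    (w : List (α × Bool)) (ν : Ω) (hpe : pe w ν ⊆ E) (hcl : FreeGroup.mk w • ν = ν) :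
    FreeGroup.mk w = 1 := by
  have h := forest_reduced K E hE _ (FreeGroup.reduce w) ν le_rfl
    (FreeGroup.isReduced_iff_reduce_eq.2 FreeGroup.reduce.idem) ((pe_reduce w ν).trans hpe) (by
      rw [FreeGroup.reduce.self]; exact hcl)
  rw [← FreeGroup.reduce.self (L := w), h, FreeGroup.one_eq_mk]

end Forest
end OneRel

set_option linter.unusedSectionVars false
set_option linter.unusedVariables false
set_option linter.unusedSimpArgs false
namespace OneRel

section Config
variable {α : Type} [DecidableEq α] {Ω : Type} [DecidableEq Ω] [MulAction (FreeGroup α) Ω]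
variable {L : ℕ} [NeZero L] (y : ZMod L → α × Bool)

/-- the sheet number `t` of the relator attached at `ω` -/
def sh (t : ℕ) (ω : Ω) : Ω × ZMod L := (PP y t • ω, (t : ZMod L))

theorem sh_succ (t : ℕ) (ω : Ω) : sh y (t + 1) ω = tau y (sh y t ω) := by
  simp [sh, tau, PP, mul_smul]

def Sg (A : Finset Ω) : Finset (Ω × ZMod L) :=
  (A ×ˢ Finset.range L).image (fun q => sh y q.2 q.1)

def EA (A : Finset Ω) : Finset (Ω × α) := (Sg y A).image (eps y)

structure Inv (n : ℕ) (A : Finset Ω) : Prop where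
  mem : ∀ ω ∈ A, PP y L • ω ∈ A
  pow : ∀ ω ∈ A, (PP y L) ^ n • ω = ω

variable {y}

theorem mem_Sg {A : Finset Ω} {s : Ω × ZMod L} :
    s ∈ Sg y A ↔ ∃ ω ∈ A, ∃ i < L, s = sh y i ω := by
  simp only [Sg, Finset.mem_image, Finset.mem_product, Finset.mem_range, Prod.exists]
  constructor
  · rintro ⟨ω, i, ⟨h1, h2⟩, rfl⟩; exact ⟨ω, h1, i, h2, rfl⟩
  · rintro ⟨ω, h1, i, h2, rfl⟩; exact ⟨ω, i, ⟨h1, h2⟩, rfl⟩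

theorem sh_L (ω : Ω) : sh y L ω = sh y 0 (PP y L • ω) := by
  simp [sh, PP]

theorem Sg_tau {n : ℕ} {A : Finset Ω} (hA : Inv y n A) {s : Ω × ZMod L} (hs : s ∈ Sg y A) :
    tau y s ∈ Sg y A := by
  rw [mem_Sg] at hs ⊢
  obtain ⟨ω, hω, i, hi, rfl⟩ := hs
  rw [← sh_succ]
  by_cases h : i + 1 < L
  · exact ⟨ω, hω, i + 1, h, rfl⟩
  · have : i + 1 = L := by omega
    rw [this, sh_L]
    exact ⟨_, hA.mem ω hω, 0, Nat.pos_of_ne_zero (NeZero.ne L), rfl⟩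

theorem sh_mem {n : ℕ} {A : Finset Ω} (hA : Inv y n A) {ω : Ω} (hω : ω ∈ A) (t : ℕ) :
    sh y t ω ∈ Sg y A := by
  induction t with
  | zero => exact mem_Sg.2 ⟨ω, hω, 0, Nat.pos_of_ne_zero (NeZero.ne L), rfl⟩
  | succ t ih => rw [sh_succ]; exact Sg_tau hA ih

theorem sh_eq {t i0 : ℕ} (hi0 : i0 < L) {ω ω0 : Ω} (h : sh y t ω = sh y i0 ω0) :
    t = i0 + (t / L) * L ∧ (PP y L) ^ (t / L) • ω = ω0 := by
  have h1 : t % L = i0 := by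
    have := congrArg (fun s => ZMod.val s.2) h
    simp only [sh, ZMod.val_natCast] at this
    rwa [Nat.mod_eq_of_lt hi0] at this
  have h2 : t = i0 + (t / L) * L := by
    rw [← h1, mul_comm]; exact (Nat.mod_add_div t L).symm
  refine ⟨h2, ?_⟩
  have h3 := congrArg Prod.fst h
  simp only [sh] at h3
  rw [h2, PP_mul_L, mul_smul] at h3
  simpa using h3

theorem pe_Wd (s t : ℕ) (ω : Ω) :
    pe (Wd y s t) (PP y s • ω) = (Finset.range t).image (fun j => eps y (sh y (s + j) ω)) := by
  induction t with
  | zero => simp [Wd, pe]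
  | succ t ih =>
    rw [Wd, pe, ih, ← mul_smul, mk_Wd, Finset.range_add_one, Finset.image_insert]
    rfl

theorem PP_pow (k : ℕ) : (PP y L) ^ k = PP y (k * L) := by
  have := PP_mul_L y 0 k
  simp [PP] at this
  exact this.symm

theorem EA_card (A : Finset Ω) : (EA y A).card ≤ L * A.card := by
  unfold EA Sg
  refine Finset.card_image_le.trans (Finset.card_image_le.trans ?_)
  rw [Finset.card_product, Finset.card_range, mul_comm]

theorem EA_mono {A A' : Finset Ω} (h : A' ⊆ A) : EA y A' ⊆ EA y A := by
  unfold EA Sg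
  exact Finset.image_subset_image (Finset.image_subset_image (Finset.product_subset_product_left h))

section cyc
variable (K : Type) [Field K] (y)

/-- the cycle of the relator attached at `ω` -/
noncomputable def cyc (n : ℕ) (ω : Ω) : (Ω × α) →₀ K := chF K ((PP y L) ^ n) ω

theorem chF_conj (g h : FreeGroup α) (ω : Ω) (hω : h • ω = ω) :
    chF K (g * h * g⁻¹) (g • ω) = chF K h ω := by
  rw [chF_mul, chF_mul, chF_inv]
  simp [hω]

theorem chF_pow (g : FreeGroup α) (k : ℕ) (ω : Ω) (hω : g • ω = ω) :
    chF K (g ^ k) ω = (k : K) • chF K g ω := by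
  induction k with
  | zero => simp [chF_one]
  | succ k ih => rw [pow_succ, chF_mul, hω, ih]; push_cast; rw [add_smul, one_smul]

theorem cyc_r {n : ℕ} {ω : Ω} (h : (PP y L) ^ n • ω = ω) :
    cyc y K n (PP y L • ω) = cyc y K n ω := by
  unfold cyc
  have := chF_conj K (PP y L) ((PP y L) ^ n) ω h
  rwa [← pow_succ', pow_succ, mul_inv_cancel_right] at this

theorem cyc_pow {n : ℕ} {ω : Ω} (h : (PP y L) ^ n • ω = ω) (k : ℕ) :
    cyc y K n ((PP y L) ^ k • ω) = cyc y K n ω := by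
  induction k with
  | zero => simp
  | succ k ih =>
    rw [pow_succ', mul_smul, cyc_r, ih]
    rw [← mul_smul, ← pow_add, add_comm, pow_add, mul_smul, h]

theorem cyc_fix {n : ℕ} {ω : Ω} (h : PP y L • ω = ω) (hn : (n : K) = 0) :
    cyc y K n ω = 0 := by
  unfold cyc
  rw [chF_pow K _ _ _ h, hn, zero_smul]

end cyc

variable (y)

/-- cycles supported in `E` are spanned by relator cycles on `A` and the cycles in `U` -/
def Spans (n : ℕ) (A : Finset Ω) (E : Finset (Ω × α)) (U : Finset (List (α × Bool) × Ω)) : Prop :=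
  ∀ (p : ℕ) [Fact p.Prime], p ∣ n → ∀ c ∈ Finsupp.supported (ZMod p) (ZMod p) (E : Set (Ω × α)),
    bd (ZMod p) c = 0 → c ∈ Submodule.span (ZMod p)
      (((A.image (cyc y (ZMod p) n) ∪ U.image (fun q => ch (ZMod p) q.1 q.2) :
        Finset ((Ω × α) →₀ ZMod p))) : Set ((Ω × α) →₀ ZMod p))

theorem Spans.mono {n : ℕ} {A : Finset Ω} {E E' : Finset (Ω × α)}
    {U : Finset (List (α × Bool) × Ω)} (h : Spans y n A E U) (hE : E' ⊆ E) : Spans y n A E' U := by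
  intro p _ hp c hc
  exact h p hp c (Finsupp.supported_mono (by exact_mod_cast hE) hc)

def Lost (A : Finset Ω) (i0 : ℕ) (ω0 : Ω) : Prop :=
  ω0 ∈ A ∧ ∀ s' ∈ Sg y A, eps y s' = eps y (sh y i0 ω0) → s' = sh y i0 ω0

variable {κ : ZMod L → ℕ} {y}

open Classical in
theorem count_lemma (hS : Stacking y κ) {i0 : ℕ} (hi0 : i0 < L)
    (hmin : ∀ i, κ (i0 : ZMod L) ≤ κ i) {n : ℕ} (hn : 2 ≤ n) {A : Finset Ω} (hA : Inv y n A)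
    (hne : A.Nonempty) {E : Finset (Ω × α)} {U : Finset (List (α × Bool) × Ω)}
    (hSp : Spans y n A E U) (hE : EA y A ⊆ E) :
    A.card + 2 ≤ 2 * U.card + 2 * (A.filter (Lost y A i0)).card := by
  obtain ⟨p, hp, hpn⟩ := Nat.exists_prime_and_dvd (show n ≠ 1 by omega)
  have : Fact p.Prime := ⟨hp⟩
  have hn0 : (n : ZMod p) = 0 := (ZMod.natCast_eq_zero_iff n p).2 hpn
  have h1 := counting hS (i0 : ZMod L) hmin (Sg y A) (fun s hs => Sg_tau hA hs)
  set G0 := (A.image (cyc y (ZMod p) n)).erase 0 with hG0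
  set GU := U.image (fun q => ch (ZMod p) q.1 q.2) with hGU
  have h2 := rank_lemma (ZMod p) (EA y A) ((Sg y A).image Prod.fst) (by
      obtain ⟨ω, hω⟩ := hne
      exact ⟨_, Finset.mem_image_of_mem _ (sh_mem hA hω 0)⟩) (by
      intro e he
      obtain ⟨s, hs, rfl⟩ := Finset.mem_image.1 he
      rw [← ssh_fst, ← tsh_fst]
      constructor
      · apply Finset.mem_image_of_mem
        unfold ssh; split_ifs; exacts [hs, Sg_tau hA hs]
      · apply Finset.mem_image_of_mem
        unfold tsh; split_ifs; exacts [Sg_tau hA hs, hs]) (G0 ∪ GU) (by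
      intro c hc hb
      have h3 := hSp p hpn c (Finsupp.supported_mono (by exact_mod_cast hE) hc) hb
      refine Submodule.span_le.2 ?_ h3
      intro x hx
      by_cases hx0 : x = 0
      · rw [hx0]; exact Submodule.zero_mem _
      apply Submodule.subset_span
      rw [Finset.mem_coe, Finset.mem_union] at hx ⊢
      rcases hx with hx | hx
      · left; rw [hG0, Finset.mem_erase]; exact ⟨hx0, hx⟩
      · right; exact hx)
  have h3 : 2 * G0.card ≤ A.card := by
    refine le_trans ?_ (Finset.card_filter_le A (fun ω => cyc y (ZMod p) n ω ≠ 0))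
    apply Finset.mul_card_image_le_card_of_maps_to (f := cyc y (ZMod p) n)
    · intro ω hω
      rw [Finset.mem_filter] at hω
      rw [hG0, Finset.mem_erase]
      exact ⟨hω.2, Finset.mem_image_of_mem _ hω.1⟩
    · intro c hc
      rw [hG0, Finset.mem_erase] at hc
      obtain ⟨hc0, hc⟩ := hc
      obtain ⟨ω, hω, rfl⟩ := Finset.mem_image.1 hc
      have hne : PP y L • ω ≠ ω := fun h => hc0 (cyc_fix y (ZMod p) h hn0)
      have hr := cyc_r y (ZMod p) (hA.pow ω hω)
      rw [← Finset.card_pair hne]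
      apply Finset.card_le_card
      intro x hx
      rw [Finset.mem_insert, Finset.mem_singleton] at hx
      rw [Finset.mem_filter, Finset.mem_filter]
      rcases hx with rfl | rfl
      · exact ⟨⟨hA.mem _ hω, by rw [hr]; exact hc0⟩, hr⟩
      · exact ⟨⟨hω, hc0⟩, rfl⟩
  have h4 : A.card ≤ ((Sg y A).filter (fun s => s.2 = (i0 : ZMod L))).card := by
    apply Finset.card_le_card_of_injOn (sh y i0)
    · intro ω hω
      exact Finset.mem_coe.2 (Finset.mem_filter.2 ⟨sh_mem hA hω _, rfl⟩)
    · intro a _ b _ h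
      have := congrArg Prod.fst h
      simpa [sh] using this
  have h5 : ((Sg y A).filter (fun s => s.2 = (i0 : ZMod L) ∧
      ∀ s' ∈ Sg y A, eps y s' = eps y s → s' = s)).card ≤ (A.filter (Lost y A i0)).card := by
    refine (Finset.card_le_card (t := (A.filter (Lost y A i0)).image (sh y i0)) ?_).trans
      Finset.card_image_le
    intro s hs
    rw [Finset.mem_filter] at hs
    obtain ⟨hs, hi, hu⟩ := hs
    obtain ⟨ω, hω, i, hiL, rfl⟩ := mem_Sg.1 hs
    have : i = i0 := by
      have := congrArg ZMod.val hi
      simp only [sh, ZMod.val_natCast] at this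
      rwa [Nat.mod_eq_of_lt hiL, Nat.mod_eq_of_lt hi0] at this
    subst this
    exact Finset.mem_image.2 ⟨ω, Finset.mem_filter.2 ⟨hω, hω, hu⟩, rfl⟩
  have h6 : (G0 ∪ GU).card ≤ G0.card + U.card :=
    (Finset.card_union_le _ _).trans (Nat.add_le_add_left Finset.card_image_le _)
  unfold EA at h2
  omega

open Classical in
/-- what is left after removing the orbit of `ω0` -/
noncomputable def rem (y : ZMod L → α × Bool) (A : Finset Ω) (ω0 : Ω) : Finset Ω :=
  A.filter (fun ω => ∀ k : ℕ, ω ≠ (PP y L) ^ k • ω0)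

theorem mem_rem {A : Finset Ω} {ω0 ω : Ω} :
    ω ∈ rem y A ω0 ↔ ω ∈ A ∧ ∀ k : ℕ, ω ≠ (PP y L) ^ k • ω0 := by
  unfold rem; simp only [Finset.mem_filter]

theorem pow_mul_smul {n : ℕ} {ω : Ω} (h : (PP y L) ^ n • ω = ω) (k : ℕ) :
    (PP y L) ^ (k * n) • ω = ω := by
  induction k with
  | zero => simp
  | succ k ih => rw [add_mul, pow_add, mul_smul, one_mul, h, ih]

theorem rem_inv {n : ℕ} (hn : 1 ≤ n) {A : Finset Ω} (hA : Inv y n A) (ω0 : Ω) :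
    Inv y n (rem y A ω0) := by
  constructor
  · intro ω hω
    rw [mem_rem] at hω ⊢
    refine ⟨hA.mem ω hω.1, fun k hk => hω.2 (n - 1 + k) ?_⟩
    rw [pow_add, mul_smul, ← hk, ← mul_smul, ← pow_succ, Nat.sub_add_cancel hn, hA.pow ω hω.1]
  · intro ω hω
    exact hA.pow ω (mem_rem.1 hω).1

theorem rem_sub {A : Finset Ω} {ω0 : Ω} : rem y A ω0 ⊆ A := fun ω h => (mem_rem.1 h).1

theorem rem_card {A : Finset Ω} {ω0 : Ω} (h : ω0 ∈ A) : (rem y A ω0).card < A.card := by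
  apply Finset.card_lt_card
  rw [Finset.ssubset_iff_of_subset rem_sub]
  exact ⟨ω0, h, fun h' => (mem_rem.1 h').2 0 (by simp)⟩

theorem rem_EA {A : Finset Ω} {ω0 : Ω} {i0 : ℕ} (hi0 : i0 < L) (h : Lost y A i0 ω0) :
    eps y (sh y i0 ω0) ∉ EA y (rem y A ω0) := by
  intro he
  obtain ⟨s, hs, he⟩ := Finset.mem_image.1 he
  obtain ⟨ω, hω, i, hi, rfl⟩ := mem_Sg.1 hs
  have := h.2 _ (mem_Sg.2 ⟨ω, rem_sub hω, i, hi, rfl⟩) he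
  obtain ⟨h1, h2⟩ := sh_eq hi0 this
  have h3 : i / L = 0 := Nat.div_eq_of_lt hi
  rw [h3] at h2
  exact (mem_rem.1 hω).2 0 (by simpa using h2)

/-- the detour around a lost edge avoids that edge, as long as it is shorter than the period -/
theorem detour {n : ℕ} {A : Finset Ω} (hA : Inv y n A) {i0 : ℕ} (hi0 : i0 < L) {ω0 : Ω}
    (h : Lost y A i0 ω0) {d : ℕ} (hd : ∀ k, 0 < k → k < d → (PP y L) ^ k • ω0 ≠ ω0) :
    pe (Wd y (i0 + 1) (d * L - 1)) (PP y (i0 + 1) • ω0) ⊆ (EA y A).erase (eps y (sh y i0 ω0)) := by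
  rw [pe_Wd]
  intro e he
  obtain ⟨j, hj, rfl⟩ := Finset.mem_image.1 he
  rw [Finset.mem_range] at hj
  rw [Finset.mem_erase]
  have hm := sh_mem hA h.1 (i0 + 1 + j)
  refine ⟨fun he => ?_, Finset.mem_image_of_mem _ hm⟩
  have := h.2 _ hm he
  obtain ⟨h1, h2⟩ := sh_eq hi0 this
  set k := (i0 + 1 + j) / L
  refine hd k ?_ ?_ h2
  · rcases Nat.eq_zero_or_pos k with h | h
    · rw [h] at h1; omega
    · exact h
  · by_contra hc
    have : d * L ≤ k * L := Nat.mul_le_mul_right _ (not_lt.1 hc)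
    omega

theorem collapse {n : ℕ} (hn : 1 ≤ n) {A : Finset Ω} (hA : Inv y n A) {i0 : ℕ} (hi0 : i0 < L)
    {ω0 : Ω} (h : Lost y A i0 ω0) {E : Finset (Ω × α)} {U : Finset (List (α × Bool) × Ω)}
    (hSp : Spans y n A E U) (hE : EA y A ⊆ E)
    (hU : ∀ q ∈ U, eps y (sh y i0 ω0) ∉ pe q.1 q.2) :
    (∀ k, 0 < k → k < n → (PP y L) ^ k • ω0 ≠ ω0) ∧
      Spans y n (rem y A ω0) (E.erase (eps y (sh y i0 ω0))) U := by
  set e := eps y (sh y i0 ω0) with he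
  set d := Function.minimalPeriod (fun ω : Ω => PP y L • ω) ω0 with hd
  have hit : ∀ k, (fun ω : Ω => PP y L • ω)^[k] ω0 = (PP y L) ^ k • ω0 := by
    intro k; rw [smul_iterate]
  have hdn : d ∣ n := by
    apply Function.IsPeriodicPt.minimalPeriod_dvd
    unfold Function.IsPeriodicPt Function.IsFixedPt
    rw [hit, hA.pow _ h.1]
  have hdp : 0 < d := Nat.pos_of_dvd_of_pos hdn hn
  have hdfix : (PP y L) ^ d • ω0 = ω0 := by
    rw [← hit]; exact Function.iterate_minimalPeriod
  have hdmin : ∀ k, 0 < k → k < d → (PP y L) ^ k • ω0 ≠ ω0 := by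
    intro k hk hkd hc
    refine Function.not_isPeriodicPt_of_pos_of_lt_minimalPeriod hk.ne' hkd ?_
    unfold Function.IsPeriodicPt Function.IsFixedPt
    rw [hit, hc]
  have hdL : 1 ≤ d * L := Nat.mul_pos hdp (Nat.pos_of_ne_zero (NeZero.ne L))
  have hdet := detour hA hi0 h hdmin
  -- the cycle of the `d`-th power
  have hC : ∀ (K : Type) [Field K], chF K ((PP y L) ^ d) ω0 =
      ch K (Wd y (i0 + 1) (d * L)) (PP y (i0 + 1) • ω0) := by
    intro K _
    rw [ch_eq, ← chF_conj K (PP y (i0 + 1)) ((PP y L) ^ d) ω0 hdfix]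
    congr 1
    rw [eq_comm, eq_mul_inv_iff_mul_eq, mk_Wd, PP_mul_L]
  have hW : Wd y (i0 + 1) (d * L) = y (i0 : ZMod L) :: Wd y (i0 + 1) (d * L - 1) := by
    conv_lhs => rw [← Nat.sub_add_cancel hdL]
    rw [Wd]
    congr 2
    rw [show i0 + 1 + (d * L - 1) = i0 + d * L by omega]
    simp
  have hend : edgeOf (y (i0 : ZMod L)) (FreeGroup.mk (Wd y (i0 + 1) (d * L - 1)) •
      PP y (i0 + 1) • ω0) = e := by
    rw [← mul_smul, mk_Wd, show i0 + 1 + (d * L - 1) = i0 + d * L by omega, PP_mul_L, mul_smul,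
      hdfix]
    rfl
  have heE : e ∈ EA y A := Finset.mem_image_of_mem _ (sh_mem hA h.1 _)
  have hCe : ∀ (K : Type) [Field K], chF K ((PP y L) ^ d) ω0 e ≠ 0 := by
    intro K _
    rw [hC, hW, ch, hend, Finsupp.add_apply, ch_apply_notMem, zero_add]
    · simp [sgn_ne K]
    · intro hc; have := hdet hc; simp at this; exact this.1 he
  have hCs : ∀ (K : Type) [Field K], chF K ((PP y L) ^ d) ω0 ∈
      Finsupp.supported K K (E : Set (Ω × α)) := by
    intro K _
    rw [hC]
    refine Finsupp.supported_mono ?_ (ch_supp K _ _)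
    have : pe (Wd y (i0 + 1) (d * L)) (PP y (i0 + 1) • ω0) ⊆ E := by
      rw [hW, pe, hend]
      apply Finset.insert_subset (hE heE)
      exact (hdet.trans (Finset.erase_subset _ _)).trans hE
    exact_mod_cast this
  -- coefficients of relator cycles at `e`
  have hout : ∀ (K : Type) [Field K], ∀ ω ∈ rem y A ω0, cyc y K n ω e = 0 := by
    intro K _ ω hω
    have h0 : FreeGroup.mk (Wd y 0 (n * L)) = (PP y L) ^ n := by
      have := mk_Wd y 0 (n * L)
      simp only [PP, mul_one, zero_add] at this
      rw [this, PP_pow]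
    unfold cyc
    rw [← h0, ← ch_eq]
    apply ch_apply_notMem
    have h1 : ω = PP y 0 • ω := by simp [PP]
    rw [h1, pe_Wd]
    intro hc
    apply rem_EA hi0 h
    obtain ⟨j, hj, hj2⟩ := Finset.mem_image.1 hc
    rw [← he, ← hj2]
    exact Finset.mem_image_of_mem _ (sh_mem (rem_inv hn hA ω0) hω _)
  have hin : ∀ (K : Type) [Field K], ∀ ω ∈ A, ω ∉ rem y A ω0 → cyc y K n ω = cyc y K n ω0 := by
    intro K _ ω hω hr
    rw [mem_rem] at hr
    push Not at hr
    obtain ⟨k, rfl⟩ := hr hω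
    exact cyc_pow y K (hA.pow _ h.1) k
  obtain ⟨q, hq⟩ := hdn
  have hc0 : ∀ (K : Type) [Field K], cyc y K n ω0 = (q : K) • chF K ((PP y L) ^ d) ω0 := by
    intro K _
    unfold cyc
    rw [← chF_pow K _ _ _ hdfix, ← pow_mul, ← hq]
  -- the quotient is not divisible by any prime
  have hqp : ∀ p : ℕ, p.Prime → ¬ p ∣ q := by
    intro p hp hpq
    have : Fact p.Prime := ⟨hp⟩
    have hpn : p ∣ n := hpq.trans ⟨d, by rw [hq, mul_comm]⟩
    have h1 := hSp p hpn _ (hCs (ZMod p)) (by rw [bd_chF, hdfix, sub_self])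
    have hq0 : (q : ZMod p) = 0 := (ZMod.natCast_eq_zero_iff q p).2 hpq
    have h2 : chF (ZMod p) ((PP y L) ^ d) ω0 ∈
        LinearMap.ker (Finsupp.lapply e : ((Ω × α) →₀ ZMod p) →ₗ[ZMod p] ZMod p) := by
      refine Submodule.span_le.2 ?_ h1
      intro x hx
      rw [Finset.mem_coe, Finset.mem_union, Finset.mem_image, Finset.mem_image] at hx
      rw [SetLike.mem_coe, LinearMap.mem_ker, Finsupp.lapply_apply]
      rcases hx with ⟨ω, hω, rfl⟩ | ⟨u, hu, rfl⟩
      · by_cases hr : ω ∈ rem y A ω0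
        · exact hout _ ω hr
        · rw [hin _ ω hω hr, hc0, hq0, zero_smul]; rfl
      · exact ch_apply_notMem _ _ _ _ (hU u hu)
    exact hCe (ZMod p) h2
  have hq1 : q = 1 := by
    by_contra hne
    obtain ⟨p, hp, hpq⟩ := Nat.exists_prime_and_dvd hne
    exact hqp p hp hpq
  have hdn : d = n := by rw [hq, hq1, mul_one]
  refine ⟨by rw [← hdn]; exact hdmin, ?_⟩
  intro p _ hpn c hc hb
  have h1 := hSp p hpn c (Finsupp.supported_mono (by
    have := Finset.erase_subset e E
    exact_mod_cast this) hc) hb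
  have hce : c e = 0 := by
    rw [Finsupp.mem_supported] at hc
    by_contra hne
    have := hc (Finsupp.mem_support_iff.2 hne)
    simp at this
  set G' := (((rem y A ω0).image (cyc y (ZMod p) n) ∪ U.image (fun q => ch (ZMod p) q.1 q.2) :
        Finset ((Ω × α) →₀ ZMod p)) : Set ((Ω × α) →₀ ZMod p)) with hG'
  have h2 : c ∈ Submodule.span (ZMod p) (insert (cyc y (ZMod p) n ω0) G') := by
    refine Submodule.span_mono ?_ h1
    intro x hx
    rw [Finset.mem_coe, Finset.mem_union, Finset.mem_image] at hx
    rw [Set.mem_insert_iff, hG', Finset.mem_coe, Finset.mem_union]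
    rcases hx with ⟨ω, hω, rfl⟩ | hx
    · by_cases hr : ω ∈ rem y A ω0
      · right; left; exact Finset.mem_image_of_mem _ hr
      · left; exact hin _ ω hω hr
    · right; right; exact hx
  rw [Submodule.mem_span_insert] at h2
  obtain ⟨a, z, hz, hcz⟩ := h2
  have hze : z ∈ LinearMap.ker (Finsupp.lapply e : ((Ω × α) →₀ ZMod p) →ₗ[ZMod p] ZMod p) := by
    refine Submodule.span_le.2 ?_ hz
    intro x hx
    rw [hG', Finset.mem_coe, Finset.mem_union, Finset.mem_image, Finset.mem_image] at hx
    rw [SetLike.mem_coe, LinearMap.mem_ker, Finsupp.lapply_apply]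
    rcases hx with ⟨ω, hω, rfl⟩ | ⟨u, hu, rfl⟩
    · exact hout _ ω hω
    · exact ch_apply_notMem _ _ _ _ (hU u hu)
  have ha : a = 0 := by
    have h3 := DFunLike.congr_fun hcz e
    rw [hce, Finsupp.add_apply, hc0, hq1] at h3
    have h4 : z e = 0 := hze
    rw [h4] at h3
    simp only [Nat.cast_one, one_smul, Finsupp.smul_apply, add_zero, smul_eq_mul] at h3
    rcases mul_eq_zero.1 h3.symm with h5 | h5
    · exact h5
    · exact absurd h5 (hCe (ZMod p))
  rw [hcz, ha, zero_smul, zero_add]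
  exact hz

end Config
end OneRel

set_option linter.unusedSectionVars false
set_option linter.unusedVariables false
set_option linter.unusedSimpArgs false
namespace OneRel

section Disc
variable {α : Type} [DecidableEq α] {Ω : Type} [DecidableEq Ω] [MulAction (FreeGroup α) Ω]
variable {L : ℕ} [NeZero L] {y : ZMod L → α × Bool} {κ : ZMod L → ℕ}

theorem reduce_lemma (hS : Stacking y κ) {n : ℕ} (hn : 2 ≤ n)
    (E0 : Finset (Ω × α)) (U : Finset (List (α × Bool) × Ω)) (hU1 : U.card ≤ 1)
    (hU : ∀ q ∈ U, pe q.1 q.2 ⊆ E0) :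
    ∀ (N : ℕ) (A : Finset Ω), A.card ≤ N → Inv y n A → Spans y n A (EA y A ∪ E0) U →
    ∃ A' : Finset Ω, Inv y n A' ∧ Spans y n A' (EA y A' ∪ E0) U ∧ A'.card ≤ 2 * E0.card := by
  classical
  obtain ⟨imin, himin⟩ := Finite.exists_min κ
  set i0 := imin.val with hi0
  have hi0L : i0 < L := ZMod.val_lt _
  have hmin : ∀ i, κ (i0 : ZMod L) ≤ κ i := by
    intro i; rw [hi0, ZMod.natCast_zmod_val]; exact himin i
  intro N
  induction N with
  | zero =>
    intro A h hA hSp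
    exact ⟨A, hA, hSp, by omega⟩
  | succ N ih =>
    intro A h hA hSp
    by_cases hex : ∃ ω0, Lost y A i0 ω0 ∧ eps y (sh y i0 ω0) ∉ E0
    · obtain ⟨ω0, hl, he⟩ := hex
      obtain ⟨-, h2⟩ := collapse (by omega) hA hi0L hl hSp Finset.subset_union_left
        (fun q hq hc => he (hU q hq hc))
      have h3 := rem_card (y := y) hl.1
      refine ih (rem y A ω0) (by omega) (rem_inv (by omega) hA ω0) (h2.mono y ?_)
      intro e' he'
      rw [Finset.mem_erase]
      rw [Finset.mem_union] at he' ⊢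
      refine ⟨?_, he'.imp (fun h => EA_mono rem_sub h) id⟩
      rintro rfl
      rcases he' with he' | he'
      · exact rem_EA hi0L hl he'
      · exact he he'
    · push Not at hex
      refine ⟨A, hA, hSp, ?_⟩
      rcases A.eq_empty_or_nonempty with rfl | hne
      · simp
      have h1 := count_lemma hS hi0L hmin hn hA hne hSp Finset.subset_union_left
      have h2 : (A.filter (Lost y A i0)).card ≤ E0.card := by
        apply Finset.card_le_card_of_injOn (fun ω => eps y (sh y i0 ω))
        · intro ω hω
          exact hex ω (Finset.mem_filter.1 hω).2
        · intro a ha b hb hab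
          have h1 := (Finset.mem_filter.1 ha).2
          have h2 := (Finset.mem_filter.1 hb).2
          have := h2.2 _ (sh_mem hA h1.1 i0) hab
          simpa [sh] using congrArg Prod.fst this
      omega

/-- relator or its inverse -/
def rho (ρ : FreeGroup α) (b : Bool) : FreeGroup α := if b then ρ else ρ⁻¹

/-- value of a certificate -/
def cval (ρ : FreeGroup α) (c : List (List (α × Bool) × Bool)) : FreeGroup α :=
  (c.map (fun q => FreeGroup.mk q.1 * rho ρ q.2 * (FreeGroup.mk q.1)⁻¹)).prod

def Cert (ρ : FreeGroup α) (B1 B2 : ℕ) (g : FreeGroup α) : Prop :=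
  ∃ c : List (List (α × Bool) × Bool), c.length ≤ B1 ∧ (∀ q ∈ c, q.1.length ≤ B2) ∧ g = cval ρ c

variable {ρ : FreeGroup α}

theorem Cert.one : Cert ρ 0 0 1 := ⟨[], by simp, by simp, by simp [cval]⟩

theorem Cert.mono {B1 B2 B1' B2' : ℕ} {g : FreeGroup α} (h : Cert ρ B1 B2 g) (h1 : B1 ≤ B1')
    (h2 : B2 ≤ B2') : Cert ρ B1' B2' g := by
  obtain ⟨c, a, b, d⟩ := h
  exact ⟨c, a.trans h1, fun q hq => (b q hq).trans h2, d⟩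

theorem Cert.mul {B1 B2 B1' : ℕ} {g g' : FreeGroup α} (h : Cert ρ B1 B2 g)
    (h' : Cert ρ B1' B2 g') : Cert ρ (B1 + B1') B2 (g * g') := by
  obtain ⟨c, a, b, d⟩ := h
  obtain ⟨c', a', b', d'⟩ := h'
  refine ⟨c ++ c', by simp; omega, ?_, by simp [cval, d, d']⟩
  intro q hq
  rcases List.mem_append.1 hq with hq | hq
  · exact b q hq
  · exact b' q hq

theorem Cert.conj {B1 B2 : ℕ} {g : FreeGroup α} (h : Cert ρ B1 B2 g) (w : List (α × Bool)) :
    Cert ρ B1 (w.length + B2) (FreeGroup.mk w * g * (FreeGroup.mk w)⁻¹) := by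
  obtain ⟨c, a, b, rfl⟩ := h
  refine ⟨c.map (fun q => (w ++ q.1, q.2)), by simpa using a, ?_, ?_⟩
  · intro q hq
    obtain ⟨q', hq', rfl⟩ := List.mem_map.1 hq
    simp [b q' hq']
  · clear a b
    induction c with
    | nil => simp only [cval, List.map_nil, List.prod_nil, mul_one, mul_inv_cancel]
    | cons q c ih =>
      unfold cval at ih ⊢
      rw [List.map_cons, List.map_cons, List.map_cons, List.prod_cons, List.prod_cons, ← ih,
        ← FreeGroup.mul_mk]
      group

theorem Cert.mem {B1 B2 : ℕ} {g : FreeGroup α} (h : Cert ρ B1 B2 g) :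
    g ∈ Subgroup.normalClosure {ρ} := by
  obtain ⟨c, -, -, rfl⟩ := h
  unfold cval
  apply Subgroup.list_prod_mem
  intro x hx
  obtain ⟨q, -, rfl⟩ := List.mem_map.1 hx
  have h1 : ρ ∈ Subgroup.normalClosure {ρ} := Subgroup.subset_normalClosure rfl
  apply (Subgroup.normalClosure_normal).conj_mem
  unfold rho
  split_ifs
  · exact h1
  · exact Subgroup.inv_mem _ h1

theorem Cert.single {B2 : ℕ} (w : List (α × Bool)) (b : Bool) (hw : w.length ≤ B2) :
    Cert ρ 1 B2 (FreeGroup.mk w * rho ρ b * (FreeGroup.mk w)⁻¹) :=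
  ⟨[(w, b)], by simp, by simpa using hw, by simp [cval]⟩

theorem mk_invRev (w : List (α × Bool)) :
    FreeGroup.mk (FreeGroup.invRev w) = (FreeGroup.mk w)⁻¹ := FreeGroup.inv_mk.symm

theorem pe_invRev (w : List (α × Bool)) (ν : Ω) :
    pe (FreeGroup.invRev w) (FreeGroup.mk w • ν) = pe w ν := by
  induction w with
  | nil => simp [pe, FreeGroup.invRev]
  | cons x l ih =>
    have h1 : FreeGroup.invRev (x :: l) = FreeGroup.invRev l ++ [linv x] := by
      simp [FreeGroup.invRev, linv]
    have h2 : FreeGroup.mk [linv x] • FreeGroup.mk (x :: l) • ν = FreeGroup.mk l • ν := by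
      have : FreeGroup.mk [linv x] = (lg x)⁻¹ := lg_linv x
      rw [this, mk_cons, mul_smul, inv_smul_smul]
    rw [h1, pe_append, h2, ih]
    simp only [pe, ← FreeGroup.one_eq_mk, one_smul]
    rw [mk_cons, mul_smul, edgeOf_linv]
    ext e; simp [or_comm]

theorem push_lemma {n : ℕ} (hn : 1 ≤ n) {A : Finset Ω} (hA : Inv y n A) {i0 : ℕ} (hi0 : i0 < L)
    {ω0 : Ω} (h : Lost y A i0 ω0) (hmin : ∀ k, 0 < k → k < n → (PP y L) ^ k • ω0 ≠ ω0)
    {E : Finset (Ω × α)} (hE : EA y A ⊆ E) (ν : Ω) (w : List (α × Bool)) (hw : pe w ν ⊆ E) :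
    ∃ w', pe w' ν ⊆ E.erase (eps y (sh y i0 ω0)) ∧ FreeGroup.mk w' • ν = FreeGroup.mk w • ν ∧
      w'.length ≤ (n * L + L) * w.length ∧
      Cert ((PP y L) ^ n) w.length ((n * L + L) * (w.length + 1))
        (FreeGroup.mk w * (FreeGroup.mk w')⁻¹) := by
  have hL : 1 ≤ L := Nat.pos_of_ne_zero (NeZero.ne L)
  have hnL : 1 ≤ n * L := Nat.mul_pos hn hL
  set D := n * L + L with hD
  set e := eps y (sh y i0 ω0) with he
  set Kw := Wd y (i0 + 1) (n * L - 1) with hK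
  set x0 := y (i0 : ZMod L) with hx0
  have hKlen : Kw.length = n * L - 1 := Wd_length _ _ _
  have hdet : pe Kw (PP y (i0 + 1) • ω0) ⊆ E.erase e :=
    (detour hA hi0 h hmin).trans (Finset.erase_subset_erase _ hE)
  have hPs : PP y (i0 + 1) = lg x0 * PP y i0 := rfl
  have hKx : FreeGroup.mk Kw * lg x0 = PP y i0 * (PP y L) ^ n * (PP y i0)⁻¹ := by
    have := mk_Wd y (i0 + 1) (n * L - 1)
    rw [show i0 + 1 + (n * L - 1) = i0 + n * L by omega, PP_mul_L, hPs, ← mul_assoc] at this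
    exact eq_mul_inv_of_mul_eq this
  have hKend : FreeGroup.mk Kw • PP y (i0 + 1) • ω0 = PP y i0 • ω0 := by
    rw [hPs, mul_smul, ← mul_smul, hKx, mul_smul, mul_smul, inv_smul_smul, hA.pow _ h.1]
  have hQ : FreeGroup.mk (Wd y 0 i0) = PP y i0 := by
    have := mk_Wd y 0 i0
    simpa [PP] using this
  -- single letter
  have step : ∀ (x : α × Bool) (μ : Ω), edgeOf x μ ∈ E → ∃ s, pe s μ ⊆ E.erase e ∧
      FreeGroup.mk s • μ = lg x • μ ∧ s.length ≤ n * L ∧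
      Cert ((PP y L) ^ n) 1 D (lg x * (FreeGroup.mk s)⁻¹) := by
    intro x μ hxE
    by_cases hxe : edgeOf x μ = e
    · rcases edgeOf_eq hxe.symm with ⟨h1, h2⟩ | ⟨h1, h2⟩
      · have h1' : x = x0 := h1
        have h2' : μ = PP y i0 • ω0 := h2
        refine ⟨FreeGroup.invRev Kw, ?_, ?_, ?_, ?_⟩
        · rw [h2', ← hKend, pe_invRev]; exact hdet
        · rw [mk_invRev, h2', ← hKend, inv_smul_smul, hKend, h1', ← mul_smul, ← hPs]
        · simp [hKlen]
        · have := Cert.single (ρ := (PP y L) ^ n) (B2 := D) (FreeGroup.invRev Kw ++ Wd y 0 i0) true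
            (by simp [hKlen, Wd_length]; omega)
          convert this using 1
          rw [← FreeGroup.mul_mk, hQ, mk_invRev, h1']
          have h3 : lg x0 = (FreeGroup.mk Kw)⁻¹ * (PP y i0 * (PP y L) ^ n * (PP y i0)⁻¹) := by
            rw [← hKx]; group
          rw [h3]; simp only [rho, if_true]; group
      · have h1' : x = linv x0 := h1
        have h2' : μ = PP y (i0 + 1) • ω0 := by rw [h2, hPs, mul_smul]; rfl
        refine ⟨Kw, ?_, ?_, ?_, ?_⟩
        · rw [h2']; exact hdet
        · rw [h2', hKend, h1', lg_linv, hPs, mul_smul, inv_smul_smul]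
        · omega
        · have := Cert.single (ρ := (PP y L) ^ n) (B2 := D) (Wd y 0 i0) false
            (by simp [Wd_length]; omega)
          convert this using 1
          rw [hQ, h1', lg_linv, ← mul_inv_rev, hKx]
          simp only [rho]; simp [mul_assoc]
    · refine ⟨[x], ?_, rfl, by simpa using hnL, ?_⟩
      · simp only [pe, ← FreeGroup.one_eq_mk, one_smul]
        intro e' he'
        simp at he'
        rw [he', Finset.mem_erase]; exact ⟨hxe, hxE⟩
      · have : lg x * (FreeGroup.mk [x])⁻¹ = 1 := mul_inv_cancel _
        rw [this]
        exact Cert.one.mono (by omega) (by omega)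
  induction w with
  | nil =>
    exact ⟨[], by simp [pe], rfl, by simp, by rw [mul_inv_cancel]; exact Cert.one.mono le_rfl (Nat.zero_le _)⟩
  | cons x l ih =>
    obtain ⟨w', h1, h2, h3, h4⟩ := ih ((Finset.subset_insert _ _).trans hw)
    obtain ⟨s, g1, g2, g3, g4⟩ := step x (FreeGroup.mk l • ν) (hw (Finset.mem_insert_self _ _))
    refine ⟨s ++ w', ?_, ?_, ?_, ?_⟩
    · rw [pe_append, h2]
      exact Finset.union_subset g1 h1
    · rw [← FreeGroup.mul_mk, mul_smul, h2, g2, mk_cons, mul_smul]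
    · simp only [List.length_append, List.length_cons]
      rw [mul_add, mul_one]; omega
    · have g5 := (h4.conj s).mono le_rfl (B2' := D * (l.length + 1 + 1)) (by
        rw [mul_add D (l.length + 1)]; omega)
      have g6 := (g4.mono le_rfl (B2' := D * (l.length + 1 + 1)) (by
        exact Nat.le_mul_of_pos_right _ (by omega))).mul g5
      rw [List.length_cons]
      refine (g6.mono (by omega) le_rfl : Cert _ (l.length + 1) _ _) |> fun h => ?_
      convert h using 1
      rw [mk_cons, ← FreeGroup.mul_mk]; group

theorem disc_lemma (hS : Stacking y κ) {n : ℕ} (hn : 2 ≤ n) :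
    ∀ (k : ℕ) (A : Finset Ω) (E : Finset (Ω × α)), A.card ≤ k → Inv y n A → EA y A ⊆ E →
    Spans y n A E ∅ → ∀ (ν : Ω) (w : List (α × Bool)), pe w ν ⊆ E → FreeGroup.mk w • ν = ν →
    Cert ((PP y L) ^ n) (k * ((n * L + L) ^ k * (w.length + 1)))
      (k * ((n * L + L) ^ k * (w.length + 1))) (FreeGroup.mk w) := by
  classical
  have hL : 1 ≤ L := Nat.pos_of_ne_zero (NeZero.ne L)
  obtain ⟨imin, himin⟩ := Finite.exists_min κ
  set i0 := imin.val with hi0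
  have hi0L : i0 < L := ZMod.val_lt _
  have hmin : ∀ i, κ (i0 : ZMod L) ≤ κ i := by
    intro i; rw [hi0, ZMod.natCast_zmod_val]; exact himin i
  have base : ∀ (E : Finset (Ω × α)), Spans y n (∅ : Finset Ω) E ∅ → ∀ (ν : Ω)
      (w : List (α × Bool)), pe w ν ⊆ E → FreeGroup.mk w • ν = ν → FreeGroup.mk w = 1 := by
    intro E hSp ν w hw hcl
    obtain ⟨p, hp, hpn⟩ := Nat.exists_prime_and_dvd (show n ≠ 1 by omega)
    have : Fact p.Prime := ⟨hp⟩
    apply forest_closed (ZMod p) E _ w ν hw hcl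
    intro c hc hb
    have := hSp p hpn c hc hb
    simpa using this
  set D := n * L + L with hD
  have hD1 : 1 ≤ D := by omega
  intro k
  induction k with
  | zero =>
    intro A E hA hI hE hSp ν w hw hcl
    have : A = ∅ := by simpa using hA
    subst this
    rw [base E hSp ν w hw hcl]
    exact Cert.one.mono (Nat.zero_le _) (Nat.zero_le _)
  | succ k ih =>
    intro A E hA hI hE hSp ν w hw hcl
    rcases A.eq_empty_or_nonempty with rfl | hne
    · rw [base E hSp ν w hw hcl]
      exact Cert.one.mono (Nat.zero_le _) (Nat.zero_le _)
    have h1 := count_lemma hS hi0L hmin hn hI hne hSp hE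
    have h2 : (A.filter (Lost y A i0)).Nonempty := by
      rw [← Finset.card_pos]
      simp at h1; omega
    obtain ⟨ω0, hω0⟩ := h2
    have hl : Lost y A i0 ω0 := (Finset.mem_filter.1 hω0).2
    obtain ⟨h3, h4⟩ := collapse (by omega) hI hi0L hl hSp hE (by simp)
    obtain ⟨w', g1, g2, g3, g4⟩ := push_lemma (by omega) hI hi0L hl h3 hE ν w hw
    rw [← hD] at g3 g4
    have hc := rem_card (y := y) hl.1
    have g5 := ih (rem y A ω0) _ (by omega) (rem_inv (by omega) hI ω0) (by
      intro e he
      rw [Finset.mem_erase]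
      refine ⟨?_, hE (EA_mono rem_sub he)⟩
      rintro rfl
      exact rem_EA hi0L hl he) h4 ν w' g1 (by rw [g2, hcl])
    have e1 : D ^ k * (w'.length + 1) ≤ D ^ (k + 1) * (w.length + 1) := by
      rw [pow_succ, mul_assoc]
      apply Nat.mul_le_mul_left
      rw [mul_add, mul_one]; omega
    have e2 : D * (w.length + 1) ≤ D ^ (k + 1) * (w.length + 1) := by
      apply Nat.mul_le_mul_right
      rw [pow_succ]
      exact Nat.le_mul_of_pos_left _ (Nat.pow_pos (by omega))
    have e3 : k * (D ^ k * (w'.length + 1)) ≤ k * (D ^ (k + 1) * (w.length + 1)) :=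
      Nat.mul_le_mul_left _ e1
    have e4 : w.length ≤ D * (w.length + 1) :=
      (Nat.le_succ _).trans (Nat.le_mul_of_pos_left _ hD1)
    have e5 : (k + 1) * (D ^ (k + 1) * (w.length + 1)) =
      k * (D ^ (k + 1) * (w.length + 1)) + D ^ (k + 1) * (w.length + 1) := by ring
    have g6 := (g4.mono le_rfl (B2' := (k + 1) * (D ^ (k + 1) * (w.length + 1))) (by omega)).mul
      (g5.mono le_rfl (B2' := (k + 1) * (D ^ (k + 1) * (w.length + 1))) (by omega))
    rw [inv_mul_cancel_right] at g6
    exact g6.mono (by omega) le_rfl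

end Disc
end OneRel

set_option linter.unusedSectionVars false
set_option linter.unusedVariables false
set_option linter.unusedSimpArgs false
namespace OneRel

section Conf
variable {α : Type} [DecidableEq α] {Ω : Type} [DecidableEq Ω] [MulAction (FreeGroup α) Ω]
variable {L : ℕ} [NeZero L] {y : ZMod L → α × Bool} {κ : ZMod L → ℕ}

/-- generating set of the stabiliser -/
def genSet (ρ : FreeGroup α) (gens : Finset (FreeGroup α)) (Uw : Finset (List (α × Bool))) :
    Set (FreeGroup α) :=
  (fun g => g⁻¹ * ρ * g) '' (gens : Set (FreeGroup α)) ∪ FreeGroup.mk '' (Uw : Set (List (α × Bool)))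

theorem relator_span (K : Type) [Field K] [DecidableEq K] {n : ℕ} (b : Ω) (gens : Finset (FreeGroup α))
    (Uw : Finset (List (α × Bool))) (A : Finset Ω)
    (hA : ∀ g ∈ gens, g • b ∈ A)
    (htrans : ∀ ν : Ω, ∃ g : FreeGroup α, g • b = ν)
    (hstab : ∀ h : FreeGroup α, h • b = b ↔ h ∈ Subgroup.closure (genSet ((PP y L) ^ n) gens Uw))
    (c : (Ω × α) →₀ K) (hc : bd K c = 0) :
    c ∈ Submodule.span K (((A.image (cyc y K n) ∪
      (Uw.image (fun l => (l, b))).image (fun q => ch K q.1 q.2) : Finset ((Ω × α) →₀ K))) :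
        Set ((Ω × α) →₀ K)) := by
  set S := Submodule.span K (((A.image (cyc y K n) ∪
      (Uw.image (fun l => (l, b))).image (fun q => ch K q.1 q.2) : Finset ((Ω × α) →₀ K))) :
        Set ((Ω × α) →₀ K)) with hSdef
  have h1 : ∀ h ∈ Subgroup.closure (genSet ((PP y L) ^ n) gens Uw), chF K h b ∈ S := by
    intro h hh
    induction hh using Subgroup.closure_induction with
    | mem x hx =>
      have hxb : x • b = b := (hstab x).2 (Subgroup.subset_closure hx)
      rcases hx with ⟨g, hg, rfl⟩ | ⟨l, hl, rfl⟩
      · apply Submodule.subset_span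
        have : ((PP y L) ^ n) • g • b = g • b := by
          have := hxb
          simp only [mul_smul] at this
          rwa [inv_smul_eq_iff] at this
        have h2 := chF_conj K g⁻¹ ((PP y L) ^ n) (g • b) this
        rw [inv_inv, inv_smul_smul] at h2
        simp only [Finset.coe_union, Finset.coe_image]
        left
        exact ⟨g • b, hA g hg, h2.symm⟩
      · apply Submodule.subset_span
        simp only [Finset.coe_union, Finset.coe_image]
        right
        exact ⟨(l, b), ⟨l, hl, rfl⟩, ch_eq K l b⟩
    | one => rw [chF_one]; exact S.zero_mem
    | mul x z hx hz ihx ihz =>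
      rw [chF_mul, (hstab z).2 hz]
      exact S.add_mem ihx ihz
    | inv x hx ih =>
      rw [chF_inv, inv_smul_eq_iff.2 ((hstab x).2 hx).symm]
      exact S.neg_mem ih
  choose p hp using htrans
  let Φ : (Ω →₀ K) →ₗ[K] ((Ω × α) →₀ K) := Finsupp.lift _ K Ω (fun ν => chF K (p ν) b)
  have hΦ : ∀ ν, Φ (Finsupp.single ν 1) = chF K (p ν) b := by
    intro ν; simp [Φ]
  have key : ∀ c : (Ω × α) →₀ K, c - Φ (bd K c) ∈ S := by
    intro c
    induction c using Finsupp.induction_linear with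
    | zero => simp
    | add f g hf hg =>
      have : f + g - Φ (bd K (f + g)) = (f - Φ (bd K f)) + (g - Φ (bd K g)) := by
        simp only [map_add]; abel
      rw [this]; exact S.add_mem hf hg
    | single e a =>
      have e1 : (Finsupp.single e a : (Ω × α) →₀ K) = a • Finsupp.single e 1 := by simp
      rw [e1, map_smul, map_smul, ← smul_sub]
      apply S.smul_mem
      rw [bd_single]
      simp only [one_smul, map_sub, map_smul, hΦ]
      have hb : ((p (etgt e))⁻¹ * FreeGroup.of e.2 * p (esrc e)) • b = b := by
        rw [mul_smul, mul_smul, hp, inv_smul_eq_iff, hp]; rfl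
      have h3 := h1 _ ((hstab _).1 hb)
      have h4 : chF K (FreeGroup.of e.2) (esrc e) = Finsupp.single e 1 := by
        have := ch_eq K [(e.2, true)] (esrc e)
        rw [show FreeGroup.mk [(e.2, true)] = FreeGroup.of e.2 from rfl] at this
        rw [← this]
        simp [ch, edgeOf, sgn, esrc, ← FreeGroup.one_eq_mk]
      rw [chF_mul, chF_mul, chF_inv, hp] at h3
      have h5 : FreeGroup.of e.2 • esrc e = etgt e := rfl
      have h6 : (p (etgt e))⁻¹ • etgt e = b := by rw [inv_smul_eq_iff, hp]
      rw [h5, h6, h4] at h3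
      convert h3 using 1
      abel
  have := key c
  rwa [hc, map_zero, sub_zero] at this

theorem exists_conf {n : ℕ} (hn : 1 ≤ n) (b : Ω) (gens : Finset (FreeGroup α))
    (Uw : Finset (List (α × Bool)))
    (htrans : ∀ ν : Ω, ∃ g : FreeGroup α, g • b = ν)
    (hstab : ∀ h : FreeGroup α, h • b = b ↔ h ∈ Subgroup.closure (genSet ((PP y L) ^ n) gens Uw)) :
    ∃ A : Finset Ω, Inv y n A ∧ ∀ E, Spans y n A E (Uw.image (fun l => (l, b))) := by
  have hfix : ∀ g ∈ gens, ((PP y L) ^ n) • g • b = g • b := by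
    intro g hg
    have : (g⁻¹ * (PP y L) ^ n * g) • b = b :=
      (hstab _).2 (Subgroup.subset_closure (Or.inl ⟨g, hg, rfl⟩))
    simp only [mul_smul] at this
    rwa [inv_smul_eq_iff] at this
  refine ⟨(gens ×ˢ Finset.range n).image (fun q => (PP y L) ^ q.2 • q.1 • b), ⟨?_, ?_⟩, ?_⟩
  · intro ω hω
    obtain ⟨⟨g, k⟩, hq, rfl⟩ := Finset.mem_image.1 hω
    rw [Finset.mem_product, Finset.mem_range] at hq
    simp only at hq ⊢
    rw [← mul_smul, ← pow_succ']
    by_cases h : k + 1 < n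
    · exact Finset.mem_image.2 ⟨(g, k + 1), by simp [hq.1, h], rfl⟩
    · have : k + 1 = n := by omega
      rw [this, hfix g hq.1]
      exact Finset.mem_image.2 ⟨(g, 0), by simp [hq.1]; omega, by simp⟩
  · intro ω hω
    obtain ⟨⟨g, k⟩, hq, rfl⟩ := Finset.mem_image.1 hω
    rw [Finset.mem_product, Finset.mem_range] at hq
    simp only at hq ⊢
    rw [← mul_smul, ← pow_add, add_comm, pow_add, mul_smul, hfix g hq.1]
  · intro E p _ hp c hc hbd
    refine relator_span (ZMod p) b gens Uw _ ?_ htrans hstab c hbd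
    intro g hg
    exact Finset.mem_image.2 ⟨(g, 0), by simp [hg]; omega, by simp⟩

end Conf
end OneRel

set_option linter.unusedSectionVars false
set_option linter.unusedVariables false
set_option linter.unusedSimpArgs false
namespace OneRel

section Ann
variable {α : Type} [DecidableEq α] {Ω : Type} [DecidableEq Ω] [MulAction (FreeGroup α) Ω]
variable {L : ℕ} [NeZero L] {y : ZMod L → α × Bool} {κ : ZMod L → ℕ}

theorem exists_gens (ρ : FreeGroup α) {x : FreeGroup α} (hx : x ∈ Subgroup.normalClosure {ρ}) :
    ∃ gens : Finset (FreeGroup α), x ∈ Subgroup.closure (genSet ρ gens ∅) := by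
  have mono : ∀ {s t : Finset (FreeGroup α)}, s ⊆ t →
      Subgroup.closure (genSet ρ s ∅) ≤ Subgroup.closure (genSet ρ t ∅) := by
    intro s t h
    apply Subgroup.closure_mono
    apply Set.union_subset_union_left
    apply Set.image_mono
    exact_mod_cast h
  unfold Subgroup.normalClosure at hx
  induction hx using Subgroup.closure_induction with
  | mem x hx =>
    rw [Group.mem_conjugatesOfSet_iff] at hx
    obtain ⟨a, ha, hc⟩ := hx
    rw [Set.mem_singleton_iff] at ha
    subst ha
    rw [isConj_iff] at hc
    obtain ⟨c, rfl⟩ := hc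
    exact ⟨{c⁻¹}, Subgroup.subset_closure (Or.inl ⟨c⁻¹, by simp, by simp⟩)⟩
  | one => exact ⟨∅, Subgroup.one_mem _⟩
  | mul x z _ _ hx hz =>
    obtain ⟨s, hs⟩ := hx
    obtain ⟨t, ht⟩ := hz
    exact ⟨s ∪ t, Subgroup.mul_mem _ (mono Finset.subset_union_left hs)
      (mono Finset.subset_union_right ht)⟩
  | inv x _ hx =>
    obtain ⟨s, hs⟩ := hx
    exact ⟨s, Subgroup.inv_mem _ hs⟩

theorem quot_trans (H : Subgroup (FreeGroup α)) (ν : FreeGroup α ⧸ H) :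
    ∃ g : FreeGroup α, g • ((1 : FreeGroup α) : FreeGroup α ⧸ H) = ν := by
  obtain ⟨g, rfl⟩ := QuotientGroup.mk_surjective ν
  exact ⟨g, by rw [MulAction.Quotient.smul_coe]; simp⟩

theorem quot_stab (H : Subgroup (FreeGroup α)) (h : FreeGroup α) :
    h • ((1 : FreeGroup α) : FreeGroup α ⧸ H) = ((1 : FreeGroup α) : FreeGroup α ⧸ H) ↔ h ∈ H := by
  rw [← MulAction.mem_stabilizer_iff, MulAction.stabilizer_quotient]

theorem word_cert (hS : Stacking y κ) {n : ℕ} (hn : 2 ≤ n) (w : List (α × Bool))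
    (hw : FreeGroup.mk w ∈ Subgroup.normalClosure {(PP y L) ^ n}) :
    Cert ((PP y L) ^ n) (2 * w.length * ((n * L + L) ^ (2 * w.length) * (w.length + 1)))
      (2 * w.length * ((n * L + L) ^ (2 * w.length) * (w.length + 1))) (FreeGroup.mk w) := by
  classical
  obtain ⟨gens, hg⟩ := exists_gens _ hw
  set H := Subgroup.closure (genSet ((PP y L) ^ n) gens ∅) with hH
  set b : FreeGroup α ⧸ H := ((1 : FreeGroup α) : FreeGroup α ⧸ H) with hb
  obtain ⟨A, hA, hSp⟩ := exists_conf (y := y) (n := n) (by omega) b gens ∅ (quot_trans H) (quot_stab H)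
  rw [Finset.image_empty] at hSp
  obtain ⟨A', hA', hSp', hc⟩ := reduce_lemma hS hn (pe w b) ∅ (by simp) (by simp) A.card A le_rfl hA
    (hSp _)
  have := pe_card w b
  exact disc_lemma hS hn (2 * w.length) A' (EA y A' ∪ pe w b) (by omega) hA'
    Finset.subset_union_left hSp' b w Finset.subset_union_right ((quot_stab H _).2 hg)

theorem short_path (E : Finset (Ω × α)) (b : Ω) (l : List (α × Bool)) (hl : pe l b ⊆ E) :
    ∃ l' : List (α × Bool), FreeGroup.mk l' • b = FreeGroup.mk l • b ∧ l'.length ≤ 2 * E.card := by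
  induction hN : l.length using Nat.strong_induction_on generalizing l with
  | _ N ih =>
    by_cases hinj : Set.InjOn (fun i => FreeGroup.mk (l.drop i) • b) (Finset.range l.length : Set ℕ)
    · refine ⟨l, rfl, ?_⟩
      have h1 := Finset.card_le_card_of_injOn (s := Finset.range l.length)
        (t := E.image esrc ∪ E.image etgt) _ ?_ hinj
      · rw [Finset.card_range] at h1
        have := Finset.card_union_le (E.image esrc) (E.image etgt)
        have h2 : (E.image esrc).card ≤ E.card := Finset.card_image_le
        have h3 : (E.image etgt).card ≤ E.card := Finset.card_image_le
        omega
      · intro i hi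
        have hi' : i < l.length := by simpa using hi
        have hd : l.drop i = l[i] :: l.drop (i + 1) := List.drop_eq_getElem_cons hi'
        have hmem : edgeOf l[i] (FreeGroup.mk (l.drop (i + 1)) • b) ∈ E := by
          have hl' : pe (l.take i ++ l.drop i) b ⊆ E := by rw [List.take_append_drop]; exact hl
          apply hl'
          rw [pe_append]
          apply Finset.mem_union_right
          rw [hd]
          simp [pe]
        simp only [Finset.coe_union, Finset.coe_image]
        rw [hd, mk_cons, mul_smul]
        rcases hx : l[i].2 with _ | _
        · left
          refine ⟨_, hmem, ?_⟩
          rw [esrc_edgeOf]; simp [hx]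
        · right
          refine ⟨_, hmem, ?_⟩
          rw [etgt_edgeOf]; simp [hx]
    · have : ∃ i j, i < j ∧ j < l.length ∧
          FreeGroup.mk (l.drop i) • b = FreeGroup.mk (l.drop j) • b := by
        unfold Set.InjOn at hinj
        push Not at hinj
        obtain ⟨i, hi, j, hj, h, hne⟩ := hinj
        simp only [Finset.coe_range, Set.mem_Iio] at hi hj
        rcases lt_or_gt_of_ne hne with h' | h'
        · exact ⟨i, j, h', hj, h⟩
        · exact ⟨j, i, h', hi, h.symm⟩
      obtain ⟨i, j, hij, hj, h⟩ := this
      have hti : l = l.take i ++ l.drop i := (List.take_append_drop i l).symm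
      have htj : l = l.take j ++ l.drop j := (List.take_append_drop j l).symm
      obtain ⟨l', h1, h2⟩ := ih (l.take i ++ l.drop j).length (by simp; omega) (l.take i ++ l.drop j)
        (by
          rw [pe_append, ← h]
          refine Finset.union_subset ?_ ?_
          · refine subset_trans ?_ hl
            conv_rhs => rw [hti, pe_append]
            exact Finset.subset_union_left
          · refine subset_trans ?_ hl
            conv_rhs => rw [htj, pe_append]
            exact Finset.subset_union_right) rfl
      refine ⟨l', ?_, h2⟩
      rw [h1, ← FreeGroup.mul_mk, mul_smul, ← h, ← mul_smul, FreeGroup.mul_mk, ← hti]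

def Reach (E : Finset (Ω × α)) (b ν : Ω) : Prop :=
  ∃ l : List (α × Bool), pe l b ⊆ E ∧ FreeGroup.mk l • b = ν

theorem Reach.step {E : Finset (Ω × α)} {b ν : Ω} {x : α × Bool} (h : Reach E b ν)
    (hx : edgeOf x ν ∈ E) : Reach E b (lg x • ν) := by
  obtain ⟨l, h1, rfl⟩ := h
  refine ⟨x :: l, ?_, by rw [mk_cons, mul_smul]⟩
  simp only [pe]
  exact Finset.insert_subset hx h1

theorem Reach.iff {E : Finset (Ω × α)} {b ν : Ω} {x : α × Bool}
    (hx : edgeOf x ν ∈ E) : Reach E b (lg x • ν) ↔ Reach E b ν := by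
  refine ⟨fun h => ?_, fun h => h.step hx⟩
  have := h.step (x := linv x) (by rwa [edgeOf_linv])
  rwa [lg_linv, inv_smul_smul] at this

theorem Reach.path {E : Finset (Ω × α)} {b ν : Ω} (w : List (α × Bool)) (hw : pe w ν ⊆ E) :
    (Reach E b (FreeGroup.mk w • ν) ↔ Reach E b ν) ∧
    ∀ e ∈ pe w ν, (Reach E b (esrc e) ↔ Reach E b ν) := by
  induction w with
  | nil => simp [pe, ← FreeGroup.one_eq_mk]
  | cons x w ih =>
    simp only [pe, Finset.insert_subset_iff] at hw
    obtain ⟨h1, h2⟩ := ih hw.2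
    have h3 := Reach.iff (b := b) hw.1
    refine ⟨by rw [mk_cons, mul_smul, h3, h1], ?_⟩
    intro e he
    simp only [pe, Finset.mem_insert] at he
    rcases he with rfl | he
    · rw [esrc_edgeOf]
      split_ifs
      · exact h1
      · rw [h3, h1]
    · exact h2 e he

end Ann
end OneRel

set_option linter.unusedSectionVars false
set_option linter.unusedVariables false
set_option linter.unusedSimpArgs false
namespace OneRel

section Ann2
variable {α : Type} [DecidableEq α] {Ω : Type} [DecidableEq Ω] [MulAction (FreeGroup α) Ω]
variable {L : ℕ} [NeZero L] {y : ZMod L → α × Bool} {κ : ZMod L → ℕ}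

theorem mk_Wd0 (t : ℕ) : FreeGroup.mk (Wd y 0 t) = PP y t := by
  have := mk_Wd y 0 t
  rwa [PP, mul_one, zero_add] at this

theorem pe_Wd0 {n : ℕ} {A : Finset Ω} (hA : Inv y n A) {ω : Ω} (hω : ω ∈ A) (t : ℕ) :
    pe (Wd y 0 t) ω ⊆ EA y A := by
  have h := pe_Wd (y := y) 0 t ω
  rw [PP, one_smul] at h
  rw [h]
  intro e he
  obtain ⟨j, -, rfl⟩ := Finset.mem_image.1 he
  exact Finset.mem_image_of_mem _ (sh_mem hA hω _)

theorem filt_zero {K : Type} [Field K] (P : Ω × α → Prop) [DecidablePred P] (l : List (α × Bool))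
    (ν : Ω) (h : ∀ e ∈ pe l ν, ¬ P e) : Finsupp.filter P (ch K l ν) = 0 := by
  rw [Finsupp.filter_eq_zero_iff]
  intro e he
  apply ch_apply_notMem
  exact fun h' => h e h' he

theorem filt_self {K : Type} [Field K] (P : Ω × α → Prop) [DecidablePred P] (l : List (α × Bool))
    (ν : Ω) (h : ∀ e ∈ pe l ν, P e) : Finsupp.filter P (ch K l ν) = ch K l ν := by
  rw [Finsupp.filter_eq_self_iff]
  intro e he
  by_contra hP
  exact he (ch_apply_notMem K l ν e (fun h' => hP (h e h')))

theorem cyc_ch (K : Type) [Field K] (n : ℕ) (ω : Ω) : cyc y K n ω = ch K (Wd y 0 (n * L)) ω := by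
  rw [ch_eq, mk_Wd0, ← PP_pow]; rfl

theorem unreach (hS : Stacking y κ) {n : ℕ} (hn : 2 ≤ n) (b ν : Ω) (u v : List (α × Bool))
    (A : Finset Ω) (E : Finset (Ω × α)) (hA : Inv y n A) (hEA : EA y A ⊆ E)
    (hSp : Spans y n A E {(u, b)}) (hu : pe u b ⊆ E) (hv : pe v ν ⊆ E)
    (hvν : FreeGroup.mk v • ν = ν) (hR : ¬ Reach E b ν) :
    FreeGroup.mk v ∈ Subgroup.normalClosure {(PP y L) ^ n} := by
  classical
  set P : Ω × α → Prop := fun e => ¬ Reach E b (esrc e) with hP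
  set E2 := E.filter P with hE2
  set A2 := A.filter (fun ω => ¬ Reach E b ω) with hA2
  have hRb : Reach E b b := ⟨[], by simp [pe], by simp [← FreeGroup.one_eq_mk]⟩
  have hW : ∀ ω ∈ A, ∀ t, pe (Wd y 0 t) ω ⊆ E := fun ω hω t => (pe_Wd0 hA hω t).trans hEA
  have hInv2 : Inv y n A2 := by
    constructor
    · intro ω hω
      rw [hA2, Finset.mem_filter] at hω ⊢
      refine ⟨hA.mem ω hω.1, ?_⟩
      have := (Reach.path (b := b) _ (hW ω hω.1 L)).1
      rw [mk_Wd0] at this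
      rw [this]; exact hω.2
    · intro ω hω
      exact hA.pow ω (Finset.mem_filter.1 hω).1
  have hEA2 : EA y A2 ⊆ E2 := by
    intro e he
    obtain ⟨s, hs, rfl⟩ := Finset.mem_image.1 he
    obtain ⟨ω, hω, i, hi, rfl⟩ := mem_Sg.1 hs
    rw [hA2, Finset.mem_filter] at hω
    have hm : eps y (sh y i ω) ∈ pe (Wd y 0 (i + 1)) ω := by
      have h := pe_Wd (y := y) 0 (i + 1) ω
      rw [PP, one_smul] at h
      rw [h]
      exact Finset.mem_image.2 ⟨i, by simp, by simp⟩
    rw [hE2, Finset.mem_filter]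
    refine ⟨hW ω hω.1 _ hm, ?_⟩
    rw [hP]
    simp only
    rw [(Reach.path (b := b) _ (hW ω hω.1 (i + 1))).2 _ hm]
    exact hω.2
  have hSp2 : Spans y n A2 E2 ∅ := by
    intro p _ hp c hc hbd
    have h1 := hSp p hp c (Finsupp.supported_mono (by
      intro e he; exact (Finset.mem_filter.1 he).1) hc) hbd
    have hcf : Finsupp.filter P c = c := by
      rw [Finsupp.filter_eq_self_iff]
      intro e he
      have : e ∈ E2 := hc (Finsupp.mem_support_iff.2 he)
      exact (Finset.mem_filter.1 this).2
    have key : ∀ d ∈ Submodule.span (ZMod p)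
      (((A.image (cyc y (ZMod p) n) ∪ ({(u, b)} : Finset (List (α × Bool) × Ω)).image
        (fun q => ch (ZMod p) q.1 q.2) :
        Finset ((Ω × α) →₀ ZMod p))) : Set ((Ω × α) →₀ ZMod p)),
        Finsupp.filter P d ∈ Submodule.span (ZMod p)
      (((A2.image (cyc y (ZMod p) n) ∪ (∅ : Finset (List (α × Bool) × Ω)).image
        (fun q => ch (ZMod p) q.1 q.2) :
        Finset ((Ω × α) →₀ ZMod p))) : Set ((Ω × α) →₀ ZMod p)) := by
      intro d hd
      induction hd using Submodule.span_induction with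
      | mem d hd =>
        simp only [Finset.coe_union, Finset.coe_image, Finset.coe_singleton,
          Set.image_singleton] at hd
        rcases hd with ⟨ω, hω, rfl⟩ | rfl
        · have hpath := (Reach.path (b := b) _ (hW ω hω (n * L))).2
          by_cases hRω : Reach E b ω
          · rw [cyc_ch, filt_zero]
            · exact Submodule.zero_mem _
            · intro e he
              simp only [hP, not_not]
              exact (hpath e he).2 hRω
          · apply Submodule.subset_span
            simp only [Finset.coe_union, Finset.coe_image]
            left
            refine ⟨ω, ?_, ?_⟩
            · exact Finset.mem_coe.2 (Finset.mem_filter.2 ⟨hω, hRω⟩)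
            · rw [cyc_ch, filt_self]
              intro e he
              simp only [hP]
              rw [hpath e he]; exact hRω
        · rw [filt_zero]
          · exact Submodule.zero_mem _
          · intro e he
            simp only [hP, not_not]
            exact ((Reach.path (b := b) _ hu).2 e he).2 hRb
      | zero => rw [Finsupp.filter_zero]; exact Submodule.zero_mem _
      | add x z _ _ hx hz => rw [Finsupp.filter_add]; exact Submodule.add_mem _ hx hz
      | smul a x _ hx => rw [Finsupp.filter_smul]; exact Submodule.smul_mem _ _ hx
    have := key c h1
    rwa [hcf] at this
  refine (disc_lemma hS hn A2.card A2 E2 le_rfl hInv2 hEA2 hSp2 ν v ?_ hvν).mem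
  intro e he
  rw [hE2, Finset.mem_filter]
  refine ⟨hv he, ?_⟩
  simp only [hP]
  rw [(Reach.path (b := b) _ hv).2 e he]
  exact hR

theorem conj_short (hS : Stacking y κ) {n : ℕ} (hn : 2 ≤ n) (u v : List (α × Bool))
    (g : FreeGroup α)
    (hg : g⁻¹ * FreeGroup.mk v * g * (FreeGroup.mk u)⁻¹ ∈ Subgroup.normalClosure {(PP y L) ^ n}) :
    ∃ l : List (α × Bool), l.length ≤ 2 * (2 * L + 1) * (u.length + v.length) ∧
      (FreeGroup.mk l)⁻¹ * FreeGroup.mk v * FreeGroup.mk l * (FreeGroup.mk u)⁻¹ ∈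
        Subgroup.normalClosure {(PP y L) ^ n} := by
  classical
  obtain ⟨gens, hgens⟩ := exists_gens _ hg
  set N := Subgroup.normalClosure {(PP y L) ^ n} with hN
  set H := Subgroup.closure (genSet ((PP y L) ^ n) gens {u}) with hH
  set b : FreeGroup α ⧸ H := ((1 : FreeGroup α) : FreeGroup α ⧸ H) with hb
  have huH : FreeGroup.mk u ∈ H := Subgroup.subset_closure (Or.inr ⟨u, by simp, rfl⟩)
  have hxH : g⁻¹ * FreeGroup.mk v * g * (FreeGroup.mk u)⁻¹ ∈ H := by
    refine Subgroup.closure_mono ?_ hgens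
    intro x hx
    rcases hx with hx | hx
    · exact Or.inl hx
    · simp at hx
  have hvH : g⁻¹ * FreeGroup.mk v * g ∈ H := by
    have := H.mul_mem hxH huH
    rwa [inv_mul_cancel_right] at this
  have hvν : FreeGroup.mk v • g • b = g • b := by
    have := (quot_stab H _).2 hvH
    rw [mul_smul, mul_smul, inv_smul_eq_iff] at this
    exact this
  obtain ⟨A, hA, hSp⟩ := exists_conf (y := y) (n := n) (by omega) b gens {u} (quot_trans H) (quot_stab H)
  rw [Finset.image_singleton] at hSp
  set E0 := pe u b ∪ pe v (g • b) with hE0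
  have hE0c : E0.card ≤ u.length + v.length :=
    (Finset.card_union_le _ _).trans (add_le_add (pe_card _ _) (pe_card _ _))
  obtain ⟨A', hA', hSp', hc⟩ := reduce_lemma hS hn E0 {(u, b)} (by simp)
    (by intro q hq; rw [Finset.mem_singleton] at hq; subst hq; exact Finset.subset_union_left)
    A.card A le_rfl hA (hSp _)
  by_cases hR : Reach (EA y A' ∪ E0) b (g • b)
  · obtain ⟨l0, hl0, hl0b⟩ := hR
    obtain ⟨l, hl, hlen⟩ := short_path _ b l0 hl0
    refine ⟨l, ?_, ?_⟩
    · refine hlen.trans ?_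
      have h1 := Finset.card_union_le (EA y A') E0
      have h2 := EA_card (y := y) A'
      have h3 : L * A'.card ≤ L * (2 * (u.length + v.length)) := Nat.mul_le_mul_left _ (by omega)
      nlinarith
    · have hh : g⁻¹ * FreeGroup.mk l ∈ H := by
        rw [← quot_stab H, mul_smul, inv_smul_eq_iff]
        rw [hl, hl0b]
      have hcomm : H ≤ (Subgroup.centralizer
          {(QuotientGroup.mk' N) (FreeGroup.mk u)}).comap (QuotientGroup.mk' N) := by
        rw [hH, Subgroup.closure_le]
        rintro x (⟨k, hk, rfl⟩ | ⟨l', hl', rfl⟩)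
        · have : (QuotientGroup.mk' N) (k⁻¹ * (PP y L) ^ n * k) = 1 := by
            rw [← MonoidHom.mem_ker, QuotientGroup.ker_mk']
            have h1 : (PP y L) ^ n ∈ N := Subgroup.subset_normalClosure rfl
            have h2 := (inferInstance : N.Normal).conj_mem _ h1 k⁻¹
            rwa [inv_inv] at h2
          rw [SetLike.mem_coe, Subgroup.mem_comap]
          rw [this]; exact Subgroup.one_mem _
        · have : l' = u := by simpa using hl'
          subst this
          rw [SetLike.mem_coe, Subgroup.mem_comap]
          rw [Subgroup.mem_centralizer_iff]
          intro z hz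
          rw [Set.mem_singleton_iff.1 hz]
      have h4 := hcomm hh
      rw [Subgroup.mem_comap, Subgroup.mem_centralizer_iff] at h4
      have h5 := h4 _ (Set.mem_singleton _)
      rw [← QuotientGroup.ker_mk' N, MonoidHom.mem_ker] at hg ⊢
      simp only [map_mul, map_inv] at hg h5 ⊢
      set q := QuotientGroup.mk' N
      generalize q (FreeGroup.mk l) = ql at *
      generalize q (FreeGroup.mk u) = qu at *
      generalize q (FreeGroup.mk v) = qv at *
      generalize q g = qg at *
      rw [mul_inv_eq_one] at hg ⊢
      subst hg
      have h6 : ql⁻¹ * qv * ql = (qg⁻¹ * ql)⁻¹ * ((qg⁻¹ * qv * qg) * (qg⁻¹ * ql)) := by group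
      rw [h6, h5]; group
  · have hvN := unreach hS hn b (g • b) u v A' _ hA' Finset.subset_union_left hSp'
      (Finset.subset_union_left.trans Finset.subset_union_right)
      (Finset.subset_union_right.trans Finset.subset_union_right) hvν hR
    refine ⟨[], by simp, ?_⟩
    have h1 : g⁻¹ * FreeGroup.mk v * g ∈ N := by
      have h2 := (inferInstance : N.Normal).conj_mem _ hvN g⁻¹
      rwa [inv_inv] at h2
    have h3 : (FreeGroup.mk u)⁻¹ ∈ N := (N.mul_mem_cancel_left h1).1 hg
    rw [← FreeGroup.one_eq_mk]
    simpa using N.mul_mem hvN h3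

end Ann2
end OneRel

set_option linter.unusedSectionVars false
set_option linter.unusedVariables false
set_option linter.unusedSimpArgs false
namespace OneRel

section Comp

/-- all lists of length at most `k` with entries in `Γ` -/
def listsLE {A : Type} (Γ : List A) (k : ℕ) : List (List A) :=
  k.rec (motive := fun _ => List (List A)) [[]]
    (fun _ W => [] :: W.flatMap (fun w => Γ.map (fun x => x :: w)))

theorem mem_listsLE {A : Type} (Γ : List A) (k : ℕ) (l : List A) :
    l ∈ listsLE Γ k ↔ l.length ≤ k ∧ ∀ x ∈ l, x ∈ Γ := by
  induction k generalizing l with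
  | zero =>
    rw [show listsLE Γ 0 = [[]] from rfl]
    simp only [List.mem_singleton, Nat.le_zero, List.length_eq_zero_iff]
    constructor
    · rintro rfl; simp
    · exact fun h => h.1
  | succ k ih =>
    have : listsLE Γ (k + 1) = [] :: (listsLE Γ k).flatMap (fun w => Γ.map (fun x => x :: w)) := rfl
    rw [this]
    cases l with
    | nil => simp
    | cons a l =>
      simp only [List.mem_cons, List.mem_flatMap, List.mem_map, List.length_cons,
        reduceCtorEq, false_or]
      constructor
      · rintro ⟨w, hw, x, hx, h⟩
        rw [List.cons.injEq] at h
        obtain ⟨rfl, rfl⟩ := h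
        rw [ih] at hw
        refine ⟨by omega, ?_⟩
        rintro z (rfl | hz)
        · exact hx
        · exact hw.2 z hz
      · rintro ⟨h1, h2⟩
        exact ⟨l, (ih l).2 ⟨by omega, fun x hx => h2 x (Or.inr hx)⟩, a, h2 a (Or.inl rfl), rfl⟩

theorem listsLE_primrec {A : Type} [Primcodable A] : Primrec₂ (@listsLE A) := by
  unfold listsLE
  refine Primrec.nat_rec (f := fun _ : List A => [[]])
    (g := fun (Γ : List A) (q : ℕ × List (List A)) =>
      [] :: q.2.flatMap (fun w => Γ.map (fun x => x :: w))) (Primrec.const _) ?_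
  refine Primrec.list_cons.comp (Primrec.const _) ?_
  refine Primrec.list_flatMap (Primrec.snd.comp Primrec.snd) ?_
  refine Primrec.list_map (Primrec.fst.comp Primrec.fst) ?_
  exact Primrec.list_cons.comp Primrec.snd (Primrec.snd.comp Primrec.fst)

theorem invRev_primrec {A : Type} [Primcodable A] :
    Primrec (@FreeGroup.invRev A) := by
  unfold FreeGroup.invRev
  refine Primrec.list_reverse.comp (Primrec.list_map Primrec.id ?_)
  exact Primrec.pair (Primrec.fst.comp Primrec.snd)
    (Primrec.not.comp (Primrec.snd.comp Primrec.snd))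

theorem reduce_primrec {A : Type} [Primcodable A] [DecidableEq A] :
    Primrec (@FreeGroup.reduce A _) := by
  have h : Primrec fun l : List (A × Bool) => l.foldr (fun x (s : List (A × Bool)) =>
      (List.casesOn (motive := fun _ => List (A × Bool)) s [x] fun hd tl =>
        if x.1 = hd.1 ∧ x.2 = not hd.2 then tl else x :: hd :: tl)) [] := by
    refine Primrec.list_foldr (h := fun (_ : List (A × Bool)) (q : (A × Bool) × List (A × Bool)) =>
      (List.casesOn (motive := fun _ => List (A × Bool)) q.2 [q.1] fun hd tl =>
        if q.1.1 = hd.1 ∧ q.1.2 = not hd.2 then tl else q.1 :: hd :: tl))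
      Primrec.id (Primrec.const _) ?_
    refine Primrec.list_casesOn
      (h := fun (q : List (A × Bool) × (A × Bool) × List (A × Bool))
        (z : (A × Bool) × List (A × Bool)) =>
        if q.2.1.1 = z.1.1 ∧ q.2.1.2 = not z.1.2 then z.2 else q.2.1 :: z.1 :: z.2)
      (Primrec.snd.comp Primrec.snd)
      (Primrec.list_cons.comp (Primrec.fst.comp Primrec.snd) (Primrec.const [])) ?_
    have hx : Primrec fun p : (List (A × Bool) × (A × Bool) × List (A × Bool)) ×
        ((A × Bool) × List (A × Bool)) => p.1.2.1 :=
      Primrec.fst.comp (Primrec.snd.comp Primrec.fst)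
    have hd : Primrec fun p : (List (A × Bool) × (A × Bool) × List (A × Bool)) ×
        ((A × Bool) × List (A × Bool)) => p.2.1 := Primrec.fst.comp Primrec.snd
    have tl : Primrec fun p : (List (A × Bool) × (A × Bool) × List (A × Bool)) ×
        ((A × Bool) × List (A × Bool)) => p.2.2 := Primrec.snd.comp Primrec.snd
    refine Primrec.ite (PrimrecPred.and ?_ ?_) tl ?_
    · exact Primrec.eq.comp (Primrec.fst.comp hx) (Primrec.fst.comp hd)
    · exact Primrec.eq.comp (Primrec.snd.comp hx) (Primrec.not.comp (Primrec.snd.comp hd))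
    · exact Primrec.list_cons.comp hx (Primrec.list_cons.comp hd tl)
  refine h.of_eq fun l => ?_
  induction l with
  | nil => rfl
  | cons x l ih => rw [List.foldr_cons, ih]; rfl

/-- word of a certificate -/
def cvalW {A : Type} (R : List (A × Bool)) (c : List (List (A × Bool) × Bool)) : List (A × Bool) :=
  c.flatMap (fun q => q.1 ++ ((bif q.2 then R else FreeGroup.invRev R) ++ FreeGroup.invRev q.1))

theorem mk_cvalW {A : Type} (R : List (A × Bool)) (c : List (List (A × Bool) × Bool)) :
    FreeGroup.mk (cvalW R c) = cval (FreeGroup.mk R) c := by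
  induction c with
  | nil => simp [cvalW, cval, FreeGroup.one_eq_mk]
  | cons q c ih =>
    have h1 : cvalW R (q :: c) = (q.1 ++ ((bif q.2 then R else FreeGroup.invRev R) ++
      FreeGroup.invRev q.1)) ++ cvalW R c := by simp [cvalW]
    have h2 : cval (FreeGroup.mk R) (q :: c) = (FreeGroup.mk q.1 * rho (FreeGroup.mk R) q.2 *
      (FreeGroup.mk q.1)⁻¹) * cval (FreeGroup.mk R) c := by simp [cval]
    rw [h1, h2, ← ih]
    simp only [← FreeGroup.mul_mk, mk_invRev, mul_assoc]
    rcases q with ⟨q, _ | _⟩ <;> simp [rho, mk_invRev]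

theorem cvalW_primrec {A : Type} [Primcodable A] (R : List (A × Bool)) :
    Primrec (cvalW R) := by
  unfold cvalW
  refine Primrec.list_flatMap Primrec.id ?_
  refine Primrec.list_append.comp (Primrec.fst.comp Primrec.snd)
    (Primrec.list_append.comp ?_ (invRev_primrec.comp (Primrec.fst.comp Primrec.snd)))
  exact Primrec.cond (Primrec.snd.comp Primrec.snd) (Primrec.const _) (Primrec.const _)

theorem pow_primrec (D : ℕ) : Primrec (fun k : ℕ => D ^ k) := by
  have h : Primrec (Nat.rec (motive := fun _ => ℕ) 1 (fun _ x => x * D)) :=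
    Primrec.nat_rec₁ 1 (Primrec.nat_mul.comp Primrec.snd (Primrec.const D))
  refine h.of_eq fun k => ?_
  induction k with
  | zero => simp
  | succ k ih => rw [pow_succ, ← ih]

def bnd (D ℓ : ℕ) : ℕ := 2 * ℓ * (D ^ (2 * ℓ) * (ℓ + 1))

theorem bnd_primrec (D : ℕ) : Primrec (bnd D) := by
  unfold bnd
  have h2 : Primrec (fun ℓ : ℕ => 2 * ℓ) := Primrec.nat_mul.comp (Primrec.const 2) Primrec.id
  exact Primrec.nat_mul.comp h2 (Primrec.nat_mul.comp ((pow_primrec D).comp h2) Primrec.succ)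

theorem bnd_mono (D : ℕ) (hD : 1 ≤ D) {a b : ℕ} (h : a ≤ b) : bnd D a ≤ bnd D b := by
  unfold bnd
  gcongr

def certsLE {A : Type} (Γ : List (A × Bool)) (k : ℕ) : List (List (List (A × Bool) × Bool)) :=
  listsLE ((listsLE Γ k).flatMap (fun w => [(w, true), (w, false)])) k

theorem certsLE_primrec {A : Type} [Primcodable A] (Γ : List (A × Bool)) : Primrec (certsLE Γ) := by
  unfold certsLE
  have h1 : Primrec (fun k => listsLE Γ k) := listsLE_primrec.comp (Primrec.const Γ) Primrec.id
  refine listsLE_primrec.comp (Primrec.list_flatMap h1 ?_) Primrec.id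
  refine Primrec.list_cons.comp (Primrec.pair Primrec.snd (Primrec.const true))
    (Primrec.list_cons.comp (Primrec.pair Primrec.snd (Primrec.const false)) (Primrec.const []))

theorem mem_certsLE {A : Type} (Γ : List (A × Bool)) (hΓ : ∀ x, x ∈ Γ) (k : ℕ)
    (c : List (List (A × Bool) × Bool)) :
    c ∈ certsLE Γ k ↔ c.length ≤ k ∧ ∀ q ∈ c, q.1.length ≤ k := by
  unfold certsLE
  rw [mem_listsLE]
  refine and_congr_right fun _ => forall₂_congr fun q _ => ?_
  simp only [List.mem_flatMap, mem_listsLE, List.mem_cons, List.not_mem_nil, or_false]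
  constructor
  · rintro ⟨w, ⟨hw, -⟩, rfl | rfl⟩ <;> exact hw
  · intro h
    refine ⟨q.1, ⟨h, fun x _ => hΓ x⟩, ?_⟩
    rcases q with ⟨q, _ | _⟩ <;> simp

/-- the bounded search predicate -/
def Search {A : Type} [DecidableEq A] (Γ R : List (A × Bool)) (L1 D : ℕ)
    (p : List (A × Bool) × List (A × Bool)) : Prop :=
  ∃ l ∈ listsLE Γ (L1 * (p.1.length + p.2.length)),
    ∃ c ∈ certsLE Γ (bnd D (L1 * (p.1.length + p.2.length))),
      FreeGroup.reduce (cvalW R c) =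
        FreeGroup.reduce (FreeGroup.invRev l ++ (p.1 ++ (l ++ FreeGroup.invRev p.2)))

theorem Search_primrec {A : Type} [DecidableEq A] [Primcodable A] (Γ R : List (A × Bool))
    (L1 D : ℕ) : PrimrecPred (Search Γ R L1 D) := by
  have hlen : Primrec (fun p : List (A × Bool) × List (A × Bool) =>
      L1 * (p.1.length + p.2.length)) :=
    Primrec.nat_mul.comp (Primrec.const L1) (Primrec.nat_add.comp
      (Primrec.list_length.comp Primrec.fst) (Primrec.list_length.comp Primrec.snd))
  have h1 : PrimrecRel (fun (c : List (List (A × Bool) × Bool)) (w : List (A × Bool)) =>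
      FreeGroup.reduce (cvalW R c) = FreeGroup.reduce w) :=
    Primrec.eq.comp (reduce_primrec.comp ((cvalW_primrec R).comp Primrec.fst))
      (reduce_primrec.comp Primrec.snd)
  have h2 := h1.exists_mem_list
  have h3 : PrimrecRel (fun (l : List (A × Bool)) (p : List (A × Bool) × List (A × Bool)) =>
      ∃ c ∈ certsLE Γ (bnd D (L1 * (p.1.length + p.2.length))),
      FreeGroup.reduce (cvalW R c) =
        FreeGroup.reduce (FreeGroup.invRev l ++ (p.1 ++ (l ++ FreeGroup.invRev p.2)))) := by
    refine h2.comp ((certsLE_primrec Γ).comp ((bnd_primrec D).comp (hlen.comp Primrec.snd))) ?_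
    exact Primrec.list_append.comp (invRev_primrec.comp Primrec.fst)
      (Primrec.list_append.comp (Primrec.fst.comp Primrec.snd)
        (Primrec.list_append.comp Primrec.fst
          (invRev_primrec.comp (Primrec.snd.comp Primrec.snd))))
  have h4 := h3.exists_mem_list
  exact h4.comp (listsLE_primrec.comp (Primrec.const Γ) hlen) Primrec.id

theorem main {m : ℕ} {L : ℕ} [NeZero L] {y : ZMod L → Fin m × Bool} {κ : ZMod L → ℕ}
    (hS : Stacking y κ) (n : ℕ) (hn : 2 ≤ n) :
    ComputablePred fun p : List (Fin m × Bool) × List (Fin m × Bool) =>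
      ∃ g : PresentedGroup ({(PP y L) ^ n} : Set (FreeGroup (Fin m))),
        g * PresentedGroup.mk ({(PP y L) ^ n} : Set (FreeGroup (Fin m))) (FreeGroup.mk p.1) * g⁻¹ =
          PresentedGroup.mk ({(PP y L) ^ n} : Set (FreeGroup (Fin m))) (FreeGroup.mk p.2) := by
  set Γ : List (Fin m × Bool) := (Finset.univ : Finset (Fin m × Bool)).toList with hΓ
  have hΓm : ∀ x, x ∈ Γ := by intro x; simp [hΓ]
  have hL : 1 ≤ L := Nat.pos_of_ne_zero (NeZero.ne L)
  set ρ := (PP y L) ^ n with hρ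
  refine ((Search_primrec Γ ρ.toWord (8 * L + 5) (n * L + L)).of_eq ?_).computablePred
  rintro ⟨v, u⟩
  simp only [Search]
  constructor
  · rintro ⟨l, -, c, -, h⟩
    have h1 : cval ρ c = (FreeGroup.mk l)⁻¹ * (FreeGroup.mk v * (FreeGroup.mk l *
        (FreeGroup.mk u)⁻¹)) := by
      rw [← FreeGroup.toWord_mk, ← FreeGroup.toWord_mk, FreeGroup.toWord_inj, mk_cvalW,
        FreeGroup.mk_toWord] at h
      rw [h]
      simp only [← FreeGroup.mul_mk, mk_invRev]
    have h2 : cval ρ c ∈ Subgroup.normalClosure {ρ} := by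
      refine Cert.mem (B1 := c.length) (B2 := (c.map (fun q => q.1.length)).sum) ⟨c, le_rfl, ?_, rfl⟩
      intro q hq
      exact List.single_le_sum (by simp) _ (List.mem_map.2 ⟨q, hq, rfl⟩)
    rw [← PresentedGroup.mk_eq_one_iff, h1] at h2
    refine ⟨(PresentedGroup.mk {ρ} (FreeGroup.mk l))⁻¹, ?_⟩
    simp only [map_mul, map_inv] at h2
    rw [← mul_inv_eq_one, ← h2]
    group
  · rintro ⟨g, hg⟩
    obtain ⟨g0, rfl⟩ := PresentedGroup.mk_surjective _ g
    have h0 : (g0⁻¹)⁻¹ * FreeGroup.mk v * g0⁻¹ * (FreeGroup.mk u)⁻¹ ∈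
        Subgroup.normalClosure {ρ} := by
      rw [← PresentedGroup.mk_eq_one_iff]
      simp only [map_mul, map_inv]
      rw [mul_inv_eq_one, inv_inv]
      exact hg
    obtain ⟨l, hl, hmem⟩ := conj_short hS hn u v g0⁻¹ h0
    set w := FreeGroup.invRev l ++ (v ++ (l ++ FreeGroup.invRev u)) with hw
    have hmk : FreeGroup.mk w = (FreeGroup.mk l)⁻¹ * FreeGroup.mk v * FreeGroup.mk l *
        (FreeGroup.mk u)⁻¹ := by
      rw [hw]
      simp only [← FreeGroup.mul_mk, mk_invRev, mul_assoc]
    rw [← hmk] at hmem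
    have hlw : w.length ≤ (8 * L + 5) * (v.length + u.length) := by
      rw [hw]
      simp only [List.length_append, FreeGroup.invRev_length]
      nlinarith
    obtain ⟨c, hc1, hc2, hc3⟩ := word_cert hS hn w hmem
    have hb : bnd (n * L + L) w.length ≤ bnd (n * L + L) ((8 * L + 5) * (v.length + u.length)) :=
      bnd_mono _ (by omega) hlw
    refine ⟨l, ?_, c, ?_, ?_⟩
    · rw [mem_listsLE]
      exact ⟨by nlinarith, fun x _ => hΓm x⟩
    · rw [mem_certsLE Γ hΓm]
      exact ⟨hc1.trans hb, fun q hq => (hc2 q hq).trans hb⟩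
    · rw [← FreeGroup.toWord_mk, ← FreeGroup.toWord_mk, FreeGroup.toWord_inj, mk_cvalW,
        FreeGroup.mk_toWord]
      exact hc3.symm

end Comp
end OneRel

/-- **Newman (1968):** the conjugacy problem for one-relator groups with torsion
is decidable. -/
theorem one_relator_with_torsion_conjugacy_problem_decidable
    (m : ℕ) (r : FreeGroup (Fin m)) (hr : r ≠ 1) (hcyc : FreeGroup.CyclicallyReduced r)
    (hpow : ¬ ∃ (s : FreeGroup (Fin m)) (k : ℕ), 2 ≤ k ∧ r = s ^ k)
    (n : ℕ) (hn : 2 ≤ n) :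
    ComputablePred fun p : List (Fin m × Bool) × List (Fin m × Bool) =>
      ∃ g : PresentedGroup ({r ^ n} : Set (FreeGroup (Fin m))),
        g * PresentedGroup.mk ({r ^ n} : Set (FreeGroup (Fin m))) (FreeGroup.mk p.1) * g⁻¹ =
          PresentedGroup.mk ({r ^ n} : Set (FreeGroup (Fin m))) (FreeGroup.mk p.2) := by
  obtain ⟨L, hL, y, κ, hS, hy⟩ := OneRel.exists_stacking r hr hcyc hpow
  rw [← hy]
  exact OneRel.main hS n hn
end

section
/- (Novikov 1955, Boone 1958) There exists a finitely presented group with unsolvable word problem: there exist a natural number m and a finite set rels of elements of the free group on Fin m such that the predicate on lists l : List (Fin m × Bool) given by 'FreeGroup.mk l lies in the normal closure of rels' is not a computable predicate (¬ ComputablePred). -/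
namespace NB

/-! ### Part 1: the permutation representation -/

/-- The extra alphabet. -/
abbrev C := ℤ ⊕ ℕ

/-- The alphabet: a sign-like component (negated by `t`) and an inert component. -/
abbrev D := ℤ × C

/-- Bi-infinite sequences. -/
abbrev Om := ℤ → D

lemma exists_recode {X : Type} [Countable X] (y : ℤ → X) (hy : Function.Injective y)
    (hinf : (Set.range y)ᶜ.Infinite) : ∃ σ : X ≃ C, ∀ u, σ (y u) = Sum.inl u := by
  classical
  have : Infinite ↥((Set.range y)ᶜ) := hinf.to_subtype
  obtain ⟨d⟩ := nonempty_denumerable ↥((Set.range y)ᶜ)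
  refine ⟨(Equiv.Set.sumCompl (Set.range y)).symm.trans
    (Equiv.sumCongr (Equiv.ofInjective y hy).symm (Denumerable.eqv _)), fun u => ?_⟩
  rw [Equiv.trans_apply, Equiv.Set.sumCompl_symm_apply_of_mem (Set.mem_range_self u)]
  simp only [Equiv.sumCongr_apply, Sum.map_inl]
  congr 1
  exact Equiv.ofInjective_symm_apply hy u

/-- Shift by `c`. -/
def sh (c : ℤ) : Equiv.Perm Om where
  toFun F z := F (z - c)
  invFun F z := F (z + c)
  left_inv F := by ext z <;> simp
  right_inv F := by ext z <;> simp

/-- Negate the first component at coordinate `c`. -/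
def flip (c : ℤ) : Equiv.Perm Om where
  toFun F z := if z = c then (-(F z).1, (F z).2) else F z
  invFun F z := if z = c then (-(F z).1, (F z).2) else F z
  left_inv F := by ext z <;> by_cases h : z = c <;> simp [h]
  right_inv F := by ext z <;> by_cases h : z = c <;> simp [h]

lemma sh_apply (c : ℤ) (F : Om) (z : ℤ) : sh c F z = F (z - c) := rfl
lemma flip_apply (c : ℤ) (F : Om) (z : ℤ) :
    flip c F z = if z = c then (-(F z).1, (F z).2) else F z := rfl

lemma sh_add (c d : ℤ) : sh (c + d) = sh c * sh d := by
  ext F z <;> simp [sh_apply, sub_sub]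

lemma sh_zero : sh 0 = 1 := by
  ext F z <;> simp [sh_apply]

lemma sh_pow (c : ℤ) (n : ℕ) : sh c ^ n = sh (n * c) := by
  induction n with
  | zero => simp [sh_zero]
  | succ n ih => rw [pow_succ, ih, ← sh_add]; congr 1; push_cast; ring

lemma sh_neg (c : ℤ) : sh (-c) = (sh c)⁻¹ := by
  rw [eq_inv_iff_mul_eq_one, ← sh_add]; simp [sh_zero]

lemma sh_flip (c : ℤ) : sh c * flip 0 * (sh c)⁻¹ = flip c := by
  rw [← sh_neg]
  ext F z <;> simp [sh_apply, flip_apply, sub_eq_zero]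

open Classical in
/-- The base point. -/
noncomputable def om (E : Set ℤ) : Om := fun z => (if z ∈ E then 0 else 1, Sum.inl z)

lemma flip_om (E : Set ℤ) (c : ℤ) : flip c (om E) = om E ↔ c ∈ E := by
  constructor
  · intro h
    by_contra hc
    have := congrArg Prod.fst (congrFun h c)
    simp [flip_apply, om, hc] at this
  · intro h
    ext z <;> by_cases hz : z = c <;> simp [flip_apply, om, hz, h]

/-- Blocks of length `m` starting at `a`. -/
def blkIdx (a : ℤ) (m : ℕ) [NeZero m] : ℤ × Fin m ≃ ℤ :=
  (Int.divModEquiv m).symm.trans (Equiv.addLeft a)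

lemma blkIdx_apply (a : ℤ) (m : ℕ) [NeZero m] (u : ℤ) (j : Fin m) :
    blkIdx a m (u, j) = a + m * u + (j : ℕ) := by
  simp [blkIdx, Int.divModEquiv]; ring

lemma exists_block (E : Set ℤ) (a : ℤ) (m : ℕ) [NeZero m] :
    ∃ Φ : Equiv.Perm Om, Φ * sh m = sh 1 * Φ ∧ Φ * flip a = flip 0 * Φ ∧
      Φ (om E) = om {u | a + m * u ∈ E} := by
  classical
  let X := C × ({j : Fin m // j ≠ 0} → D)
  let y : ℤ → X := fun u => ((om E (a + m * u)).2, fun j => om E (blkIdx a m (u, j.1)))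
  have hm : (m : ℤ) ≠ 0 := by exact_mod_cast NeZero.ne m
  have hy : Function.Injective y := by
    intro u v h
    have := congrArg Prod.fst h
    simp only [y, om, Sum.inl.injEq] at this
    have h2 : (m : ℤ) * u = m * v := by linarith
    exact mul_left_cancel₀ hm h2
  have hinf : (Set.range y)ᶜ.Infinite := by
    have : Function.Injective (fun k : ℕ => ((Sum.inr k, fun _ => (0, Sum.inl 0)) : X)) := by
      intro k l h
      simpa using congrArg Prod.fst h
    refine (Set.infinite_range_of_injective this).mono ?_
    rintro _ ⟨k, rfl⟩ ⟨u, hu⟩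
    simpa [y, om] using congrArg Prod.fst hu
  obtain ⟨σ, hσ⟩ := exists_recode y hy hinf
  let θ : (Fin m → D) ≃ D := (Equiv.funSplitAt (0 : Fin m) D).trans
    ((Equiv.prodAssoc _ _ _).trans (Equiv.prodCongr (Equiv.refl _) σ))
  have hθ : ∀ g : Fin m → D, θ g = ((g 0).1, σ ((g 0).2, fun j => g j.1)) := fun g => rfl
  let Φ : Equiv.Perm Om := (Equiv.arrowCongr (blkIdx a m).symm (Equiv.refl D)).trans
    ((Equiv.curry ℤ (Fin m) D).trans (Equiv.arrowCongr (Equiv.refl ℤ) θ))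
  have hΦ : ∀ F u, Φ F u = θ (fun j => F (blkIdx a m (u, j))) := fun F u => rfl
  have h0 : ∀ u, blkIdx a m (u, 0) = a + m * u := by intro u; simp [blkIdx_apply]
  refine ⟨Φ, ?_, ?_, ?_⟩
  · refine Equiv.ext fun F => funext fun u => ?_
    rw [Equiv.Perm.mul_apply, Equiv.Perm.mul_apply, hΦ, sh_apply, hΦ]
    congr 1
    funext j
    rw [sh_apply, blkIdx_apply, blkIdx_apply]
    congr 1
    ring
  · refine Equiv.ext fun F => funext fun u => ?_
    rw [Equiv.Perm.mul_apply, Equiv.Perm.mul_apply, hΦ, flip_apply, hΦ, hθ, hθ]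
    have h1 : ∀ j : Fin m, j ≠ 0 → flip a F (blkIdx a m (u, j)) = F (blkIdx a m (u, j)) := by
      intro j hj
      rw [flip_apply, if_neg]
      intro h
      have h2 : blkIdx a m (u, j) = blkIdx a m (0, 0) := by rw [h, h0]; simp
      have := (blkIdx a m).injective h2
      exact hj (congrArg Prod.snd this)
    have h3 : (fun j : {j : Fin m // j ≠ 0} => flip a F (blkIdx a m (u, j.1)))
        = fun j => F (blkIdx a m (u, j.1)) := funext fun j => h1 j.1 j.2
    rw [h3, h0, flip_apply]
    by_cases hu : u = 0
    · simp [hu]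
    · have hm' : m ≠ 0 := NeZero.ne m
      simp [hu, hm']
  · refine funext fun u => ?_
    rw [hΦ, hθ, h0]
    have : σ ((om E (a + m * u)).2, fun j => om E (blkIdx a m (u, j.1))) = Sum.inl u := hσ u
    rw [this]
    simp [om]

lemma exists_stable (E : Set ℤ) (a b : ℤ) (m n : ℕ) [NeZero m] [NeZero n]
    (hE : ∀ u : ℤ, a + m * u ∈ E ↔ b + n * u ∈ E) :
    ∃ r : Equiv.Perm Om, r * sh m = sh n * r ∧ r * flip a = flip b * r ∧ r (om E) = om E := by
  obtain ⟨Φ, h1, h2, h3⟩ := exists_block E a m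
  obtain ⟨Ψ, k1, k2, k3⟩ := exists_block E b n
  have k1' : Ψ⁻¹ * sh 1 = sh n * Ψ⁻¹ := by
    rw [inv_mul_eq_iff_eq_mul, ← mul_assoc, k1, mul_inv_cancel_right]
  have k2' : Ψ⁻¹ * flip 0 = flip b * Ψ⁻¹ := by
    rw [inv_mul_eq_iff_eq_mul, ← mul_assoc, k2, mul_inv_cancel_right]
  refine ⟨Ψ⁻¹ * Φ, ?_, ?_, ?_⟩
  · rw [mul_assoc, h1, ← mul_assoc, k1', mul_assoc]
  · rw [mul_assoc, h2, ← mul_assoc, k2', mul_assoc]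
  · rw [Equiv.Perm.mul_apply, h3, Equiv.Perm.inv_eq_iff_eq, k3]
    simp only [hE]

end NB

namespace NB

/-! ### Part 2: the presentation attached to a system of partial affine maps -/

/-- A partial affine map `a + m u ↦ b + n u`. -/
structure Rule where
  a : ℕ
  m : ℕ
  b : ℕ
  n : ℕ

/-- One step of the rewriting system given by a list of rules. -/
def StepZ (L : List Rule) (c c' : ℤ) : Prop :=
  ∃ ρ ∈ L, ∃ u : ℤ, c = ρ.a + ρ.m * u ∧ c' = ρ.b + ρ.n * u

/-- Conjugate of `t` by `x ^ c`. -/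
def cj {H : Type*} [Group H] (x t : H) (c : ℤ) : H := x ^ c * t * (x ^ c)⁻¹

lemma cj_add {H : Type*} [Group H] (x t : H) (c d : ℤ) :
    cj x t (c + d) = x ^ d * cj x t c * (x ^ d)⁻¹ := by
  simp only [cj, add_comm c d, zpow_add]; group

lemma map_cj {H K : Type*} [Group H] [Group K] (f : H →* K) (x t : H) (c : ℤ) :
    f (cj x t c) = cj (f x) (f t) c := by
  simp [cj]

lemma cj_step {H : Type*} [Group H] (x t r : H) (ρ : Rule)
    (h1 : r * x ^ ρ.m * r⁻¹ = x ^ ρ.n)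
    (h2 : r * cj x t ρ.a * r⁻¹ = cj x t ρ.b) (u : ℤ) :
    r * cj x t (ρ.a + ρ.m * u) * r⁻¹ = cj x t (ρ.b + ρ.n * u) := by
  have h3 : r * x ^ ((ρ.m : ℤ) * u) * r⁻¹ = x ^ ((ρ.n : ℤ) * u) := by
    rw [zpow_mul, zpow_mul, ← conj_zpow]
    simp [h1]
  rw [cj_add, cj_add, ← h2, ← h3]
  group

section pres
variable (L : List Rule) (n0 : ℤ)

abbrev Gen := Fin (L.length + 3)

def gx : FreeGroup (Gen L) := .of 0
def gt : FreeGroup (Gen L) := .of 1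
def gk : FreeGroup (Gen L) := .of 2
def gr (i : Fin L.length) : FreeGroup (Gen L) := .of i.succ.succ.succ

/-- The commutator of `k` and `t(c)`. -/
def wd (c : ℤ) : FreeGroup (Gen L) := gk L * cj (gx L) (gt L) c * (gk L)⁻¹ * (cj (gx L) (gt L) c)⁻¹

def rels : Set (FreeGroup (Gen L)) :=
  {wd L n0} ∪ (Set.range fun i => gk L * gr L i * (gk L)⁻¹ * (gr L i)⁻¹) ∪
    (Set.range fun i => gr L i * gx L ^ (L.get i).m * (gr L i)⁻¹ * (gx L ^ (L.get i).n)⁻¹) ∪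
    (Set.range fun i => gr L i * cj (gx L) (gt L) (L.get i).a * (gr L i)⁻¹ *
      (cj (gx L) (gt L) (L.get i).b)⁻¹)

lemma rels_finite : (rels L n0).Finite :=
  (((Set.finite_singleton _).union (Set.finite_range _)).union (Set.finite_range _)).union
    (Set.finite_range _)

lemma wd_mem_of_reaches (c : ℤ) (h : Relation.ReflTransGen (StepZ L) c n0) :
    wd L c ∈ Subgroup.normalClosure (rels L n0) := by
  set N := Subgroup.normalClosure (rels L n0) with hN
  let π := QuotientGroup.mk' N
  have hπ : ∀ g, π g = 1 ↔ g ∈ N := fun g => QuotientGroup.eq_one_iff g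
  have hrel : ∀ g ∈ rels L n0, π g = 1 := fun g hg =>
    (hπ g).2 (Subgroup.subset_normalClosure hg)
  have hw : ∀ d, wd L d ∈ N ↔ π (gk L) * cj (π (gx L)) (π (gt L)) d * (π (gk L))⁻¹
      = cj (π (gx L)) (π (gt L)) d := by
    intro d
    rw [← hπ, wd]
    simp only [map_mul, map_inv, map_cj, mul_inv_eq_one]
  rw [hw]
  induction h using Relation.ReflTransGen.head_induction_on with
  | refl =>
    rw [← hw, ← hπ]
    exact hrel _ (by simp [rels])
  | @head c c' h1 _ ih =>
    obtain ⟨ρ, hρ, u, rfl, rfl⟩ := h1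
    obtain ⟨i, rfl⟩ := List.get_of_mem hρ
    have r1 := hrel _ (show _ from Or.inl (Or.inl (Or.inr ⟨i, rfl⟩)))
    have r2 := hrel _ (show _ from Or.inl (Or.inr ⟨i, rfl⟩))
    have r3 := hrel _ (show _ from Or.inr ⟨i, rfl⟩)
    simp only [map_mul, map_inv, map_cj, map_pow, mul_inv_eq_one] at r1 r2 r3
    have key := cj_step _ _ _ _ r2 r3 u
    rw [← key] at ih
    generalize π (gk L) = k at *
    generalize π (gr L i) = r at *
    generalize cj (π (gx L)) (π (gt L)) ((L.get i).a + (L.get i).m * u) = y at *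
    have hc1 : Commute k r := by
      rw [mul_inv_eq_iff_eq_mul] at r1; exact r1
    have hc2 : Commute k (r * y * r⁻¹) := by
      rw [mul_inv_eq_iff_eq_mul] at ih; exact ih
    have hc3 : Commute k y := by
      have := (hc1.inv_right.mul_right hc2).mul_right hc1
      simpa [mul_assoc] using this
    rw [mul_inv_eq_iff_eq_mul]; exact hc3

/-- Doubling of a permutation action. -/
def dbl {X : Type} : Equiv.Perm X →* Equiv.Perm (X × Bool) where
  toFun p := Equiv.prodCongr p (Equiv.refl _)
  map_one' := by ext x <;> simp
  map_mul' p q := by ext x <;> simp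

lemma dbl_apply {X : Type} (p : Equiv.Perm X) (x : X) (b : Bool) : dbl p (x, b) = (p x, b) := rfl

lemma sh_one_zpow (c : ℤ) : sh 1 ^ c = sh c := by
  cases c with
  | ofNat n => simp [sh_pow]
  | negSucc n => rw [zpow_negSucc, sh_pow, ← sh_neg]; congr 1; simp [Int.negSucc_eq]

lemma cj_sh (c : ℤ) : cj (sh 1) (flip 0) c = flip c := by
  rw [cj, sh_one_zpow, sh_flip]

lemma reaches_of_wd_mem (hL : ∀ ρ ∈ L, ρ.m ≠ 0 ∧ ρ.n ≠ 0)
    (hdet : ∀ c c' c'', StepZ L c c' → StepZ L c c'' → c' = c'')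
    (hterm : ∀ c, ¬ StepZ L n0 c) (c : ℤ)
    (h : wd L c ∈ Subgroup.normalClosure (rels L n0)) :
    Relation.ReflTransGen (StepZ L) c n0 := by
  classical
  set E : Set ℤ := {c | Relation.ReflTransGen (StepZ L) c n0} with hE
  have hinv : ∀ c c', StepZ L c c' → (c ∈ E ↔ c' ∈ E) := by
    intro c c' hs
    constructor
    · intro hc
      rcases Relation.ReflTransGen.cases_head hc with rfl | ⟨d, hd, hd'⟩
      · exact absurd hs (hterm _)
      · rw [hdet _ _ _ hs hd]; exact hd'
    · intro hc; exact Relation.ReflTransGen.head hs hc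
  have hst : ∀ i : Fin L.length, ∃ r : Equiv.Perm Om,
      r * sh (L.get i).m = sh (L.get i).n * r ∧
      r * flip (L.get i).a = flip (L.get i).b * r ∧ r (om E) = om E := by
    intro i
    obtain ⟨h1, h2⟩ := hL _ (List.get_mem L i)
    have : NeZero (L.get i).m := ⟨h1⟩
    have : NeZero (L.get i).n := ⟨h2⟩
    exact exists_stable E _ _ _ _ fun u => hinv _ _ ⟨_, List.get_mem L i, u, rfl, rfl⟩
  choose r hr1 hr2 hr3 using hst
  let κ : Equiv.Perm (Om × Bool) := Equiv.swap (om E, false) (om E, true)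
  have hκ : ∀ p : Equiv.Perm Om, p (om E) = om E → dbl p * κ * (dbl p)⁻¹ = κ := by
    intro p hp
    rw [← Equiv.swap_apply_apply, dbl_apply, dbl_apply, hp]
  have hκ' : ∀ p : Equiv.Perm Om, κ * dbl p * κ⁻¹ * (dbl p)⁻¹ = 1 ↔ p (om E) = om E := by
    intro p
    constructor
    · intro hp
      have h2 : dbl p * κ * (dbl p)⁻¹ = κ := by
        rw [mul_inv_eq_one, mul_inv_eq_iff_eq_mul] at hp
        rw [mul_inv_eq_iff_eq_mul, hp]
      rw [← Equiv.swap_apply_apply] at h2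
      have h3 := congrArg (fun q => q (om E, false)) h2
      simp only [κ, dbl_apply, Equiv.swap_apply_left] at h3
      by_contra hne
      rw [Equiv.swap_apply_of_ne_of_ne] at h3
      · simp at h3
      · intro h4; exact hne (congrArg Prod.fst h4).symm
      · intro h4; simp at h4
    · intro hp
      have := hκ p hp
      rw [mul_inv_eq_one, mul_inv_eq_iff_eq_mul]
      rw [mul_inv_eq_iff_eq_mul] at this
      exact this.symm
  let f : FreeGroup (Gen L) →* Equiv.Perm (Om × Bool) :=
    FreeGroup.lift (Fin.cons (dbl (sh 1)) (Fin.cons (dbl (flip 0)) (Fin.cons κ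
      fun i => dbl (r i))))
  have fx : f (gx L) = dbl (sh 1) := by simp [f, gx]
  have ft : f (gt L) = dbl (flip 0) := by
    simp only [f, gt, FreeGroup.lift_apply_of]; rfl
  have fk : f (gk L) = κ := by
    simp only [f, gk, FreeGroup.lift_apply_of]; rfl
  have fr : ∀ i, f (gr L i) = dbl (r i) := by
    intro i; simp [f, gr]
  have fcj : ∀ c, f (cj (gx L) (gt L) c) = dbl (flip c) := by
    intro c; rw [map_cj, fx, ft, ← map_cj, cj_sh]
  have fwd : ∀ c, f (wd L c) = 1 ↔ c ∈ E := by
    intro c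
    rw [wd, map_mul, map_mul, map_mul, map_inv, map_inv, fcj, fk, hκ', flip_om]
  have hker : Subgroup.normalClosure (rels L n0) ≤ f.ker := by
    apply Subgroup.normalClosure_le_normal
    rintro g (((rfl | ⟨i, rfl⟩) | ⟨i, rfl⟩) | ⟨i, rfl⟩)
    · exact (fwd n0).2 Relation.ReflTransGen.refl
    · change f _ = 1
      rw [map_mul, map_mul, map_mul, map_inv, map_inv, fk, fr, hκ']
      exact hr3 i
    · change f _ = 1
      rw [map_mul, map_mul, map_mul, map_inv, map_inv, map_pow, map_pow, fx, fr, mul_inv_eq_one,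
        mul_inv_eq_iff_eq_mul, ← map_pow, ← map_pow, sh_pow, sh_pow, ← map_mul, ← map_mul]
      simpa using congrArg dbl (hr1 i)
    · change f _ = 1
      rw [map_mul, map_mul, map_mul, map_inv, map_inv, fcj, fcj, fr, mul_inv_eq_one,
        mul_inv_eq_iff_eq_mul, ← map_mul, ← map_mul, hr2]
  exact (fwd c).1 (hker h)

end pres

/-- The word representing `wd L c`. -/
def wordOf (L : List Rule) (c : ℕ) : List (Gen L × Bool) :=
  let X := (List.range c).map fun _ => ((0 : Gen L), true)
  let Y := (List.range c).map fun _ => ((0 : Gen L), false)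
  [((2 : Gen L), true)] ++ (X ++ ([(1, true)] ++ Y)) ++ [(2, false)] ++ (X ++ ([(1, false)] ++ Y))

lemma mk_rep {α : Type} (a : α) (b : Bool) (c : ℕ) :
    FreeGroup.mk ((List.range c).map fun _ => (a, b)) = FreeGroup.mk [(a, b)] ^ c := by
  induction c with
  | zero => rw [pow_zero]; rfl
  | succ n ih => rw [List.range_succ, List.map_append, ← FreeGroup.mul_mk, ih, pow_succ]; rfl

lemma mk_wordOf (L : List Rule) (c : ℕ) : FreeGroup.mk (wordOf L c) = wd L c := by
  have h : ∀ a : Gen L, FreeGroup.mk [(a, false)] = (FreeGroup.of a)⁻¹ := fun a => rfl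
  have h' : ∀ a : Gen L, FreeGroup.mk [(a, true)] = (FreeGroup.of a) := fun a => rfl
  simp only [wordOf, ← FreeGroup.mul_mk, mk_rep, h, h', wd, cj, gx, gt, gk, zpow_natCast]
  group

lemma wordOf_primrec (L : List Rule) : Primrec (wordOf L) := by
  have hX : ∀ p : Gen L × Bool, Primrec fun c : ℕ => (List.range c).map fun _ => p := fun p =>
    Primrec.list_map Primrec.list_range (Primrec.const p).to₂
  unfold wordOf
  exact Primrec.list_append.comp (Primrec.list_append.comp (Primrec.list_append.comp
    (Primrec.const _) (Primrec.list_append.comp (hX _)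
      (Primrec.list_append.comp (Primrec.const _) (hX _)))) (Primrec.const _))
    (Primrec.list_append.comp (hX _)
      (Primrec.list_append.comp (Primrec.const _) (hX _)))

end NB

namespace NB

/-! ### Part 3: counter programs computing primitive recursive functions -/

/-- Counter programs: `inc j k` increments register `j` and continues with `k`;
`loop j p k` repeats (decrement `j`, run `p`) while register `j` is nonzero, then continues
with `k`. -/
inductive Prog where
  | nil : Prog
  | inc (j : ℕ) (k : Prog) : Prog
  | loop (j : ℕ) (p k : Prog) : Prog

noncomputable instance : DecidableEq Prog := Classical.decEq Prog

namespace Prog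

/-- Sequential composition. -/
def app : Prog → Prog → Prog
  | nil, q => q
  | inc j k, q => inc j (app k q)
  | loop j p k, q => loop j p (app k q)

lemma app_nil (p : Prog) : p.app nil = p := by
  induction p with
  | nil => rfl
  | inc j k ih => simp [app, ih]
  | loop j p k _ ih => simp [app, ih]

lemma app_assoc (p q s : Prog) : (p.app q).app s = p.app (q.app s) := by
  induction p with
  | nil => rfl
  | inc j k ih => simp [app, ih]
  | loop j p k _ ih => simp [app, ih]

end Prog

open Prog Function Relation

/-- Register contents. -/
abbrev Regs := ℕ → ℕ

/-- Small-step semantics. -/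
inductive StepP : Prog × Regs → Prog × Regs → Prop
  | inc (j k r) : StepP (Prog.inc j k, r) (k, update r j (r j + 1))
  | done (j p k) (r : Regs) : r j = 0 → StepP (Prog.loop j p k, r) (k, r)
  | iter (j p k) (r : Regs) : r j ≠ 0 →
      StepP (Prog.loop j p k, r) (p.app (Prog.loop j p k), update r j (r j - 1))

/-- `Run P r s` says that `P` transforms the registers `r` into `s`. -/
def Run (P : Prog) (r r' : Regs) : Prop :=
  ∀ K : Prog, ReflTransGen StepP (P.app K, r) (K, r')

lemma Run.nil (r : Regs) : Run .nil r r := fun _ => .refl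

lemma Run.app {P Q : Prog} {r r' r'' : Regs} (h : Run P r r') (h' : Run Q r' r'') :
    Run (P.app Q) r r'' := by
  intro K
  rw [app_assoc]
  exact (h _).trans (h' K)

lemma Run.inc (j : ℕ) (r : Regs) : Run (.inc j .nil) r (update r j (r j + 1)) :=
  fun _ => .single (.inc _ _ _)

lemma Run.done {j : ℕ} {p : Prog} {r : Regs} (h : r j = 0) : Run (.loop j p .nil) r r :=
  fun _ => .single (.done _ _ _ _ h)

lemma Run.iter {j : ℕ} {p : Prog} {r r' r'' : Regs} (h : r j ≠ 0)
    (h1 : Run p (update r j (r j - 1)) r') (h2 : Run (.loop j p .nil) r' r'') :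
    Run (.loop j p .nil) r r'' :=
  fun K => (ReflTransGen.head (.iter _ _ _ _ h) (h1 _)).trans (h2 K)

lemma Run.cast {P : Prog} {r r' r'' : Regs} (h : Run P r r') (e : r' = r'') : Run P r r'' :=
  e ▸ h

lemma Run.forLoop {j : ℕ} {p : Prog} (n : ℕ) (S : ℕ → Regs) (hS : ∀ i ≤ n, S i j = n - i)
    (hstep : ∀ i < n, Run p (update (S i) j (n - i - 1)) (S (i + 1))) :
    Run (.loop j p .nil) (S 0) (S n) := by
  have : ∀ d ≤ n, Run (.loop j p .nil) (S (n - d)) (S n) := by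
    intro d
    induction d with
    | zero =>
      intro _
      refine Run.done ?_
      rw [Nat.sub_zero, hS n le_rfl]; omega
    | succ d ih =>
      intro hd
      have h1 := hS (n - (d + 1)) (by omega)
      refine Run.iter (r' := S (n - d)) (by omega) ?_ (ih (by omega))
      have h2 := hstep (n - (d + 1)) (by omega)
      rw [h1]
      rwa [show n - (d + 1) + 1 = n - d by omega] at h2
  simpa using this n le_rfl

/-- Set a register to zero. -/
def clear (j : ℕ) : Prog := .loop j .nil .nil

lemma Run.clear (j : ℕ) (r : Regs) : Run (clear j) r (update r j 0) := by
  have := Run.forLoop (j := j) (p := .nil) (r j) (fun i => update r j (r j - i))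
    (by intro i _; simp) (by
      intro i _
      refine (Run.nil _).cast ?_
      simp [Nat.sub_sub])
  simpa [NB.clear] using this

/-- Move (by adding) register `j` to `k`. -/
def move (j k : ℕ) : Prog := .loop j (.inc k .nil) .nil

lemma Run.move {j k : ℕ} (h : j ≠ k) (r : Regs) :
    Run (move j k) r (update (update r k (r k + r j)) j 0) := by
  have := Run.forLoop (j := j) (p := .inc k .nil) (r j)
    (fun i => update (update r k (r k + i)) j (r j - i))
    (by intro i _; simp) (by
      intro i _
      refine (Run.inc _ _).cast ?_
      funext z
      simp only [update_apply]
      grind)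
  simpa [NB.move] using this

/-- Add register `j` to `k`, using the zero register `s` as a scratch. -/
def copy (j k s : ℕ) : Prog := (Prog.loop j (.inc k (.inc s .nil)) .nil).app (move s j)

lemma Run.copy {j k s : ℕ} (h : j ≠ k) (hs : s ≠ j) (hs' : s ≠ k) (r : Regs) (h0 : r s = 0) :
    Run (copy j k s) r (update r k (r k + r j)) := by
  have := Run.forLoop (j := j) (p := .inc k (.inc s .nil)) (r j)
    (fun i => update (update (update r k (r k + i)) s i) j (r j - i))
    (by intro i _; simp) (by
      intro i _
      refine ((Run.inc k _).app (Run.inc s _)).cast ?_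
      funext z
      simp only [update_apply]
      grind)
  have h1 : update (update (update r k (r k + 0)) s 0) j (r j - 0) = r := by
    funext z
    simp only [update_apply]
    grind
  simp only [h1] at this
  refine (this.app (Run.move hs _)).cast ?_
  funext z
  simp only [update_apply]
  grind

/-- `f` is computed by counter programs, for every choice of input and output registers. -/
def Compiles {n : ℕ} (f : List.Vector ℕ n → ℕ) : Prop :=
  ∀ (ins : Fin n → ℕ) (out base : ℕ), (∀ i, ins i < base) → out < base → (∀ i, ins i ≠ out) →
    ∃ P : Prog, ∀ r : Regs, r out = 0 → (∀ j, base ≤ j → r j = 0) →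
      Run P r (update r out (f (List.Vector.ofFn fun i => r (ins i))))

lemma clearRange (base k : ℕ) : ∃ Q : Prog, ∀ r : Regs,
    Run Q r (fun z => if base ≤ z ∧ z < base + k then 0 else r z) := by
  induction k with
  | zero => exact ⟨.nil, fun r => (Run.nil r).cast (by funext z; grind)⟩
  | succ k ih =>
    obtain ⟨Q, hQ⟩ := ih
    refine ⟨Q.app (clear (base + k)), fun r => ((hQ r).app (Run.clear _ _)).cast ?_⟩
    funext z
    simp only [update_apply]
    grind

lemma compiles_comp {m n : ℕ} {f : List.Vector ℕ n → ℕ} (g : Fin n → List.Vector ℕ m → ℕ)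
    (hf : Compiles f) (hg : ∀ i, Compiles (g i)) :
    Compiles fun a => f (List.Vector.ofFn fun i => g i a) := by
  intro ins out base hins hout hne
  let g' : ℕ → List.Vector ℕ m → ℕ := fun i v => if h : i < n then g ⟨i, h⟩ v else 0
  have hseq : ∀ k ≤ n, ∃ Q : Prog, ∀ r : Regs, (∀ j, base ≤ j → r j = 0) →
      Run Q r (fun z => if base ≤ z ∧ z < base + k then
        g' (z - base) (List.Vector.ofFn fun i => r (ins i)) else r z) := by
    intro k
    induction k with
    | zero => exact fun _ => ⟨.nil, fun r _ => (Run.nil r).cast (by funext z; grind)⟩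
    | succ k ih =>
      intro hk
      obtain ⟨Q, hQ⟩ := ih (by omega)
      obtain ⟨P, hP⟩ := hg ⟨k, hk⟩ ins (base + k) (base + n) (fun i => by have := hins i; omega)
        (by omega) (fun i => by have := hins i; omega)
      refine ⟨Q.app P, fun r hr => ((hQ r hr).app (hP _ ?_ ?_)).cast ?_⟩
      · have := hr (base + k) (by omega); simp [this]
      · intro j hj
        have := hr j (by omega)
        rw [if_neg (by omega), this]
      · have h1 : (fun i => if base ≤ ins i ∧ ins i < base + k then
            g' (ins i - base) (List.Vector.ofFn fun i => r (ins i)) else r (ins i))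
            = fun i => r (ins i) := by
          funext i; rw [if_neg]; have := hins i; omega
        rw [h1]
        funext z
        have h2 : g ⟨k, hk⟩ (List.Vector.ofFn fun i => r (ins i))
          = g' k (List.Vector.ofFn fun i => r (ins i)) := by
            simp only [g']; rw [dif_pos (by omega : k < n)]
        rw [h2]
        simp only [update_apply]
        by_cases hz : z = base + k
        · subst hz; simp
        · rw [if_neg hz]
          congr 1
          simp only [eq_iff_iff]
          omega
  obtain ⟨Q, hQ⟩ := hseq n le_rfl
  obtain ⟨P, hP⟩ := hf (fun i => base + i) out (base + n) (fun i => by omega) (by omega)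
    (fun i => by omega)
  obtain ⟨Z, hZ⟩ := clearRange base n
  refine ⟨(Q.app P).app Z, fun r hr hr' => (((hQ r hr').app (hP _ ?_ ?_)).app (hZ _)).cast ?_⟩
  · rw [if_neg (by omega), hr]
  · intro j hj
    rw [if_neg (by omega), hr' j (by omega)]
  · have h1 : (fun i : Fin n => if base ≤ base + (i : ℕ) ∧ base + (i : ℕ) < base + n then
        g' (base + i - base) (List.Vector.ofFn fun i => r (ins i)) else r (base + i))
        = fun i => g i (List.Vector.ofFn fun i => r (ins i)) := by
      funext i
      rw [if_pos (by omega)]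
      simp [g']
    rw [h1]
    funext z
    simp only [update_apply]
    have := hr' z
    grind

lemma compiles_prec {n : ℕ} {f : List.Vector ℕ n → ℕ} {g : List.Vector ℕ (n + 2) → ℕ}
    (hf : Compiles f) (hg : Compiles g) :
    Compiles fun v : List.Vector ℕ (n + 1) =>
      v.head.rec (f v.tail) fun y IH => g (y ::ᵥ IH ::ᵥ v.tail) := by
  intro ins out base hins hout hne
  obtain ⟨P, hP⟩ := hf (fun i => ins i.succ) out (base + 3)
    (fun i => by have := hins i.succ; omega) (by omega) (fun i => hne _)
  obtain ⟨Q, hQ⟩ := hg (Fin.cons (base + 1) (Fin.cons (base + 2) fun i => ins i.succ)) out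
    (base + 3) (by
      intro i
      refine Fin.cases (by simp) (fun i => ?_) i
      refine Fin.cases (by simp) (fun i => ?_) i
      have := hins i.succ
      simp; omega) (by omega) (by
      intro i
      refine Fin.cases (by simp; omega) (fun i => ?_) i
      refine Fin.cases (by simp; omega) (fun i => ?_) i
      simpa using hne i.succ)
  refine ⟨(((copy (ins 0) base (base + 1)).app P).app
    (.loop base ((((move out (base + 2)).app Q).app (clear (base + 2))).app
      (.inc (base + 1) .nil)) .nil)).app (clear (base + 1)), fun r hr hr' => ?_⟩
  have hi0 := hins 0
  have hn0 := hne 0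
  set w := List.Vector.ofFn fun i : Fin n => r (ins i.succ) with hw
  set N := r (ins 0) with hN
  let h : ℕ → ℕ := fun y => y.rec (f w) fun y IH => g (y ::ᵥ IH ::ᵥ w)
  have hgoal : (fun v : List.Vector ℕ (n + 1) =>
      (v.head.rec (f v.tail) fun y IH => g (y ::ᵥ IH ::ᵥ v.tail) : ℕ))
      (List.Vector.ofFn fun i => r (ins i)) = h N := rfl
  have hvec : ∀ r' : Regs, (∀ i : Fin n, r' (ins i.succ) = r (ins i.succ)) →
      (List.Vector.ofFn fun i : Fin n => r' (ins i.succ)) = w := by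
    intro r' h1; simp only [h1, hw]
  let S : ℕ → Regs := fun i => update (update (update r base (N - i)) (base + 1) i) out (h i)
  have hb0 := hr' base le_rfl
  have hb1 := hr' (base + 1) (by omega)
  have hb2 := hr' (base + 2) (by omega)
  have hS : Run (.loop base ((((move out (base + 2)).app Q).app (clear (base + 2))).app
      (.inc (base + 1) .nil)) .nil) (S 0) (S N) := by
    refine Run.forLoop N S ?_ ?_
    · intro i _
      simp only [S, update_apply]
      grind
    · intro i hi
      refine ((((Run.move (by omega) _).app (hQ _ ?_ ?_)).app (Run.clear _ _)).app
        (Run.inc _ _)).cast ?_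
      · simp
      · intro j hj
        have := hr' j (by omega)
        simp only [S, update_apply]
        grind
      · generalize hr2 : update (update (update (S i) base (N - i - 1)) (base + 2) _) out 0 = r2
        have e1 : r2 (base + 1) = i := by
          rw [← hr2]; simp only [S, update_apply]; grind
        have e2 : r2 (base + 2) = h i := by
          rw [← hr2]; simp only [S, update_apply]; grind
        have e3 : (List.Vector.ofFn fun i : Fin n => r2 (ins i.succ)) = w := by
          apply hvec
          intro k
          have := hins k.succ
          have := hne k.succ
          rw [← hr2]; simp only [S, update_apply]; grind
        have e4 : (List.Vector.ofFn fun k : Fin (n + 2) =>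
            r2 ((Fin.cons (base + 1) (Fin.cons (base + 2) fun i : Fin n => ins i.succ) :
              Fin (n + 2) → ℕ) k)) = i ::ᵥ h i ::ᵥ w := by
          rw [← e3, ← e2]
          conv_rhs => rw [← e1]
          rfl
        rw [e4]
        have e5 : g (i ::ᵥ h i ::ᵥ w) = h (i + 1) := rfl
        rw [e5, ← hr2]
        funext z
        simp only [S, update_apply]
        grind
  have hS0 : update (update r base (r base + N)) out (f w) = S 0 := by
    funext z
    have : h 0 = f w := rfl
    simp only [S, update_apply, this]
    grind
  have hA : Run ((copy (ins 0) base (base + 1)).app P) r (S 0) := by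
    refine ((Run.copy (by omega) (by omega) (by omega) r hb1).app (hP _ ?_ ?_)).cast ?_
    · simp only [update_apply]; grind
    · intro j hj
      have := hr' j (by omega)
      simp only [update_apply]; grind
    · rw [← hS0, hvec]
      intro k
      have := hins k.succ
      simp only [update_apply]; grind
  rw [hgoal]
  refine ((hA.app hS).app (Run.clear _ _)).cast ?_
  funext z
  simp only [S, update_apply]
  grind

lemma compiles_of_primrec {n : ℕ} {f : List.Vector ℕ n → ℕ} (h : Nat.Primrec' f) :
    Compiles f := by
  induction h with
  | zero =>
    intro ins out base hins hout hne
    exact ⟨.nil, fun r hr _ => (Run.nil r).cast (by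
      funext z; simp only [update_apply]; grind)⟩
  | succ =>
    intro ins out base hins hout hne
    have h0 := hins 0
    refine ⟨(copy (ins 0) out base).app (.inc out .nil), fun r hr hr' =>
      ((Run.copy (hne 0) (by omega) (by omega) r (hr' _ le_rfl)).app (Run.inc _ _)).cast ?_⟩
    simp [hr]
  | get i =>
    intro ins out base hins hout hne
    have h0 := hins i
    refine ⟨copy (ins i) out base, fun r hr hr' =>
      (Run.copy (hne i) (by omega) (by omega) r (hr' _ le_rfl)).cast ?_⟩
    simp [hr]
  | comp g _ _ hf hg => exact compiles_comp g hf hg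
  | prec _ _ hf hg => exact compiles_prec hf hg

end NB

namespace NB

/-! ### Part 4: simulating counter programs by partial affine maps -/

open Prog Function Relation

/-- All continuations that can occur when running a program. -/
def conts : Prog → List Prog
  | .nil => [.nil]
  | .inc j k => .inc j k :: conts k
  | .loop j p k => .loop j p k :: ((conts p).map (fun c => c.app (.loop j p k)) ++ conts k)

/-- Possible control-flow successors. -/
inductive Succ : Prog → Prog → Prop
  | inc (j k) : Succ (.inc j k) k
  | done (j p k) : Succ (.loop j p k) k
  | iter (j p k) : Succ (.loop j p k) (p.app (.loop j p k))

lemma self_mem_conts (P : Prog) : P ∈ conts P := by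
  cases P <;> simp [conts]

lemma nil_mem_conts (P : Prog) : Prog.nil ∈ conts P := by
  induction P with
  | nil => simp [conts]
  | inc j k ih => simp [conts, ih]
  | loop j p k _ ih => simp [conts, ih]

lemma succ_app {c L Q : Prog} (h : Succ (c.app L) Q) :
    (c = .nil ∧ Succ L Q) ∨ ∃ c', Succ c c' ∧ Q = c'.app L := by
  cases c with
  | nil => exact .inl ⟨rfl, h⟩
  | inc j k =>
    right
    cases h
    exact ⟨_, .inc _ _, rfl⟩
  | loop j p k =>
    right
    cases h
    · exact ⟨_, .done _ _ _, rfl⟩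
    · exact ⟨_, .iter _ _ _, by rw [app_assoc]; rfl⟩

lemma conts_closed (P : Prog) : ∀ Q ∈ conts P, ∀ Q', Succ Q Q' → Q' ∈ conts P := by
  induction P with
  | nil =>
    intro Q hQ Q' h
    simp only [conts, List.mem_singleton] at hQ
    subst hQ; cases h
  | inc j k ih =>
    intro Q hQ Q' h
    simp only [conts, List.mem_cons] at hQ ⊢
    rcases hQ with rfl | hQ
    · cases h; exact .inr (self_mem_conts _)
    · exact .inr (ih _ hQ _ h)
  | loop j p k ihp ihk =>
    intro Q hQ Q' h
    simp only [conts, List.mem_cons, List.mem_append, List.mem_map] at hQ ⊢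
    have hself : ∀ Q', Succ (.loop j p k) Q' →
        (∃ a ∈ conts p, a.app (.loop j p k) = Q') ∨ Q' ∈ conts k := by
      intro Q' h
      cases h
      · exact .inr (self_mem_conts _)
      · exact .inl ⟨p, self_mem_conts _, rfl⟩
    rcases hQ with rfl | ⟨c, hc, rfl⟩ | hQ
    · exact .inr (hself _ h)
    · rcases succ_app h with ⟨_, h⟩ | ⟨c', hc', rfl⟩
      · exact .inr (hself _ h)
      · exact .inr (.inl ⟨c', ihp _ hc _ hc', rfl⟩)
    · exact .inr (.inr (ihk _ hQ _ h))

/-- The `j`-th prime. -/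
noncomputable def pr (j : ℕ) : ℕ := Nat.nth Nat.Prime j

lemma pr_prime (j : ℕ) : (pr j).Prime := Nat.prime_nth_prime j

lemma pr_inj {i j : ℕ} (h : pr i = pr j) : i = j :=
  Nat.nth_injective Nat.infinite_setOfPred_prime h

section sim
variable (T : List Prog)

/-- The index of a continuation. -/
noncomputable def ix (P : Prog) : ℕ := T.idxOf P

/-- The rules simulating a control state. -/
noncomputable def rulesOf : Prog → List Rule
  | .nil => []
  | .inc j k => [⟨ix T (.inc j k), T.length, ix T k, T.length * pr j⟩]
  | .loop j p k =>
    ⟨ix T (.loop j p k), T.length * pr j, ix T (p.app (.loop j p k)), T.length⟩ ::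
      ((List.range (pr j)).filter (fun s => s ≠ 0)).map fun s =>
        ⟨T.length * s + ix T (.loop j p k), T.length * pr j, T.length * s + ix T k,
          T.length * pr j⟩

/-- All rules. -/
noncomputable def allRules : List Rule := T.flatMap (rulesOf T)

/-- Semantic description of the steps. -/
def SStep : Prog → ℤ → ℤ → Prop
  | .nil, _, _ => False
  | .inc j k, v, c' => c' = T.length * (pr j * v) + ix T k
  | .loop j p k, v, c' =>
    (∃ u, v = pr j * u ∧ c' = T.length * u + ix T (p.app (.loop j p k))) ∨
      (¬ (pr j : ℤ) ∣ v ∧ c' = T.length * v + ix T k)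

lemma stepZ_iff (c c' : ℤ) : StepZ (allRules T) c c' ↔
    ∃ P ∈ T, ∃ v : ℤ, c = T.length * v + ix T P ∧ SStep T P v c' := by
  constructor
  · rintro ⟨ρ, hρ, u, rfl, rfl⟩
    obtain ⟨P, hP, hρ⟩ := List.mem_flatMap.1 hρ
    refine ⟨P, hP, ?_⟩
    cases P with
    | nil => simp [rulesOf] at hρ
    | inc j k =>
      simp only [rulesOf, List.mem_singleton] at hρ
      subst hρ
      refine ⟨u, by ring, ?_⟩
      simp only [SStep]; push_cast; ring
    | loop j p k =>
      simp only [rulesOf, List.mem_cons, List.mem_map, List.mem_filter, List.mem_range] at hρ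
      rcases hρ with rfl | ⟨s, ⟨hs, hs0⟩, rfl⟩
      · refine ⟨pr j * u, by push_cast; ring, .inl ⟨u, rfl, by ring⟩⟩
      · refine ⟨pr j * u + s, by push_cast; ring, .inr ⟨?_, by push_cast; ring⟩⟩
        intro hd
        have h2 : (pr j : ℤ) ∣ s := (Int.dvd_add_right (dvd_mul_right _ _)).1 hd
        have h3 : pr j ∣ s := by exact_mod_cast h2
        have h4 : s ≠ 0 := by simpa using hs0
        have := Nat.le_of_dvd (by omega) h3
        omega
  · rintro ⟨P, hP, v, rfl, h⟩
    have hmem : ∀ ρ ∈ rulesOf T P, ρ ∈ allRules T := fun ρ h => List.mem_flatMap.2 ⟨P, hP, h⟩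
    cases P with
    | nil => exact h.elim
    | inc j k =>
      simp only [SStep] at h
      refine ⟨_, hmem _ (by simp only [rulesOf, List.mem_singleton]; rfl), v, ?_, ?_⟩
      · ring
      · rw [h]; push_cast; ring
    | loop j p k =>
      rcases h with ⟨u, rfl, rfl⟩ | ⟨hd, rfl⟩
      · refine ⟨_, hmem _ (by simp only [rulesOf, List.mem_cons]; exact .inl rfl), u, ?_, ?_⟩
        · push_cast; ring
        · ring
      · have hp : (0 : ℤ) < pr j := by exact_mod_cast (pr_prime j).pos
        obtain ⟨s, hs⟩ := Int.eq_ofNat_of_zero_le (Int.emod_nonneg v hp.ne')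
        have hlt := Int.emod_lt_of_pos v hp
        have hdm := Int.mul_ediv_add_emod v (pr j)
        refine ⟨_, hmem _ (by
          simp only [rulesOf, List.mem_cons, List.mem_map, List.mem_filter, List.mem_range]
          refine .inr ⟨s, ⟨by omega, ?_⟩, rfl⟩
          simp only [decide_eq_true_eq]
          rintro rfl
          exact hd (Int.dvd_of_emod_eq_zero (by simpa using hs))), v / pr j, ?_, ?_⟩
        · rw [hs] at hdm
          push_cast
          nth_rewrite 1 [← hdm]
          ring
        · rw [hs] at hdm
          push_cast
          nth_rewrite 1 [← hdm]
          ring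

lemma ix_lt {P : Prog} (h : P ∈ T) : ix T P < T.length := List.idxOf_lt_length_iff.2 h

lemma state_unique {P P' : Prog} (h : P ∈ T) (h' : P' ∈ T) {v v' : ℤ}
    (e : (T.length : ℤ) * v + ix T P = T.length * v' + ix T P') : P = P' ∧ v = v' := by
  have h1 := ix_lt T h
  have h2 := ix_lt T h'
  have hpos : (0 : ℤ) < T.length := by omega
  have e1 := congrArg (· % (T.length : ℤ)) e
  simp only [Int.mul_add_emod_self_left] at e1
  rw [Int.emod_eq_of_lt (by omega) (by omega), Int.emod_eq_of_lt (by omega) (by omega)] at e1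
  refine ⟨(List.idxOf_inj h).1 (by exact_mod_cast e1), ?_⟩
  rw [e1] at e
  exact mul_left_cancel₀ hpos.ne' (by linarith)

lemma stepZ_det (c c' c'' : ℤ) (h : StepZ (allRules T) c c') (h' : StepZ (allRules T) c c'') :
    c' = c'' := by
  obtain ⟨P, hP, v, rfl, g⟩ := (stepZ_iff T _ _).1 h
  obtain ⟨P', hP', v', e, g'⟩ := (stepZ_iff T _ _).1 h'
  obtain ⟨rfl, rfl⟩ := state_unique T hP hP' e
  cases P with
  | nil => exact g.elim
  | inc j k => simp only [SStep] at g g'; rw [g, g']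
  | loop j p k =>
    have hp : (pr j : ℤ) ≠ 0 := by exact_mod_cast (pr_prime j).ne_zero
    rcases g with ⟨u, rfl, rfl⟩ | ⟨hd, rfl⟩ <;> rcases g' with ⟨u', e, rfl⟩ | ⟨hd', rfl⟩
    · rw [mul_left_cancel₀ hp e]
    · exact absurd (dvd_mul_right _ _) hd'
    · exact absurd (e ▸ dvd_mul_right _ _) hd
    · rfl

lemma rules_pos : ∀ ρ ∈ allRules T, ρ.m ≠ 0 ∧ ρ.n ≠ 0 := by
  intro ρ hρ
  obtain ⟨P, hP, hρ⟩ := List.mem_flatMap.1 hρ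
  have hT : T.length ≠ 0 := by have := ix_lt T hP; omega
  cases P with
  | nil => simp [rulesOf] at hρ
  | inc j k =>
    simp only [rulesOf, List.mem_singleton] at hρ
    subst hρ
    exact ⟨hT, mul_ne_zero hT (pr_prime j).ne_zero⟩
  | loop j p k =>
    simp only [rulesOf, List.mem_cons, List.mem_map, List.mem_filter, List.mem_range] at hρ
    rcases hρ with rfl | ⟨s, ⟨hs, hs0⟩, rfl⟩
    · exact ⟨mul_ne_zero hT (pr_prime j).ne_zero, hT⟩
    · exact ⟨mul_ne_zero hT (pr_prime j).ne_zero, mul_ne_zero hT (pr_prime j).ne_zero⟩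

/-- Coding of states as integers. -/
noncomputable def cd (P : Prog) (v : ℕ) : ℤ := T.length * v + ix T P

lemma nil_term (hnil : Prog.nil ∈ T) (v : ℕ) (c : ℤ) : ¬ StepZ (allRules T) (cd T .nil v) c := by
  intro h
  obtain ⟨P, hP, v', e, h⟩ := (stepZ_iff T _ _).1 h
  obtain ⟨rfl, rfl⟩ := state_unique T hnil hP e
  exact h

/-- `v` is the Gödel number of the register contents `r`. -/
def Enc (v : ℕ) (r : Regs) : Prop := v ≠ 0 ∧ ∀ j, padicValNat (pr j) v = r j

lemma val_pr (i j : ℕ) : padicValNat (pr i) (pr j) = if i = j then 1 else 0 := by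
  have : Fact (pr i).Prime := ⟨pr_prime i⟩
  have : Fact (pr j).Prime := ⟨pr_prime j⟩
  split_ifs with h
  · subst h; exact padicValNat_self
  · exact padicValNat_primes fun e => h (pr_inj e)

lemma Enc.mul {v : ℕ} {r : Regs} (h : Enc v r) (j : ℕ) :
    Enc (pr j * v) (update r j (r j + 1)) := by
  refine ⟨mul_ne_zero (pr_prime j).ne_zero h.1, fun i => ?_⟩
  have : Fact (pr i).Prime := ⟨pr_prime i⟩
  rw [padicValNat.mul (pr_prime j).ne_zero h.1, val_pr, h.2, update_apply]
  grind

lemma Enc.of_mul {u : ℕ} {r : Regs} {j : ℕ} (h : Enc (pr j * u) r) :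
    Enc u (update r j (r j - 1)) := by
  have hu : u ≠ 0 := right_ne_zero_of_mul h.1
  refine ⟨hu, fun i => ?_⟩
  have : Fact (pr i).Prime := ⟨pr_prime i⟩
  have h2 := h.2 i
  have h3 := h.2 j
  rw [padicValNat.mul (pr_prime j).ne_zero hu, val_pr] at h2
  rw [update_apply]
  grind

lemma Enc.dvd_iff {v : ℕ} {r : Regs} (h : Enc v r) (j : ℕ) : pr j ∣ v ↔ r j ≠ 0 := by
  have : Fact (pr j).Prime := ⟨pr_prime j⟩
  rw [dvd_iff_padicValNat_ne_zero h.1, h.2]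

lemma enc_zero {v : ℕ} (h : Enc v fun _ => 0) : v = 1 := by
  by_contra hv
  obtain ⟨p, hp, hd⟩ := Nat.exists_prime_and_dvd hv
  have : pr (Nat.count Nat.Prime p) = p := Nat.nth_count hp
  rw [← this] at hd
  exact (h.dvd_iff _).1 hd rfl

lemma enc_input (n : ℕ) : Enc (2 ^ n) (update (fun _ => 0) 0 n) := by
  have h2 : pr 0 = 2 := Nat.nth_prime_zero_eq_two
  rw [← h2]
  induction n with
  | zero => exact ⟨by simp, fun j => by simp [update_apply]⟩
  | succ n ih =>
    have := ih.mul 0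
    rw [pow_succ, mul_comm]
    simpa using this

lemma sim_step (hT : ∀ Q ∈ T, ∀ Q', Succ Q Q' → Q' ∈ T) {s s' : Prog × Regs}
    (h : StepP s s') (hs : s.1 ∈ T) {v : ℕ} (hv : Enc v s.2) :
    s'.1 ∈ T ∧ ∃ v', Enc v' s'.2 ∧ StepZ (allRules T) (cd T s.1 v) (cd T s'.1 v') := by
  cases h with
  | inc j k r =>
    refine ⟨hT _ hs _ (.inc _ _), _, hv.mul j, (stepZ_iff T _ _).2 ⟨_, hs, v, rfl, ?_⟩⟩
    simp [SStep, cd]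
  | done j p k r h0 =>
    refine ⟨hT _ hs _ (.done _ _ _), _, hv, (stepZ_iff T _ _).2 ⟨_, hs, v, rfl, .inr ⟨?_, rfl⟩⟩⟩
    intro hd
    have hd' : pr j ∣ v := by exact_mod_cast hd
    exact (hv.dvd_iff j).1 hd' h0
  | iter j p k r h0 =>
    obtain ⟨u, rfl⟩ := (hv.dvd_iff j).2 h0
    exact ⟨hT _ hs _ (.iter _ _ _), u, hv.of_mul, (stepZ_iff T _ _).2 ⟨_, hs, _, rfl,
      .inl ⟨u, by push_cast; rfl, rfl⟩⟩⟩

lemma sim_forward (hT : ∀ Q ∈ T, ∀ Q', Succ Q Q' → Q' ∈ T) {s s' : Prog × Regs}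
    (h : ReflTransGen StepP s s') (hs : s.1 ∈ T) {v : ℕ} (hv : Enc v s.2) :
    ∃ v', Enc v' s'.2 ∧ ReflTransGen (StepZ (allRules T)) (cd T s.1 v) (cd T s'.1 v') := by
  induction h using ReflTransGen.head_induction_on generalizing v with
  | refl => exact ⟨v, hv, .refl⟩
  | head h1 _ ih =>
    obtain ⟨hm, v1, hv1, hz⟩ := sim_step T hT h1 hs hv
    obtain ⟨v', hv', hz'⟩ := ih hm hv1
    exact ⟨v', hv', .head hz hz'⟩

lemma sim_backward (hT : ∀ Q ∈ T, ∀ Q', Succ Q Q' → Q' ∈ T) (hnil : Prog.nil ∈ T) {c n0 : ℤ}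
    (hn0 : ∃ w, n0 = cd T .nil w)
    (h : ReflTransGen (StepZ (allRules T)) c n0) : ∀ (s : Prog × Regs) (_ : s.1 ∈ T) (v : ℕ)
    (_ : Enc v s.2) (_ : c = cd T s.1 v), ∃ r', ReflTransGen StepP s (.nil, r') := by
  induction h using ReflTransGen.head_induction_on with
  | refl =>
    rintro ⟨P, r⟩ hs v hv e
    obtain ⟨w, rfl⟩ := hn0
    obtain ⟨rfl, -⟩ := state_unique T hnil hs e
    exact ⟨r, .refl⟩
  | @head c c' h1 _ ih =>
    rintro ⟨P, r⟩ hs v hv rfl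
    have key : ∀ s', StepP (P, r) s' → ∃ r', ReflTransGen StepP (P, r) (.nil, r') := by
      intro s' hst
      obtain ⟨hm, v1, hv1, hz⟩ := sim_step T hT hst hs hv
      obtain ⟨r', hr'⟩ := ih s' hm v1 hv1 (stepZ_det T _ _ _ h1 hz)
      exact ⟨r', .head hst hr'⟩
    cases P with
    | nil => exact ⟨r, .refl⟩
    | inc j k => exact key _ (.inc _ _ _)
    | loop j p k =>
      by_cases h0 : r j = 0
      · exact key _ (.done _ _ _ _ h0)
      · exact key _ (.iter _ _ _ _ h0)

end sim

/-! ### Part 5: the main program and the conclusion -/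

lemma stepP_det {s s' s'' : Prog × Regs} (h : StepP s s') (h' : StepP s s'') : s' = s'' := by
  cases h <;> cases h' <;> first | rfl | contradiction

lemma not_halts {fin : Prog × Regs} (hfin : ∀ s, ¬ StepP fin s) (S : ℕ → Prog × Regs)
    (hS : ∀ k, TransGen StepP (S k) (S (k + 1))) {s : Prog × Regs}
    (h : ReflTransGen StepP s fin) : ¬ ∃ k, ReflTransGen StepP s (S k) := by
  induction h using ReflTransGen.head_induction_on with
  | refl =>
    rintro ⟨k, hk⟩
    rcases ReflTransGen.cases_head hk with e | ⟨d, hd, _⟩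
    · obtain ⟨d, hd, _⟩ := TransGen.head'_iff.1 (hS k)
      exact hfin d (e ▸ hd)
    · exact hfin _ hd
  | head h1 _ ih =>
    rintro ⟨k, hk⟩
    rcases ReflTransGen.cases_head hk with rfl | ⟨d, hd, hd'⟩
    · obtain ⟨d, hd, hd'⟩ := TransGen.head'_iff.1 (hS k)
      exact ih ⟨k + 1, by rwa [stepP_det h1 hd]⟩
    · exact ih ⟨k, by rwa [stepP_det h1 hd]⟩

lemma exists_search_program (f : ℕ → ℕ → ℕ) (hf : Primrec₂ f) : ∃ M : Prog, ∀ n,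
    ((∃ k, f k n = 0) →
      ReflTransGen StepP (M, update (fun _ => 0) 0 n) (.nil, fun _ => 0)) ∧
    (∀ r', ReflTransGen StepP (M, update (fun _ => 0) 0 n) (.nil, r') → ∃ k, f k n = 0) := by
  have hc := compiles_of_primrec (Nat.Primrec'.prim_iff₂.2 hf)
  obtain ⟨P, hP⟩ := hc ![1, 0] 2 3 (by intro i; fin_cases i <;> simp) (by omega)
    (by intro i; fin_cases i <;> simp)
  let R : ℕ → ℕ → ℕ → Regs := fun n k b => update (update (update (fun _ => 0) 0 n) 1 k) 2 b
  have hbody : ∀ n k b, Run ((clear 2).app (P.app (.inc 1 .nil))) (R n k b)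
      (R n (k + 1) (f k n)) := by
    intro n k b
    have h1 : Run (clear 2) (R n k b) (R n k 0) := (Run.clear _ _).cast (by simp [R])
    have h2 : Run P (R n k 0) (R n k (f k n)) := by
      refine (hP (R n k 0) (by simp [R]) ?_).cast ?_
      · intro j hj
        simp only [R, update_apply]; grind
      · have : f k n = (fun v : List.Vector ℕ 2 => f v.head v.tail.head)
            (List.Vector.ofFn fun i => R n k 0 ((![1, 0] : Fin 2 → ℕ) i)) := by
          simp [R, update_apply]
        rw [← this]
        simp [R]
    refine (h1.app (h2.app (Run.inc _ _))).cast ?_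
    funext z
    simp only [R, update_apply]; grind
  let tl : Prog := (clear 0).app (clear 1)
  let lp : Prog := .loop 2 ((clear 2).app (P.app (.inc 1 .nil))) tl
  have hloop : ∀ n k b, b ≠ 0 → TransGen StepP (lp, R n k b) (lp, R n (k + 1) (f k n)) := by
    intro n k b hb
    refine TransGen.head' (StepP.iter _ _ _ _ (by simpa [R] using hb)) ?_
    have e : update (R n k b) 2 (R n k b 2 - 1) = R n k (b - 1) := by simp [R]
    rw [e]
    exact hbody n k (b - 1) lp
  have hstart : ∀ n, ReflTransGen StepP (Prog.inc 2 lp, update (fun _ => 0) 0 n) (lp, R n 0 1) := by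
    intro n
    have e : R n 0 1 = update (update (fun _ => 0) 0 n) 2
        ((update (fun _ => 0) 0 n : Regs) 2 + 1) := by
      funext z
      simp only [R, update_apply]; grind
    rw [e]
    exact .single (.inc _ _ _)
  refine ⟨.inc 2 lp, fun n => ⟨?_, ?_⟩⟩
  · intro hex
    classical
    have hk := Nat.find_spec hex
    have hmin : ∀ i < Nat.find hex, f i n ≠ 0 := fun i hi => Nat.find_min hex hi
    set k := Nat.find hex
    have hreach : ∀ i ≤ k, ∃ b ≠ 0, ReflTransGen StepP (lp, R n 0 1) (lp, R n i b) := by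
      intro i
      induction i with
      | zero => exact fun _ => ⟨1, one_ne_zero, .refl⟩
      | succ i ih =>
        intro hi
        obtain ⟨b, hb, h⟩ := ih (by omega)
        exact ⟨f i n, hmin i (by omega), h.trans (hloop n i b hb).to_reflTransGen⟩
    obtain ⟨b, hb, h⟩ := hreach k le_rfl
    have h2 := (hstart n).trans (h.trans (hloop n k b hb).to_reflTransGen)
    rw [hk] at h2
    have h3 : StepP (lp, R n (k + 1) 0) (tl, R n (k + 1) 0) := .done _ _ _ _ (by simp [R])
    have h4 := ((Run.clear 0 (R n (k + 1) 0)).app (Run.clear 1 _)) .nil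
    rw [app_nil] at h4
    have e : update (update (R n (k + 1) 0) 0 0) 1 0 = fun _ => 0 := by
      funext z
      simp only [R, update_apply]
      split_ifs <;> rfl
    rw [e] at h4
    exact h2.trans (.head h3 h4)
  · intro r' h
    by_contra hne
    push Not at hne
    refine not_halts (fin := (.nil, r')) (by rintro s ⟨⟩)
      (fun k => (lp, R n k (if k = 0 then 1 else f (k - 1) n))) ?_ h ⟨0, ?_⟩
    · intro k
      have := hloop n k (if k = 0 then 1 else f (k - 1) n) (by
        split_ifs
        · exact one_ne_zero
        · exact hne _)
      simpa using this
    · simpa using hstart n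

lemma exists_undecidable_search : ∃ f : ℕ → ℕ → ℕ, Primrec₂ f ∧
    ¬ ComputablePred fun n => ∃ k, f k n = 0 := by
  refine ⟨fun k e => if (Nat.Partrec.Code.evaln k (Denumerable.ofNat Nat.Partrec.Code e) 0).isSome
    then 0 else 1, ?_, ?_⟩
  · refine Primrec.ite (Primrec.primrecPred ?_) (Primrec.const 0) (Primrec.const 1)
    have := Primrec.option_isSome.comp (Nat.Partrec.Code.primrec_evaln.comp
      (((Primrec.fst (α := ℕ) (β := ℕ)).pair
        ((Primrec.ofNat Nat.Partrec.Code).comp Primrec.snd)).pair (Primrec.const 0)))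
    exact this.of_eq fun p => by simp
  · intro h
    refine ComputablePred.halting_problem 0 ?_
    refine ComputablePred.computable_of_manyOneReducible
      ⟨Encodable.encode, Computable.encode, fun c => ?_⟩ h
    simp only [Denumerable.ofNat_encode, Part.dom_iff_mem, Nat.Partrec.Code.evaln_complete]
    constructor
    · rintro ⟨y, k, hy⟩
      exact ⟨k, if_pos (Option.isSome_iff_exists.2 ⟨y, hy⟩)⟩
    · rintro ⟨k, hk⟩
      by_cases hs : (Nat.Partrec.Code.evaln k c 0).isSome
      · obtain ⟨y, hy⟩ := Option.isSome_iff_exists.1 hs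
        exact ⟨y, k, hy⟩
      · rw [if_neg hs] at hk
        exact absurd hk one_ne_zero

end NB

/-- **Novikov (1955), Boone (1958):** there exists a finitely presented group
with unsolvable word problem. -/
theorem exists_finitely_presented_group_with_unsolvable_word_problem :
    ∃ (m : ℕ) (rels : Set (FreeGroup (Fin m))), rels.Finite ∧
      ¬ ComputablePred fun l : List (Fin m × Bool) =>
          FreeGroup.mk l ∈ Subgroup.normalClosure rels := by
  obtain ⟨f, hf, hund⟩ := NB.exists_undecidable_search
  obtain ⟨M, hM⟩ := NB.exists_search_program f hf
  let T := NB.conts M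
  let L := NB.allRules T
  have hT : ∀ Q ∈ T, ∀ Q', NB.Succ Q Q' → Q' ∈ T := NB.conts_closed M
  have hnil : NB.Prog.nil ∈ T := NB.nil_mem_conts M
  have hself : M ∈ T := NB.self_mem_conts M
  let n0 : ℤ := NB.cd T .nil 1
  refine ⟨_, NB.rels L n0, NB.rels_finite L n0, fun hcomp => hund ?_⟩
  have key : ∀ n, (∃ k, f k n = 0) ↔
      FreeGroup.mk (NB.wordOf L (T.length * 2 ^ n + NB.ix T M)) ∈
        Subgroup.normalClosure (NB.rels L n0) := by
    intro n
    have e : ((T.length * 2 ^ n + NB.ix T M : ℕ) : ℤ) = NB.cd T M (2 ^ n) := by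
      simp [NB.cd]
    rw [NB.mk_wordOf, e]
    constructor
    · intro h
      apply NB.wd_mem_of_reaches
      obtain ⟨v', hv', hz⟩ := NB.sim_forward T hT ((hM n).1 h) hself (NB.enc_input n)
      rwa [NB.enc_zero hv'] at hz
    · intro h
      have hz := NB.reaches_of_wd_mem L n0 (NB.rules_pos T) (NB.stepZ_det T)
        (NB.nil_term T hnil 1) _ h
      obtain ⟨r', hr'⟩ := NB.sim_backward T hT hnil ⟨1, rfl⟩ hz (M, _) hself _
        (NB.enc_input n) rfl
      exact (hM n).2 r' hr'
  have hprim : Computable fun n : ℕ => NB.wordOf L (T.length * 2 ^ n + NB.ix T M) := by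
    have hpow : Primrec fun n : ℕ => 2 ^ n := by
      have hm : Primrec₂ fun _ y : ℕ => 2 * y :=
        (Primrec.nat_mul.comp (Primrec.const 2) Primrec.snd).to₂
      refine (Primrec.nat_rec₁ 1 hm).of_eq fun n => ?_
      induction n with
      | zero => rfl
      | succ n ih => rw [pow_succ, ← ih, mul_comm]
    exact ((NB.wordOf_primrec L).comp (Primrec.nat_add.comp
      (Primrec.nat_mul.comp (Primrec.const _) hpow) (Primrec.const _))).to_comp
  obtain ⟨g, hg, hgeq⟩ := ComputablePred.computable_iff.1 hcomp
  refine ComputablePred.computable_iff.2 ⟨fun n => g _, hg.comp hprim, ?_⟩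
  funext n
  rw [eq_iff_iff, key n]
  exact iff_of_eq (congrFun hgeq _)
end
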